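/- arXiv:2005.04465 — 13 statements merged into one kernel-verified Lean document; each statement's English description precedes it below -/
import Mathlib

section
/- Let U ⊆ ℝ be an open set, let S₁, S₂ : U → ℂ be twice differentiable functions with S₁(x) ≠ S₂(x) for every x ∈ U, and let z₁, z₂ : U → ℂ be four-times differentiable functions satisfying z₁'' = S₁·z₁ and z₂'' = S₂·z₂ on U. Then the product w := z₁·z₂ satisfies on U the fourth-order linear differential equation w'''' + f₃·w''' + f₂·w'' + f₁·w' + f₀·w = 0, where f₃ = −(S₁' − S₂')/(S₁ − S₂), f₂ = −2(S₁ + S₂), f₁ = −(S₁S₁' − S₂S₂' + 5(S₁S₂' − S₁'S₂))/(S₁ − S₂), and f₀ = −S₁'' − S₂'' + (S₁ − S₂)² + ((S₁')² − (S₂')²)/(S₁ − S₂). -/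
/-- `f` is `n`-times differentiable on `U` (the `k`-th derivative exists at each
point of `U` for every `k < n`). -/
def IterDiffOn (n : ℕ) (f : ℝ → ℂ) (U : Set ℝ) : Prop :=
  ∀ k < n, ∀ x ∈ U, DifferentiableAt ℝ (deriv^[k] f) x

/-!
Put `w = z₁ z₂`, `σ = S₁ + S₂`, `δ = S₁ - S₂` and let `W = z₁ z₂' - z₁' z₂` be the Wronskian.
Differentiating `w` three times gives `w''' = 2 σ w' + σ' w + δ W`, while `W' = -δ w`. One more
derivative yields `w'''' = 2 σ w'' + 3 σ' w' + σ'' w + δ' W - δ² w`, and multiplying by `δ` allows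
`δ W` to be eliminated by means of the third-order relation.
-/

section NormedCommRing

variable {𝕜 A : Type*} [NontriviallyNormedField 𝕜] [NormedCommRing A] [NormedAlgebra 𝕜 A]
  {U : Set 𝕜} {S S₁ S₂ z z₁ z₂ : 𝕜 → A} {x : 𝕜}

/-- `z` is a solution on `U` of the second-order equation `z'' = S z`; differentiability of `z` and
of `deriv z` is part of the notion, so that `deriv` never takes its junk value on `U`. -/
structure IsSolutionOn (S z : 𝕜 → A) (U : Set 𝕜) : Prop where
  differentiableAt : ∀ x ∈ U, DifferentiableAt 𝕜 z x
  hasDerivAt_deriv : ∀ x ∈ U, HasDerivAt (deriv z) (S x * z x) x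

/-- The Wronskian `z₁ z₂' - z₁' z₂` of two functions: the auxiliary quantity that is eliminated to
obtain the equation for their product. -/
noncomputable def wronskian (z₁ z₂ : 𝕜 → A) : 𝕜 → A :=
  z₁ * deriv z₂ - deriv z₁ * z₂

namespace IsSolutionOn

theorem hasDerivAt (h : IsSolutionOn S z U) (hx : x ∈ U) : HasDerivAt z (deriv z x) x :=
  (h.differentiableAt x hx).hasDerivAt

theorem hasDerivAt_mul (h₁ : IsSolutionOn S₁ z₁ U) (h₂ : IsSolutionOn S₂ z₂ U) (hx : x ∈ U) :
    HasDerivAt (z₁ * z₂) (deriv z₁ x * z₂ x + z₁ x * deriv z₂ x) x :=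
  (h₁.hasDerivAt hx).mul (h₂.hasDerivAt hx)

theorem hasDerivAt_deriv_mul_deriv (h₁ : IsSolutionOn S₁ z₁ U) (h₂ : IsSolutionOn S₂ z₂ U)
    (hx : x ∈ U) :
    HasDerivAt (deriv z₁ * deriv z₂)
      (S₁ x * z₁ x * deriv z₂ x + deriv z₁ x * (S₂ x * z₂ x)) x :=
  (h₁.hasDerivAt_deriv x hx).mul (h₂.hasDerivAt_deriv x hx)

theorem hasDerivAt_wronskian (h₁ : IsSolutionOn S₁ z₁ U) (h₂ : IsSolutionOn S₂ z₂ U)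
    (hx : x ∈ U) :
    HasDerivAt (wronskian z₁ z₂) (-(S₁ x - S₂ x) * (z₁ * z₂) x) x := by
  refine (((h₁.hasDerivAt hx).mul (h₂.hasDerivAt_deriv x hx)).sub
    ((h₁.hasDerivAt_deriv x hx).mul (h₂.hasDerivAt hx))).congr_deriv ?_
  simp only [Pi.mul_apply]
  ring

theorem hasDerivAt_deriv_mul (hU : IsOpen U) (h₁ : IsSolutionOn S₁ z₁ U)
    (h₂ : IsSolutionOn S₂ z₂ U) (hx : x ∈ U) :
    HasDerivAt (deriv (z₁ * z₂))
      ((S₁ x + S₂ x) * (z₁ * z₂) x + 2 * (deriv z₁ * deriv z₂) x) x := by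
  have deriv_mul_eq : Set.EqOn (deriv (z₁ * z₂)) (deriv z₁ * z₂ + z₁ * deriv z₂) U :=
    fun y hy => (h₁.hasDerivAt_mul h₂ hy).deriv
  refine ((((h₁.hasDerivAt_deriv x hx).mul (h₂.hasDerivAt hx)).add
    ((h₁.hasDerivAt hx).mul (h₂.hasDerivAt_deriv x hx))).congr_of_eventuallyEq
      (deriv_mul_eq.eventuallyEq_of_mem (hU.mem_nhds hx))).congr_deriv ?_
  simp only [Pi.mul_apply]
  ring

theorem hasDerivAt_iterate_two_deriv_mul (hU : IsOpen U) (h₁ : IsSolutionOn S₁ z₁ U)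
    (h₂ : IsSolutionOn S₂ z₂ U) (hS₁ : DifferentiableAt 𝕜 S₁ x)
    (hS₂ : DifferentiableAt 𝕜 S₂ x) (hx : x ∈ U) :
    HasDerivAt (deriv^[2] (z₁ * z₂))
      (2 * ((S₁ x + S₂ x) * deriv (z₁ * z₂) x) + (deriv S₁ x + deriv S₂ x) * (z₁ * z₂) x
        + (S₁ x - S₂ x) * wronskian z₁ z₂ x) x := by
  have deriv_two_eq : Set.EqOn (deriv^[2] (z₁ * z₂))
      (fun y => (S₁ + S₂) y * (z₁ * z₂) y + 2 * (deriv z₁ * deriv z₂) y) U :=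
    fun y hy => (hasDerivAt_deriv_mul hU h₁ h₂ hy).deriv
  have hw := h₁.hasDerivAt_mul h₂ hx
  refine ((((hS₁.hasDerivAt.add hS₂.hasDerivAt).mul hw).add
    ((h₁.hasDerivAt_deriv_mul_deriv h₂ hx).const_mul 2)).congr_of_eventuallyEq
      (deriv_two_eq.eventuallyEq_of_mem (hU.mem_nhds hx))).congr_deriv ?_
  simp only [hw.deriv, wronskian, Pi.add_apply, Pi.sub_apply, Pi.mul_apply]
  ring

theorem iterate_three_deriv_mul (hU : IsOpen U) (h₁ : IsSolutionOn S₁ z₁ U)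
    (h₂ : IsSolutionOn S₂ z₂ U) (hS₁ : DifferentiableAt 𝕜 S₁ x)
    (hS₂ : DifferentiableAt 𝕜 S₂ x) (hx : x ∈ U) :
    deriv^[3] (z₁ * z₂) x =
      2 * ((S₁ x + S₂ x) * deriv (z₁ * z₂) x) + (deriv S₁ x + deriv S₂ x) * (z₁ * z₂) x
        + (S₁ x - S₂ x) * wronskian z₁ z₂ x :=
  (hasDerivAt_iterate_two_deriv_mul hU h₁ h₂ hS₁ hS₂ hx).deriv

theorem iterate_four_deriv_mul (hU : IsOpen U) (h₁ : IsSolutionOn S₁ z₁ U)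
    (h₂ : IsSolutionOn S₂ z₂ U) (hS₁ : ∀ y ∈ U, DifferentiableAt 𝕜 S₁ y)
    (hS₂ : ∀ y ∈ U, DifferentiableAt 𝕜 S₂ y) (hS₁' : DifferentiableAt 𝕜 (deriv S₁) x)
    (hS₂' : DifferentiableAt 𝕜 (deriv S₂) x) (hx : x ∈ U) :
    deriv^[4] (z₁ * z₂) x =
      2 * (S₁ x + S₂ x) * deriv^[2] (z₁ * z₂) x
        + 3 * (deriv S₁ x + deriv S₂ x) * deriv (z₁ * z₂) x
        + (deriv^[2] S₁ x + deriv^[2] S₂ x - (S₁ x - S₂ x) ^ 2) * (z₁ * z₂) x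
        + (deriv S₁ x - deriv S₂ x) * wronskian z₁ z₂ x := by
  have deriv_three_eq : Set.EqOn (deriv^[3] (z₁ * z₂))
      (fun y => 2 * ((S₁ + S₂) y * deriv (z₁ * z₂) y) + (deriv S₁ + deriv S₂) y * (z₁ * z₂) y
        + (S₁ - S₂) y * wronskian z₁ z₂ y) U :=
    fun y hy => iterate_three_deriv_mul hU h₁ h₂ (hS₁ y hy) (hS₂ y hy) hy
  have hσ := (hS₁ x hx).hasDerivAt.add (hS₂ x hx).hasDerivAt
  have hδ := (hS₁ x hx).hasDerivAt.sub (hS₂ x hx).hasDerivAt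
  have hσ' := hS₁'.hasDerivAt.add hS₂'.hasDerivAt
  have hw := (h₁.hasDerivAt_mul h₂ hx).differentiableAt.hasDerivAt
  have hw' := (hasDerivAt_deriv_mul hU h₁ h₂ hx).differentiableAt.hasDerivAt
  have hW := h₁.hasDerivAt_wronskian h₂ hx
  refine (deriv_three_eq.deriv hU hx).trans
    (((((hσ.mul hw').const_mul 2).add (hσ'.mul hw)).add (hδ.mul hW)).deriv.trans ?_)
  simp only [Function.iterate_succ_apply, Function.iterate_zero_apply, Pi.add_apply, Pi.sub_apply]
  ring

theorem sub_mul_iterate_four_deriv_mul (hU : IsOpen U) (h₁ : IsSolutionOn S₁ z₁ U)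
    (h₂ : IsSolutionOn S₂ z₂ U) (hS₁ : ∀ y ∈ U, DifferentiableAt 𝕜 S₁ y)
    (hS₂ : ∀ y ∈ U, DifferentiableAt 𝕜 S₂ y) (hS₁' : DifferentiableAt 𝕜 (deriv S₁) x)
    (hS₂' : DifferentiableAt 𝕜 (deriv S₂) x) (hx : x ∈ U) :
    (S₁ x - S₂ x) * deriv^[4] (z₁ * z₂) x =
      (deriv S₁ x - deriv S₂ x) * deriv^[3] (z₁ * z₂) x
        + 2 * (S₁ x - S₂ x) * (S₁ x + S₂ x) * deriv^[2] (z₁ * z₂) x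
        + (S₁ x * deriv S₁ x - S₂ x * deriv S₂ x
            + 5 * (S₁ x * deriv S₂ x - deriv S₁ x * S₂ x)) * deriv (z₁ * z₂) x
        + ((S₁ x - S₂ x) * (deriv^[2] S₁ x + deriv^[2] S₂ x - (S₁ x - S₂ x) ^ 2)
            - (deriv S₁ x ^ 2 - deriv S₂ x ^ 2)) * (z₁ * z₂) x := by
  linear_combination
    (S₁ x - S₂ x) * iterate_four_deriv_mul hU h₁ h₂ hS₁ hS₂ hS₁' hS₂' hx
      - (deriv S₁ x - deriv S₂ x) * iterate_three_deriv_mul hU h₁ h₂ (hS₁ x hx) (hS₂ x hx) hx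

end IsSolutionOn

end NormedCommRing

theorem IterDiffOn.isSolutionOn {n : ℕ} {U : Set ℝ} {S z : ℝ → ℂ} (hz : IterDiffOn n z U)
    (hn : 2 ≤ n) (hode : ∀ x ∈ U, deriv^[2] z x = S x * z x) : IsSolutionOn S z U where
  differentiableAt := hz 0 (by lia)
  hasDerivAt_deriv x hx := (hz 1 (by lia) x hx).hasDerivAt.congr_deriv (hode x hx)

theorem stmt_0_general {𝕜 F : Type*} [NontriviallyNormedField 𝕜] [NormedField F]
    [NormedAlgebra 𝕜 F] {U : Set 𝕜} (hU : IsOpen U) {S₁ S₂ z₁ z₂ : 𝕜 → F}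
    (hS₁ : ∀ x ∈ U, DifferentiableAt 𝕜 S₁ x) (hS₂ : ∀ x ∈ U, DifferentiableAt 𝕜 S₂ x)
    {x : 𝕜} (hx : x ∈ U) (hS₁' : DifferentiableAt 𝕜 (deriv S₁) x)
    (hS₂' : DifferentiableAt 𝕜 (deriv S₂) x) (hne : S₁ x ≠ S₂ x)
    (h₁ : IsSolutionOn S₁ z₁ U) (h₂ : IsSolutionOn S₂ z₂ U) :
    deriv^[4] (z₁ * z₂) x
      + (-(deriv S₁ x - deriv S₂ x) / (S₁ x - S₂ x)) * deriv^[3] (z₁ * z₂) x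
      + (-2 * (S₁ x + S₂ x)) * deriv^[2] (z₁ * z₂) x
      + (-(S₁ x * deriv S₁ x - S₂ x * deriv S₂ x
            + 5 * (S₁ x * deriv S₂ x - deriv S₁ x * S₂ x)) / (S₁ x - S₂ x))
          * deriv (z₁ * z₂) x
      + (-(deriv^[2] S₁ x) - deriv^[2] S₂ x + (S₁ x - S₂ x) ^ 2
          + ((deriv S₁ x) ^ 2 - (deriv S₂ x) ^ 2) / (S₁ x - S₂ x)) * (z₁ * z₂) x
      = 0 := by
  have hδ : S₁ x - S₂ x ≠ 0 := sub_ne_zero.mpr hne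
  field_simp
  linear_combination IsSolutionOn.sub_mul_iterate_four_deriv_mul hU h₁ h₂ hS₁ hS₂ hS₁' hS₂' hx

/-- The product `w = z₁ z₂` of solutions of `z₁'' = S₁ z₁` and `z₂'' = S₂ z₂`
(with `S₁ ≠ S₂` on `U`) satisfies the fourth-order equation
`w'''' + f₃ w''' + f₂ w'' + f₁ w' + f₀ w = 0`. -/
theorem stmt_0 (U : Set ℝ) (hU : IsOpen U)
    (S₁ S₂ z₁ z₂ : ℝ → ℂ)
    (hS₁ : IterDiffOn 2 S₁ U) (hS₂ : IterDiffOn 2 S₂ U)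
    (hne : ∀ x ∈ U, S₁ x ≠ S₂ x)
    (hz₁ : IterDiffOn 4 z₁ U) (hz₂ : IterDiffOn 4 z₂ U)
    (hode₁ : ∀ x ∈ U, deriv^[2] z₁ x = S₁ x * z₁ x)
    (hode₂ : ∀ x ∈ U, deriv^[2] z₂ x = S₂ x * z₂ x) :
    ∀ x ∈ U,
      deriv^[4] (fun t => z₁ t * z₂ t) x
        + (-(deriv S₁ x - deriv S₂ x) / (S₁ x - S₂ x))
            * deriv^[3] (fun t => z₁ t * z₂ t) x
        + (-2 * (S₁ x + S₂ x)) * deriv^[2] (fun t => z₁ t * z₂ t) x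
        + (-(S₁ x * deriv S₁ x - S₂ x * deriv S₂ x
              + 5 * (S₁ x * deriv S₂ x - deriv S₁ x * S₂ x)) / (S₁ x - S₂ x))
            * deriv (fun t => z₁ t * z₂ t) x
        + (-(deriv^[2] S₁ x) - deriv^[2] S₂ x + (S₁ x - S₂ x) ^ 2
            + ((deriv S₁ x) ^ 2 - (deriv S₂ x) ^ 2) / (S₁ x - S₂ x))
            * (z₁ x * z₂ x)
        = 0 := by
  exact fun x hx => stmt_0_general hU (hS₁ 0 two_pos) (hS₂ 0 two_pos) hx (hS₁ 1 one_lt_two x hx)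
    (hS₂ 1 one_lt_two x hx) (hne x hx) (hz₁.isSolutionOn (by lia) hode₁)
    (hz₂.isSolutionOn (by lia) hode₂)
end

section
/- Let A = (A₀, A₁, A₂, A₃) ∈ ℂ⁴ and let ε > 0. If f : (0, ε) → ℂ is four-times differentiable and satisfies Z(−A₀, A₁, A₂, A₃)f = 0 on (0, ε), then the function g(x) := x^{2A₀}·f(x) (complex power of the positive real x) satisfies Z(A₀, A₁, A₂, A₃)g = 0 on (0, ε). -/
/-- The fourth-order Fuchsian operator `Z(A)` of the paper, acting on functions of
a real variable. -/
noncomputable def Zop (A₀ A₁ A₂ A₃ : ℂ) (f : ℝ → ℂ) (x : ℝ) : ℂ :=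
  ((x : ℂ) ^ 3 * ((x : ℂ) - 1) ^ 2) * deriv^[4] f x
    + (-2 * (x : ℂ) ^ 2 * ((x : ℂ) - 1) * (2 * A₀ * (x : ℂ) - 2 * A₀ - 5 * (x : ℂ) + 3))
        * deriv^[3] f x
    + ((x : ℂ) * ((6 * A₀ ^ 2 - A₂ ^ 2 - A₃ ^ 2 - 24 * A₀ + 25) * (x : ℂ) ^ 2
        + (-11 * A₀ ^ 2 - A₁ ^ 2 + A₂ ^ 2 + A₃ ^ 2 + 36 * A₀ - 59 / 2) * (x : ℂ)
        + (10 * A₀ - 9) * (2 * A₀ - 3) / 4)) * deriv^[2] f x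
    + (-((2 * A₀ - 3) * (2 * A₀ ^ 2 - A₂ ^ 2 - A₃ ^ 2 - 6 * A₀ + 5)) * (x : ℂ) ^ 2
        + (A₀ - 1) * (6 * A₀ ^ 2 + 2 * A₁ ^ 2 - 2 * A₂ ^ 2 - 2 * A₃ ^ 2 - 16 * A₀ + 11) * (x : ℂ)
        - (2 * A₀ - 3) * (2 * A₀ - 1) ^ 2 / 4) * deriv f x
    + ((A₀ - 1 + A₃) * (A₀ - 1 - A₃) * (A₀ - 1 + A₂) * (A₀ - 1 - A₂) * (x : ℂ)
        - (2 * A₀ - 1) ^ 2 * (A₀ ^ 2 + A₁ ^ 2 - A₂ ^ 2 - A₃ ^ 2 - 2 * A₀ + 1) / 4) * f x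

/-!
As differential operators, `Z(A₀) ∘ x^(2A₀) = x^(2A₀) ∘ Z(-A₀)`; equivalently, the conjugate
`x^(-A₀) ∘ Z(A₀) ∘ x^(A₀)` is even in `A₀`. By the Leibniz rule the left-hand side is `x^(2A₀)`
times an operator with coefficients rational in `x`, and these are the coefficients of `Z(-A₀)`.
-/

open Finset.HasAntidiagonal (antidiagonal)

namespace IterDiffOn

variable {m n : ℕ} {f g : ℝ → ℂ} {U V : Set ℝ} {x : ℝ}

theorem mono (hf : IterDiffOn n f U) (hVU : V ⊆ U) : IterDiffOn n f V :=
  fun k hk x hx ↦ hf k hk x (hVU hx)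

theorem of_le (hf : IterDiffOn n f U) (hmn : m ≤ n) : IterDiffOn m f U :=
  fun k hk ↦ hf k (hk.trans_le hmn)

theorem hasDerivAt_iterate_deriv (hf : IterDiffOn n f U) {k : ℕ} (hk : k < n) (hx : x ∈ U) :
    HasDerivAt (deriv^[k] f) (deriv^[k + 1] f x) x := by
  rw [Function.iterate_succ_apply']
  exact (hf k hk x hx).hasDerivAt

/-- `iteratedDeriv_mul` is for `C^n` functions; here the `n`-th derivatives may be discontinuous. -/
theorem iterate_deriv_mul (hU : IsOpen U) (hf : IterDiffOn n f U) (hg : IterDiffOn n g U)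
    (hx : x ∈ U) :
    deriv^[n] (fun t ↦ f t * g t) x =
      ∑ ij ∈ antidiagonal n, (n.choose ij.1 : ℂ) * (deriv^[ij.1] f x * deriv^[ij.2] g x) := by
  induction n generalizing x with
  | zero => simp
  | succ n ih =>
    have leibniz_on : U.EqOn (deriv^[n] fun t ↦ f t * g t) fun t ↦
        ∑ ij ∈ antidiagonal n, (n.choose ij.1 : ℂ) * (deriv^[ij.1] f t * deriv^[ij.2] g t) :=
      fun t ht ↦ ih (hf.of_le n.le_succ) (hg.of_le n.le_succ) ht
    have hasDerivAt_sum := HasDerivAt.fun_sum fun ij (hij : ij ∈ antidiagonal n) ↦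
      ((hf.hasDerivAt_iterate_deriv (Finset.Nat.antidiagonal.fst_lt hij) hx).fun_mul
        (hg.hasDerivAt_iterate_deriv (Finset.Nat.antidiagonal.snd_lt hij) hx)).const_mul
          (n.choose ij.1 : ℂ)
    rw [Function.iterate_succ_apply', leibniz_on.deriv hU hx, hasDerivAt_sum.deriv,
      Finset.sum_antidiagonal_choose_succ_mul fun i j ↦ deriv^[i] f x * deriv^[j] g x,
      ← Finset.sum_add_distrib]
    refine Finset.sum_congr rfl fun ij hij ↦ ?_
    rw [← Nat.choose_symm_of_eq_add (Finset.HasAntidiagonal.mem_antidiagonal.mp hij).symm]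
    ring

end IterDiffOn

theorem hasDerivAt_ofReal_cpow (c : ℂ) {x : ℝ} (hx : x ≠ 0) :
    HasDerivAt (fun t : ℝ ↦ (t : ℂ) ^ c) (c * (x : ℂ) ^ (c - 1)) x := by
  rcases eq_or_ne c 0 with rfl | hc
  · simpa using hasDerivAt_const x (1 : ℂ)
  · exact hasDerivAt_ofReal_cpow_const hx hc

theorem iterate_deriv_ofReal_cpow (c : ℂ) (n : ℕ) {x : ℝ} (hx : x ≠ 0) :
    deriv^[n] (fun t : ℝ ↦ (t : ℂ) ^ c) x =
      (descPochhammer ℂ n).eval c * (x : ℂ) ^ (c - n) := by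
  induction n generalizing x with
  | zero => simp
  | succ n ih =>
    have iterate_eq_on : ({0}ᶜ : Set ℝ).EqOn (deriv^[n] fun t : ℝ ↦ (t : ℂ) ^ c)
        fun t ↦ (descPochhammer ℂ n).eval c * (t : ℂ) ^ (c - n) := fun t ht ↦ ih ht
    rw [Function.iterate_succ_apply', iterate_eq_on.deriv isOpen_compl_singleton hx,
      ((hasDerivAt_ofReal_cpow (c - n) hx).const_mul _).deriv, descPochhammer_succ_eval,
      Nat.cast_succ, sub_add_eq_sub_sub, mul_assoc]

theorem iterDiffOn_ofReal_cpow (c : ℂ) (n : ℕ) :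
    IterDiffOn n (fun t : ℝ ↦ (t : ℂ) ^ c) {0}ᶜ := by
  intro k _ x hx
  refine ((hasDerivAt_ofReal_cpow (c - k) hx).differentiableAt.const_mul
    ((descPochhammer ℂ k).eval c)).congr_of_eventuallyEq ?_
  filter_upwards [isOpen_compl_singleton.mem_nhds hx] with t ht
  exact iterate_deriv_ofReal_cpow c k ht

theorem IterDiffOn.iterate_deriv_ofReal_cpow_mul {n : ℕ} {f : ℝ → ℂ} {U : Set ℝ} {x : ℝ}
    (hU : IsOpen U) (h0 : 0 ∉ U) (hf : IterDiffOn n f U) (c : ℂ) (hx : x ∈ U) :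
    deriv^[n] (fun t : ℝ ↦ (t : ℂ) ^ c * f t) x =
      (x : ℂ) ^ c * ∑ ij ∈ antidiagonal n,
        (n.choose ij.1 : ℂ) * ((descPochhammer ℂ ij.1).eval c / (x : ℂ) ^ ij.1
          * deriv^[ij.2] f x) := by
  have hx0 : x ≠ 0 := ne_of_mem_of_not_mem hx h0
  have cpow_iterDiffOn := (iterDiffOn_ofReal_cpow c n).mono (Set.subset_compl_singleton_iff.mpr h0)
  rw [cpow_iterDiffOn.iterate_deriv_mul hU hf hx, Finset.mul_sum]
  refine Finset.sum_congr rfl fun ij _ ↦ ?_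
  rw [iterate_deriv_ofReal_cpow c ij.1 hx0,
    Complex.cpow_sub _ _ (Complex.ofReal_ne_zero.mpr hx0), Complex.cpow_natCast]
  ring

theorem stmt_1_general (A₀ A₁ A₂ A₃ : ℂ) {U : Set ℝ} (hU : IsOpen U) (h0 : 0 ∉ U) {f : ℝ → ℂ}
    (hf : IterDiffOn 4 f U) {x : ℝ} (hx : x ∈ U) :
    Zop A₀ A₁ A₂ A₃ (fun t : ℝ ↦ (t : ℂ) ^ (2 * A₀) * f t) x =
      (x : ℂ) ^ (2 * A₀) * Zop (-A₀) A₁ A₂ A₃ f x := by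
  have hx0 : (x : ℂ) ≠ 0 := Complex.ofReal_ne_zero.mpr (ne_of_mem_of_not_mem hx h0)
  have leibniz (n : ℕ) (hn : n ≤ 4) :=
    (hf.of_le hn).iterate_deriv_ofReal_cpow_mul hU h0 (2 * A₀) hx
  have leibniz_one := leibniz 1 (by norm_num)
  rw [Function.iterate_one] at leibniz_one
  unfold Zop
  rw [leibniz 4 le_rfl, leibniz 3 (by norm_num), leibniz 2 (by norm_num), leibniz_one]
  simp only [Finset.Nat.sum_antidiagonal_eq_sum_range_succ_mk, Finset.sum_range_succ,
    Finset.sum_range_zero, descPochhammer_succ_eval, descPochhammer_zero, Polynomial.eval_one,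
    Nat.choose, Nat.reduceAdd, Nat.reduceSub, Nat.sub_zero, Function.iterate_one,
    Function.iterate_zero_apply]
  push_cast
  field_simp
  ring

/-- If `f` solves `Z(−A₀,A₁,A₂,A₃)f = 0` on `(0, ε)`, then `g(x) = x^{2A₀} f(x)`
solves `Z(A₀,A₁,A₂,A₃)g = 0` there. -/
theorem stmt_1 (A₀ A₁ A₂ A₃ : ℂ) (ε : ℝ) (hε : 0 < ε) (f : ℝ → ℂ)
    (hf : IterDiffOn 4 f (Set.Ioo 0 ε))
    (hode : ∀ x ∈ Set.Ioo (0 : ℝ) ε, Zop (-A₀) A₁ A₂ A₃ f x = 0) :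
    ∀ x ∈ Set.Ioo (0 : ℝ) ε,
      Zop A₀ A₁ A₂ A₃ (fun t : ℝ => (t : ℂ) ^ (2 * A₀) * f t) x = 0 := by
  intro x hx
  rw [stmt_1_general A₀ A₁ A₂ A₃ isOpen_Ioo (by simp) hf hx, hode x hx, mul_zero]
end

section
/- For every A = (A₀, A₁, A₂, A₃) ∈ ℂ⁴, the operator Z̃(A) is self-adjoint: for every four-times differentiable f : ℝ → ℂ and every x ∈ ℝ, (P₀f)''''(x) − (P₁f)'''(x) + (P₂f)''(x) − (P₃f)'(x) + P₄(x)f(x) = P₀(x)f''''(x) + P₁(x)f'''(x) + P₂(x)f''(x) + P₃(x)f'(x) + P₄(x)f(x), where P₀ = x²(x−1)², P₁ = m₁, P₂ = m₂, P₃ = m₃, P₄ = m₄ are the coefficients of Z̃(A). -/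
namespace Stmt3

/-- Leading coefficient `x²(x−1)²` of `Z̃(A)`. -/
noncomputable def P0 (x : ℝ) : ℂ := (x : ℂ) ^ 2 * ((x : ℂ) - 1) ^ 2

/-- Coefficient `m₁` of `Z̃(A)`. -/
noncomputable def P1 (x : ℝ) : ℂ := 4 * ((x : ℂ) - 1) * (x : ℂ) * (2 * (x : ℂ) - 1)

/-- Coefficient `m₂` of `Z̃(A)`. -/
noncomputable def P2 (A₀ A₁ A₂ A₃ : ℂ) (x : ℝ) : ℂ :=
  (1 / 4) * (4 * A₀ ^ 2 * (x : ℂ) - 4 * A₀ ^ 2 - 4 * A₁ ^ 2 * (x : ℂ)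
    - 4 * A₂ ^ 2 * (x : ℂ) ^ 2 + 4 * A₂ ^ 2 * (x : ℂ) - 4 * A₃ ^ 2 * (x : ℂ) ^ 2
    + 4 * A₃ ^ 2 * (x : ℂ) + 58 * (x : ℂ) ^ 2 - 58 * (x : ℂ) + 9)

/-- Coefficient `m₃` of `Z̃(A)`. -/
noncomputable def P3 (A₀ A₁ A₂ A₃ : ℂ) (x : ℝ) : ℂ :=
  (1 / 2) * (2 * A₀ ^ 2 - 2 * A₁ ^ 2 - 4 * A₂ ^ 2 * (x : ℂ) + 2 * A₂ ^ 2
    - 4 * A₃ ^ 2 * (x : ℂ) + 2 * A₃ ^ 2 + 10 * (x : ℂ) - 5)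

/-- Coefficient `m₄` of `Z̃(A)`. -/
noncomputable def P4 (A₂ A₃ : ℂ) : ℂ :=
  (A₂ - 1 / 2) * (A₂ + 1 / 2) * (A₃ - 1 / 2) * (A₃ + 1 / 2)

section DifferentialOperators

open Finset

variable {𝕜 𝔸 F : Type*} [NontriviallyNormedField 𝕜] [NormedRing 𝔸] [NormedAlgebra 𝕜 𝔸]
  [NormedAddCommGroup F] [NormedSpace 𝕜 F] [Module 𝔸 F] [IsBoundedSMul 𝔸 F] [IsScalarTower 𝕜 𝔸 F]
  {p₀ p₁ p₂ p₃ p₄ : 𝕜 → 𝔸} {f : 𝕜 → F}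

-- Unlike `iteratedDerivWithin_smul`, this does not require the `n`-th derivatives to be continuous.
theorem iterate_deriv_smul {n : ℕ} {p : 𝕜 → 𝔸}
    (hp : ∀ k < n, Differentiable 𝕜 (deriv^[k] p)) (hf : ∀ k < n, Differentiable 𝕜 (deriv^[k] f)) :
    deriv^[n] (fun t => p t • f t) = fun t =>
      ∑ ij ∈ antidiagonal n, n.choose ij.1 • (deriv^[ij.1] p t • deriv^[ij.2] f t) := by
  induction n with
  | zero => simp
  | succ n ih =>
    have hasDerivAt_term (t : 𝕜) (ij : ℕ × ℕ) (hij : ij ∈ antidiagonal n) :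
        HasDerivAt (fun s => n.choose ij.1 • (deriv^[ij.1] p s • deriv^[ij.2] f s))
          (n.choose ij.1 • (deriv^[ij.1] p t • deriv^[ij.2 + 1] f t +
            deriv^[ij.1 + 1] p t • deriv^[ij.2] f t)) t := by
      have hsum : ij.1 + ij.2 = n := mem_antidiagonal.mp hij
      rw [Function.iterate_succ_apply', Function.iterate_succ_apply']
      exact ((hp ij.1 (by lia) t).hasDerivAt.fun_smul
        (hf ij.2 (by lia) t).hasDerivAt).const_smul (n.choose ij.1)
    rw [Function.iterate_succ_apply', ih (fun k hk => hp k (by lia)) (fun k hk => hf k (by lia))]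
    funext t
    rw [(HasDerivAt.fun_sum (hasDerivAt_term t)).deriv,
      sum_antidiagonal_choose_succ_nsmul (fun i j => deriv^[i] p t • deriv^[j] f t),
      ← sum_add_distrib]
    refine sum_congr rfl fun ij hij => ?_
    rw [smul_add, Nat.choose_symm_of_eq_add (mem_antidiagonal.mp hij).symm]

/-- The differential operator `p₀∂⁴ + p₁∂³ + p₂∂² + p₃∂ + p₄` with coefficients in a normed
algebra, acting on functions with values in a module over that algebra. -/
noncomputable def fourthOrderOp (p₀ p₁ p₂ p₃ p₄ : 𝕜 → 𝔸) (f : 𝕜 → F) (x : 𝕜) : F :=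
  p₀ x • deriv^[4] f x + p₁ x • deriv^[3] f x + p₂ x • deriv^[2] f x + p₃ x • deriv f x
    + p₄ x • f x

/-- The formal adjoint of `fourthOrderOp p₀ p₁ p₂ p₃ p₄`, without conjugation of the coefficients.
Since `deriv` is total, it is meaningful only when the products `pᵢ • f` are sufficiently often
differentiable. -/
noncomputable def fourthOrderAdjoint (p₀ p₁ p₂ p₃ p₄ : 𝕜 → 𝔸) (f : 𝕜 → F) (x : 𝕜) : F :=
  deriv^[4] (fun t => p₀ t • f t) x - deriv^[3] (fun t => p₁ t • f t) x
    + deriv^[2] (fun t => p₂ t • f t) x - deriv (fun t => p₃ t • f t) x + p₄ x • f x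

theorem fourthOrderAdjoint_eq_expansion
    (hp₀ : ∀ k < 4, Differentiable 𝕜 (deriv^[k] p₀))
    (hp₁ : ∀ k < 3, Differentiable 𝕜 (deriv^[k] p₁))
    (hp₂ : ∀ k < 2, Differentiable 𝕜 (deriv^[k] p₂)) (hp₃ : Differentiable 𝕜 p₃)
    (hf : ∀ k < 4, Differentiable 𝕜 (deriv^[k] f)) (x : 𝕜) :
    fourthOrderAdjoint p₀ p₁ p₂ p₃ p₄ f x =
      p₀ x • deriv^[4] f x
        + (4 • deriv p₀ x - p₁ x) • deriv^[3] f x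
        + (6 • deriv^[2] p₀ x - 3 • deriv p₁ x + p₂ x) • deriv^[2] f x
        + (4 • deriv^[3] p₀ x - 3 • deriv^[2] p₁ x + 2 • deriv p₂ x - p₃ x) • deriv f x
        + (deriv^[4] p₀ x - deriv^[3] p₁ x + deriv^[2] p₂ x - deriv p₃ x + p₄ x) • f x := by
  have hf_lt {n : ℕ} (hn : n ≤ 4) : ∀ k < n, Differentiable 𝕜 (deriv^[k] f) :=
    fun k hk => hf k (hk.trans_le hn)
  have differentiable_f : Differentiable 𝕜 f := hf 0 (by lia)
  rw [fourthOrderAdjoint, iterate_deriv_smul hp₀ hf, iterate_deriv_smul hp₁ (hf_lt (by lia)),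
    iterate_deriv_smul hp₂ (hf_lt (by lia)), deriv_fun_smul (hp₃ x) (differentiable_f x)]
  simp only [Nat.sum_antidiagonal_eq_sum_range_succ_mk, sum_range_succ, sum_range_zero, zero_add,
    Nat.choose, Nat.reduceAdd, Nat.reduceSub, Function.iterate_zero_apply, Function.iterate_one,
    one_smul, add_smul, sub_smul, smul_assoc]
  abel

-- `hp₁` and `hp₃` match the coefficients of the third and first derivatives of `f` in the expanded
-- adjoint; those of the second derivative and of `f` itself then match automatically.
theorem fourthOrderAdjoint_eq_fourthOrderOp
    (hp₀ : ∀ k < 4, Differentiable 𝕜 (deriv^[k] p₀))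
    (hp₂ : ∀ k < 2, Differentiable 𝕜 (deriv^[k] p₂))
    (hf : ∀ k < 4, Differentiable 𝕜 (deriv^[k] f))
    (hp₁ : p₁ = (2 : 𝕜) • deriv p₀) (hp₃ : p₃ = deriv p₂ - deriv^[3] p₀) (x : 𝕜) :
    fourthOrderAdjoint p₀ p₁ p₂ p₃ p₄ f x = fourthOrderOp p₀ p₁ p₂ p₃ p₄ f x := by
  have iterate_p₁ (k : ℕ) : deriv^[k] p₁ = deriv^[k + 1] p₀ + deriv^[k + 1] p₀ := by
    funext t
    rw [hp₁, ← iteratedDeriv_eq_iterate, iteratedDeriv_const_smul_field, iteratedDeriv_eq_iterate,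
      Function.iterate_succ_apply, Pi.add_apply, two_smul]
  have differentiable_p₁ (k : ℕ) (hk : k < 3) : Differentiable 𝕜 (deriv^[k] p₁) := by
    rw [iterate_p₁]
    exact (hp₀ (k + 1) (by lia)).add (hp₀ (k + 1) (by lia))
  have hasDerivAt_p₃ (t : 𝕜) : HasDerivAt p₃ (deriv^[2] p₂ t - deriv^[4] p₀ t) t := by
    rw [hp₃, Function.iterate_succ_apply' deriv 1, Function.iterate_succ_apply' deriv 3]
    exact (hp₂ 1 (by lia) t).hasDerivAt.sub (hp₀ 3 (by lia) t).hasDerivAt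
  have coeff₃ : 4 • deriv p₀ x - p₁ x = p₁ x := by
    rw [show p₁ = deriv p₀ + deriv p₀ from iterate_p₁ 0, Pi.add_apply]
    abel
  have coeff₂ : 6 • deriv^[2] p₀ x - 3 • deriv p₁ x + p₂ x = p₂ x := by
    rw [show deriv p₁ = deriv^[2] p₀ + deriv^[2] p₀ from iterate_p₁ 1, Pi.add_apply]
    abel
  have coeff₁ : 4 • deriv^[3] p₀ x - 3 • deriv^[2] p₁ x + 2 • deriv p₂ x - p₃ x = p₃ x := by
    rw [iterate_p₁, hp₃, Pi.add_apply, Pi.sub_apply]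
    abel
  have coeff₀ : deriv^[4] p₀ x - deriv^[3] p₁ x + deriv^[2] p₂ x - deriv p₃ x + p₄ x = p₄ x := by
    rw [iterate_p₁, (hasDerivAt_p₃ x).deriv, Pi.add_apply]
    abel
  rw [fourthOrderAdjoint_eq_expansion hp₀ differentiable_p₁ hp₂
    (fun t => (hasDerivAt_p₃ t).differentiableAt) hf, coeff₃, coeff₂, coeff₁, coeff₀,
    fourthOrderOp]

end DifferentialOperators

section PolynomialFunctions

open Polynomial

variable {𝕜 𝕜' : Type*} [NontriviallyNormedField 𝕜] [NontriviallyNormedField 𝕜']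
  [NormedAlgebra 𝕜 𝕜']

theorem hasDerivAt_eval_algebraMap (q : 𝕜'[X]) (t : 𝕜) :
    HasDerivAt (fun s : 𝕜 => q.eval (algebraMap 𝕜 𝕜' s))
      ((derivative q).eval (algebraMap 𝕜 𝕜' t)) t := by
  have hasDerivAt_algebraMap : HasDerivAt (algebraMap 𝕜 𝕜') 1 t := by
    simpa using! (Algebra.linearMap 𝕜 𝕜').hasDerivAt (x := t)
  simpa using! (q.hasDerivAt (algebraMap 𝕜 𝕜' t)).comp t hasDerivAt_algebraMap

theorem iterate_deriv_eval_algebraMap (q : 𝕜'[X]) (k : ℕ) :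
    deriv^[k] (fun t : 𝕜 => q.eval (algebraMap 𝕜 𝕜' t)) =
      fun t => (derivative^[k] q).eval (algebraMap 𝕜 𝕜' t) := by
  induction k generalizing q with
  | zero => rfl
  | succ k ih =>
    have deriv_eval : deriv (fun t : 𝕜 => q.eval (algebraMap 𝕜 𝕜' t)) =
        fun t => (derivative q).eval (algebraMap 𝕜 𝕜' t) :=
      funext fun t => (hasDerivAt_eval_algebraMap q t).deriv
    rw [Function.iterate_succ_apply, Function.iterate_succ_apply, deriv_eval, ih]

theorem differentiable_iterate_deriv_eval_algebraMap (q : 𝕜'[X]) (k : ℕ) :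
    Differentiable 𝕜 (deriv^[k] (fun t : 𝕜 => q.eval (algebraMap 𝕜 𝕜' t))) := by
  rw [iterate_deriv_eval_algebraMap]
  exact fun t => (hasDerivAt_eval_algebraMap _ t).differentiableAt

end PolynomialFunctions

section Coefficients

open Polynomial

/-- The complex polynomial whose restriction to `ℝ` is `P0`, in expanded form; it makes the
derivatives of `P0` computable by algebra. -/
noncomputable def P0Poly : ℂ[X] := X ^ 4 - C 2 * X ^ 3 + X ^ 2

/-- The complex polynomial whose restriction to `ℝ` is `P2`, collected by powers of `X`; it makes
the derivatives of `P2` computable by algebra. -/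
noncomputable def P2Poly (A₀ A₁ A₂ A₃ : ℂ) : ℂ[X] :=
  C (29 / 2 - A₂ ^ 2 - A₃ ^ 2) * X ^ 2 + C (A₀ ^ 2 - A₁ ^ 2 + A₂ ^ 2 + A₃ ^ 2 - 29 / 2) * X
    + C (9 / 4 - A₀ ^ 2)

theorem P0_eq_eval : P0 = fun t => P0Poly.eval (algebraMap ℝ ℂ t) := by
  funext t
  simp only [P0, P0Poly, Complex.coe_algebraMap, eval_add, eval_sub, eval_mul, eval_C, eval_pow,
    eval_X]
  ring

theorem P2_eq_eval (A₀ A₁ A₂ A₃ : ℂ) :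
    P2 A₀ A₁ A₂ A₃ = fun t => (P2Poly A₀ A₁ A₂ A₃).eval (algebraMap ℝ ℂ t) := by
  funext t
  simp only [P2, P2Poly, Complex.coe_algebraMap, eval_add, eval_mul, eval_C, eval_pow, eval_X]
  ring

theorem differentiable_iterate_deriv_P0 (k : ℕ) : Differentiable ℝ (deriv^[k] P0) := by
  rw [P0_eq_eval]
  exact differentiable_iterate_deriv_eval_algebraMap _ k

theorem differentiable_iterate_deriv_P2 (A₀ A₁ A₂ A₃ : ℂ) (k : ℕ) :
    Differentiable ℝ (deriv^[k] (P2 A₀ A₁ A₂ A₃)) := by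
  rw [P2_eq_eval]
  exact differentiable_iterate_deriv_eval_algebraMap _ k

theorem P1_eq_two_smul_deriv_P0 : P1 = (2 : ℝ) • deriv P0 := by
  funext t
  rw [Pi.smul_apply, P0_eq_eval, (hasDerivAt_eval_algebraMap _ t).deriv]
  simp only [P1, P0Poly, Complex.coe_algebraMap, derivative_add, derivative_sub,
    derivative_C_mul, derivative_X_pow, eval_add, eval_sub, eval_mul, eval_C, eval_pow, eval_X,
    Complex.real_smul]
  push_cast
  ring

theorem P3_eq_deriv_P2_sub_iterate_deriv_P0 (A₀ A₁ A₂ A₃ : ℂ) :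
    P3 A₀ A₁ A₂ A₃ = deriv (P2 A₀ A₁ A₂ A₃) - deriv^[3] P0 := by
  funext t
  rw [Pi.sub_apply, P2_eq_eval, P0_eq_eval, (hasDerivAt_eval_algebraMap _ t).deriv,
    iterate_deriv_eval_algebraMap]
  simp only [P3, P0Poly, P2Poly, Complex.coe_algebraMap, Function.iterate_succ_apply,
    Function.iterate_zero_apply, derivative_add, derivative_sub, derivative_C_mul, derivative_X_pow,
    derivative_X, derivative_C, eval_add, eval_sub, eval_mul, eval_C, eval_pow, eval_X, eval_one,
    eval_zero]
  push_cast
  ring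

end Coefficients

/-- The operator `Z̃(A)` is self-adjoint. -/
theorem stmt_3 (A₀ A₁ A₂ A₃ : ℂ) (f : ℝ → ℂ)
    (hf : ∀ k < 4, Differentiable ℝ (deriv^[k] f)) :
    ∀ x : ℝ,
      deriv^[4] (fun t => P0 t * f t) x
        - deriv^[3] (fun t => P1 t * f t) x
        + deriv^[2] (fun t => P2 A₀ A₁ A₂ A₃ t * f t) x
        - deriv (fun t => P3 A₀ A₁ A₂ A₃ t * f t) x
        + P4 A₂ A₃ * f x
      = P0 x * deriv^[4] f x + P1 x * deriv^[3] f x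
        + P2 A₀ A₁ A₂ A₃ x * deriv^[2] f x + P3 A₀ A₁ A₂ A₃ x * deriv f x
        + P4 A₂ A₃ * f x := by
  exact fourthOrderAdjoint_eq_fourthOrderOp (p₄ := fun _ => P4 A₂ A₃)
    (fun k _ => differentiable_iterate_deriv_P0 k)
    (fun k _ => differentiable_iterate_deriv_P2 A₀ A₁ A₂ A₃ k) hf
    P1_eq_two_smul_deriv_P0 (P3_eq_deriv_P2_sub_iterate_deriv_P0 A₀ A₁ A₂ A₃)

end Stmt3
end

section
/- For every A = (A₀, A₁, A₂, A₃) ∈ ℂ⁴ and every four-times differentiable f : ℝ → ℂ (equivalently, on any open interval), one has the operator identity Z̃(A)f = [(θ + 1/2 − A₂)∘(θ + 1/2 + A₂)∘(θ + 1/2 − A₃)∘(θ + 1/2 + A₃)]f − [(θ + 1)∘(2θ∘θ + 4θ + (A₁² − A₀² − A₂² − A₃² + 5/2))∘∂]f + [(θ + 3/2 + A₀)∘(θ + 3/2 − A₀)∘∂∘∂]f, where ∂g = g', θg = x·g', and (θ + c)g = x·g' + c·g, with ∘ denoting composition of operators. -/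
namespace Stmt4

/-- The operator `Z̃(A)` in coefficient form. -/
noncomputable def Zt (A₀ A₁ A₂ A₃ : ℂ) (f : ℝ → ℂ) (x : ℝ) : ℂ :=
  (x : ℂ) ^ 2 * ((x : ℂ) - 1) ^ 2 * deriv^[4] f x
    + (4 * ((x : ℂ) - 1) * (x : ℂ) * (2 * (x : ℂ) - 1)) * deriv^[3] f x
    + ((1 / 4) * (4 * A₀ ^ 2 * (x : ℂ) - 4 * A₀ ^ 2 - 4 * A₁ ^ 2 * (x : ℂ)
        - 4 * A₂ ^ 2 * (x : ℂ) ^ 2 + 4 * A₂ ^ 2 * (x : ℂ) - 4 * A₃ ^ 2 * (x : ℂ) ^ 2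
        + 4 * A₃ ^ 2 * (x : ℂ) + 58 * (x : ℂ) ^ 2 - 58 * (x : ℂ) + 9)) * deriv^[2] f x
    + ((1 / 2) * (2 * A₀ ^ 2 - 2 * A₁ ^ 2 - 4 * A₂ ^ 2 * (x : ℂ) + 2 * A₂ ^ 2
        - 4 * A₃ ^ 2 * (x : ℂ) + 2 * A₃ ^ 2 + 10 * (x : ℂ) - 5)) * deriv f x
    + ((A₂ - 1 / 2) * (A₂ + 1 / 2) * (A₃ - 1 / 2) * (A₃ + 1 / 2)) * f x

/-- The derivation `∂`. -/
noncomputable def Dop (f : ℝ → ℂ) : ℝ → ℂ := deriv f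

/-- The Euler operator `θ = x∂`. -/
noncomputable def Th (f : ℝ → ℂ) : ℝ → ℂ := fun x => (x : ℂ) * deriv f x

/-- The operator `θ + c`. -/
noncomputable def ThC (c : ℂ) (f : ℝ → ℂ) : ℝ → ℂ := fun x => (x : ℂ) * deriv f x + c * f x

/-! The rule `∂ⁿ ∘ (θ + c) = (θ + c + n) ∘ ∂ⁿ` lets one expand a product of factors `θ + cᵢ` into
the operators `xᵏ∂ᵏ` one factor at a time; the coefficients are elementary symmetric functions of
the `cᵢ` weighted by Stirling numbers. The theorem compares coefficients of `xʲ∂ᵏ`. -/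

/-- `f` is `n` times differentiable on `s`, without continuity of the `n`-th derivative. The
derivatives are those of `f` on the whole line, so the notion is meant for open `s`. -/
def IteratedDifferentiableOn (n : ℕ) (f : ℝ → ℂ) (s : Set ℝ) : Prop :=
  ∀ k < n, DifferentiableOn ℝ (deriv^[k] f) s

section

variable {s : Set ℝ} {f g h : ℝ → ℂ} {x : ℝ} {m n : ℕ}

namespace IteratedDifferentiableOn

theorem of_le (hf : IteratedDifferentiableOn n f s) (hmn : m ≤ n) :
    IteratedDifferentiableOn m f s :=
  fun k hk => hf k (hk.trans_le hmn)

theorem iterate_deriv (hf : IteratedDifferentiableOn (m + n) f s) :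
    IteratedDifferentiableOn m (deriv^[n] f) s := fun k hk => by
  rw [← Function.iterate_add_apply]
  exact hf (k + n) (by lia)

theorem differentiableAt_iterate_deriv (hf : IteratedDifferentiableOn n f s) (hs : IsOpen s)
    (hx : x ∈ s) (hmn : m < n) : DifferentiableAt ℝ (deriv^[m] f) x :=
  (hf m hmn).differentiableAt (hs.mem_nhds hx)

theorem differentiableAt (hf : IteratedDifferentiableOn n f s) (hs : IsOpen s)
    (hx : x ∈ s) (hn : 0 < n) : DifferentiableAt ℝ f x :=
  hf.differentiableAt_iterate_deriv hs hx hn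

end IteratedDifferentiableOn

theorem th_eq_thC_zero : Th = ThC 0 := by
  ext f x
  simp only [Th, ThC, zero_mul, add_zero]

theorem thC_linear_combination (c α β γ : ℂ) (hf : DifferentiableAt ℝ f x)
    (hg : DifferentiableAt ℝ g x) (hh : DifferentiableAt ℝ h x) :
    ThC c (fun t => α * f t + β * g t + γ * h t) x =
      α * ThC c f x + β * ThC c g x + γ * ThC c h x := by
  have hderiv := ((hf.hasDerivAt.const_mul α).fun_add (hg.hasDerivAt.const_mul β)).fun_add
    (hh.hasDerivAt.const_mul γ)
  simp only [ThC, hderiv.deriv]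
  ring

theorem hasDerivAt_thC (c : ℂ) (hf : DifferentiableAt ℝ f x)
    (hf' : DifferentiableAt ℝ (deriv f) x) :
    HasDerivAt (ThC c f) (ThC (c + 1) (deriv f) x) x := by
  have hid : HasDerivAt (fun t : ℝ => (t : ℂ)) 1 x := Complex.ofRealCLM.hasDerivAt
  refine ((hid.fun_mul hf'.hasDerivAt).fun_add (hf.hasDerivAt.const_mul c)).congr_deriv ?_
  simp only [ThC]
  ring

theorem hasDerivAt_thC_iterate_deriv (c : ℂ) (hs : IsOpen s)
    (hf : IteratedDifferentiableOn (n + 2) f s) (hx : x ∈ s) :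
    HasDerivAt (ThC c (deriv^[n] f)) (ThC (c + 1) (deriv^[n + 1] f) x) x := by
  have hderiv : deriv^[n + 1] f = deriv (deriv^[n] f) := Function.iterate_succ_apply' ..
  have hn := hf.differentiableAt_iterate_deriv hs hx (m := n) (by lia)
  have hn' := hf.differentiableAt_iterate_deriv hs hx (m := n + 1) (by lia)
  rw [hderiv] at hn' ⊢
  exact hasDerivAt_thC c hn hn'

theorem eqOn_iterate_deriv_thC (c : ℂ) (hs : IsOpen s)
    (hf : IteratedDifferentiableOn (n + 1) f s) :
    Set.EqOn (deriv^[n] (ThC c f)) (ThC (c + n) (deriv^[n] f)) s := by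
  induction n with
  | zero => simp [Set.EqOn]
  | succ n ih =>
    intro x hx
    rw [Function.iterate_succ_apply', (ih (hf.of_le (by lia))).deriv hs hx,
      (hasDerivAt_thC_iterate_deriv _ hs hf hx).deriv, Nat.cast_succ, add_assoc]

theorem IteratedDifferentiableOn.thC (hf : IteratedDifferentiableOn (n + 1) f s) (hs : IsOpen s)
    (c : ℂ) : IteratedDifferentiableOn n (ThC c f) s := fun k hk =>
  have hdiff : DifferentiableOn ℝ (ThC (c + k) (deriv^[k] f)) s := fun _ hx =>
    (hasDerivAt_thC_iterate_deriv _ hs (hf.of_le (by lia)) hx).differentiableAt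
      |>.differentiableWithinAt
  hdiff.congr (eqOn_iterate_deriv_thC c hs (hf.of_le (by lia)))

theorem deriv_thC (c : ℂ) (hs : IsOpen s) (hf : IteratedDifferentiableOn 2 f s) (hx : x ∈ s) :
    deriv (ThC c f) x = ThC (c + 1) (deriv f) x :=
  (hasDerivAt_thC_iterate_deriv (n := 0) c hs hf hx).deriv

theorem thC_thC_apply (a b : ℂ) (hs : IsOpen s) (hf : IteratedDifferentiableOn 2 f s)
    (hx : x ∈ s) :
    ThC a (ThC b f) x =
      x ^ 2 * deriv^[2] f x + (1 + (a + b)) * x * deriv f x + a * b * f x := by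
  rw [ThC, deriv_thC b hs hf hx]
  simp only [ThC, Function.iterate_succ_apply', Function.iterate_zero_apply]
  ring

theorem thC_thC_thC_apply (a b c : ℂ) (hs : IsOpen s) (hf : IteratedDifferentiableOn 3 f s)
    (hx : x ∈ s) :
    ThC a (ThC b (ThC c f)) x =
      x ^ 3 * deriv^[3] f x + (3 + (a + b + c)) * x ^ 2 * deriv^[2] f x
        + (1 + (a + b + c) + (a * b + a * c + b * c)) * x * deriv f x + a * b * c * f x := by
  rw [thC_thC_apply a b hs (hf.thC hs c) hx, deriv_thC c hs (hf.of_le (by lia)) hx,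
    eqOn_iterate_deriv_thC c hs hf hx]
  simp only [ThC, Function.iterate_succ_apply', Function.iterate_zero_apply]
  push_cast
  ring

theorem thC_thC_thC_thC_apply (a b c d : ℂ) (hs : IsOpen s)
    (hf : IteratedDifferentiableOn 4 f s) (hx : x ∈ s) :
    ThC a (ThC b (ThC c (ThC d f))) x =
      x ^ 4 * deriv^[4] f x + (6 + (a + b + c + d)) * x ^ 3 * deriv^[3] f x
        + (7 + 3 * (a + b + c + d) + (a * b + a * c + a * d + b * c + b * d + c * d))
          * x ^ 2 * deriv^[2] f x
        + (1 + (a + b + c + d) + (a * b + a * c + a * d + b * c + b * d + c * d)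
          + (a * b * c + a * b * d + a * c * d + b * c * d)) * x * deriv f x
        + a * b * c * d * f x := by
  rw [thC_thC_thC_apply a b c hs (hf.thC hs d) hx, deriv_thC d hs (hf.of_le (by lia)) hx,
    eqOn_iterate_deriv_thC d hs hf hx, eqOn_iterate_deriv_thC d hs (hf.of_le (by lia)) hx]
  simp only [ThC, Function.iterate_succ_apply', Function.iterate_zero_apply]
  push_cast
  ring

theorem thC_quadratic_th_apply (c α β γ : ℂ) (hs : IsOpen s)
    (hf : IteratedDifferentiableOn 3 f s) (hx : x ∈ s) :
    ThC c (fun t => α * Th (Th f) t + β * Th f t + γ * f t) x =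
      α * x ^ 3 * deriv^[3] f x + ((3 + c) * α + β) * x ^ 2 * deriv^[2] f x
        + ((1 + c) * (α + β) + γ) * x * deriv f x + c * γ * f x := by
  have hθf : IteratedDifferentiableOn 2 (ThC 0 f) s := hf.thC hs 0
  have hθθf : IteratedDifferentiableOn 1 (ThC 0 (ThC 0 f)) s := hθf.thC hs 0
  rw [th_eq_thC_zero,
    thC_linear_combination c α β γ (hθθf.differentiableAt hs hx one_pos)
      (hθf.differentiableAt hs hx two_pos) (hf.differentiableAt hs hx three_pos),
    thC_thC_thC_apply c 0 0 hs hf hx, thC_thC_apply c 0 hs (hf.of_le (by lia)) hx, ThC]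
  ring

end

theorem stmt_4_general (A₀ A₁ A₂ A₃ : ℂ) {f : ℝ → ℂ} {s : Set ℝ} (hs : IsOpen s)
    (hf : IteratedDifferentiableOn 4 f s) {x : ℝ} (hx : x ∈ s) :
    Zt A₀ A₁ A₂ A₃ f x
      = ThC (1 / 2 - A₂) (ThC (1 / 2 + A₂) (ThC (1 / 2 - A₃) (ThC (1 / 2 + A₃) f))) x
        - ThC 1 (fun t => 2 * Th (Th (Dop f)) t + 4 * Th (Dop f) t
            + (A₁ ^ 2 - A₀ ^ 2 - A₂ ^ 2 - A₃ ^ 2 + 5 / 2) * Dop f t) x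
        + ThC (3 / 2 + A₀) (ThC (3 / 2 - A₀) (Dop (Dop f))) x := by
  have hf' : IteratedDifferentiableOn 3 (Dop f) s := hf.iterate_deriv (n := 1)
  have hf'' : IteratedDifferentiableOn 2 (Dop (Dop f)) s := hf.iterate_deriv (n := 2)
  rw [thC_thC_thC_thC_apply _ _ _ _ hs hf hx, thC_quadratic_th_apply _ _ _ _ hs hf' hx,
    thC_thC_apply _ _ hs hf'' hx]
  simp only [Zt, Dop, Function.iterate_succ_apply', Function.iterate_zero_apply]
  ring

/-- The `θ`-`∂` expression of `Z̃(A)`: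
`Z̃(A) = (θ+1/2−A₂)(θ+1/2+A₂)(θ+1/2−A₃)(θ+1/2+A₃)
        − (θ+1)(2θ² + 4θ + A₁²−A₀²−A₂²−A₃²+5/2)∂ + (θ+3/2+A₀)(θ+3/2−A₀)∂²`. -/
theorem stmt_4 (A₀ A₁ A₂ A₃ : ℂ) (f : ℝ → ℂ)
    (hf : ∀ k < 4, Differentiable ℝ (deriv^[k] f)) :
    ∀ x : ℝ,
      Zt A₀ A₁ A₂ A₃ f x
        = ThC (1 / 2 - A₂) (ThC (1 / 2 + A₂) (ThC (1 / 2 - A₃) (ThC (1 / 2 + A₃) f))) x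
          - ThC 1 (fun t => 2 * Th (Th (Dop f)) t + 4 * Th (Dop f) t
              + (A₁ ^ 2 - A₀ ^ 2 - A₂ ^ 2 - A₃ ^ 2 + 5 / 2) * Dop f t) x
          + ThC (3 / 2 + A₀) (ThC (3 / 2 - A₀) (Dop (Dop f))) x := by
  intro x
  exact stmt_4_general A₀ A₁ A₂ A₃ isOpen_univ (fun k hk => (hf k hk).differentiableOn)
    (Set.mem_univ x)

end Stmt4
end

section
/- For every A = (A₀, A₁, A₂, A₃) ∈ ℂ⁴ and every four-times differentiable f : ℝ → ℂ, one has the operator identity L(A)f = [(θ + 1 − A₂)∘(θ + 1 + A₂)∘(θ + 1 − A₃)∘(θ + 1 + A₃)]f − [(θ + 3/2)∘(2θ∘θ + 6θ + (A₁² − A₀² − A₂² − A₃² + 5))∘∂]f + [(θ + 2 + A₀)∘(θ + 2 − A₀)∘∂∘∂]f, where ∂g = g', θg = x·g', and (θ + c)g = x·g' + c·g, with ∘ denoting composition of operators. -/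
namespace Stmt5

/-- The operator `L(A)` in coefficient form. -/
noncomputable def Lop (A₀ A₁ A₂ A₃ : ℂ) (f : ℝ → ℂ) (x : ℝ) : ℂ :=
  (x : ℂ) ^ 2 * ((x : ℂ) - 1) ^ 2 * deriv^[4] f x
    + (5 * ((x : ℂ) - 1) * (x : ℂ) * (2 * (x : ℂ) - 1)) * deriv^[3] f x
    + (A₀ ^ 2 * (x : ℂ) - A₀ ^ 2 - A₁ ^ 2 * (x : ℂ) - A₂ ^ 2 * (x : ℂ) ^ 2
        + A₂ ^ 2 * (x : ℂ) - A₃ ^ 2 * (x : ℂ) ^ 2 + A₃ ^ 2 * (x : ℂ)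
        + 25 * (x : ℂ) ^ 2 - 25 * (x : ℂ) + 4) * deriv^[2] f x
    + (-(3 / 2) * (-A₀ ^ 2 + A₁ ^ 2 + 2 * A₂ ^ 2 * (x : ℂ) - A₂ ^ 2
        + 2 * A₃ ^ 2 * (x : ℂ) - A₃ ^ 2 - 10 * (x : ℂ) + 5)) * deriv f x
    + ((A₂ - 1) * (A₂ + 1) * (A₃ - 1) * (A₃ + 1)) * f x

/-- The derivation `∂`. -/
noncomputable def Dop (f : ℝ → ℂ) : ℝ → ℂ := deriv f

/-- The Euler operator `θ = x∂`. -/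
noncomputable def Th (f : ℝ → ℂ) : ℝ → ℂ := fun x => (x : ℂ) * deriv f x

/-- The operator `θ + c`. -/
noncomputable def ThC (c : ℂ) (f : ℝ → ℂ) : ℝ → ℂ := fun x => (x : ℂ) * deriv f x + c * f x

/-! The commutation rule `∂ ∘ (θ + c) = (θ + c + 1) ∘ ∂` moves every derivative past the factors
`θ + c`, so products of such factors acquire the normal form `∑ₖ aₖ xᵏ ∂ᵏ`. Bringing the three
summands of the `θ`-`∂` expression into this form and comparing coefficients gives `L(A)`. -/

/-- `g` is `n` times differentiable. The last derivative need not be continuous, which makes this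
weaker than `ContDiff 𝕜 n g`. -/
def DifferentiableTimes (𝕜 : Type*) {F : Type*} [NontriviallyNormedField 𝕜]
    [NormedAddCommGroup F] [NormedSpace 𝕜 F] (n : ℕ) (g : 𝕜 → F) : Prop :=
  ∀ k < n, Differentiable 𝕜 (deriv^[k] g)

namespace DifferentiableTimes

variable {𝕜 F : Type*} [NontriviallyNormedField 𝕜] [NormedAddCommGroup F] [NormedSpace 𝕜 F]
  {m n : ℕ} {g : 𝕜 → F}

theorem mono (hg : DifferentiableTimes 𝕜 n g) (hmn : m ≤ n) : DifferentiableTimes 𝕜 m g :=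
  fun k hk => hg k (hk.trans_le hmn)

theorem differentiable (hg : DifferentiableTimes 𝕜 (n + 1) g) : Differentiable 𝕜 g :=
  hg 0 n.succ_pos

theorem deriv (hg : DifferentiableTimes 𝕜 (n + 1) g) : DifferentiableTimes 𝕜 n (deriv g) :=
  fun k hk => hg (k + 1) (Nat.succ_lt_succ hk)

theorem succ_of_deriv (hg : Differentiable 𝕜 g) (hg' : DifferentiableTimes 𝕜 n (_root_.deriv g)) :
    DifferentiableTimes 𝕜 (n + 1) g
  | 0, _ => hg
  | k + 1, hk => hg' k (Nat.lt_of_succ_lt_succ hk)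

end DifferentiableTimes

theorem th_eq_thC_zero (g : ℝ → ℂ) : Th g = ThC 0 g := by
  funext x
  simp only [Th, ThC, zero_mul, add_zero]

section EulerOperator

variable {g : ℝ → ℂ}

theorem hasDerivAt_thC (hg : DifferentiableTimes ℝ 2 g) (c : ℂ) (x : ℝ) :
    HasDerivAt (ThC c g) (ThC (c + 1) (deriv g) x) x := by
  have hid : HasDerivAt (fun t : ℝ => (t : ℂ)) 1 x := Complex.ofRealCLM.hasDerivAt
  have hθ := hid.fun_mul (hg.deriv.differentiable x).hasDerivAt
  refine (hθ.fun_add ((hg.differentiable x).hasDerivAt.const_mul c)).congr_deriv ?_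
  simp only [ThC]
  ring

theorem deriv_thC (hg : DifferentiableTimes ℝ 2 g) (c : ℂ) :
    deriv (ThC c g) = ThC (c + 1) (deriv g) :=
  funext fun x => (hasDerivAt_thC hg c x).deriv

theorem DifferentiableTimes.thC {n : ℕ} (hg : DifferentiableTimes ℝ (n + 1) g) (c : ℂ) :
    DifferentiableTimes ℝ n (ThC c g) := by
  induction n generalizing g c with
  | zero => exact fun k hk => absurd hk k.not_lt_zero
  | succ n ih =>
    have hg₂ : DifferentiableTimes ℝ 2 g := hg.mono (by lia)
    refine .succ_of_deriv (fun x => (hasDerivAt_thC hg₂ c x).differentiableAt) ?_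
    rw [deriv_thC hg₂]
    exact ih hg.deriv (c + 1)

theorem thC_add {u v : ℝ → ℂ} (hu : Differentiable ℝ u) (hv : Differentiable ℝ v)
    (c : ℂ) (x : ℝ) :
    ThC c (fun t => u t + v t) x = ThC c u x + ThC c v x := by
  simp only [ThC, deriv_fun_add (hu x) (hv x)]
  ring

theorem thC_const_mul (hg : Differentiable ℝ g) (a c : ℂ) (x : ℝ) :
    ThC c (fun t => a * g t) x = a * ThC c g x := by
  simp only [ThC, deriv_const_mul a (hg x)]
  ring

theorem thC_thC_apply (hg : DifferentiableTimes ℝ 2 g) (a b : ℂ) (x : ℝ) :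
    ThC a (ThC b g) x
      = x ^ 2 * deriv^[2] g x + (a + b + 1) * (x * deriv g x) + a * b * g x := by
  rw [ThC, deriv_thC hg]
  simp only [ThC, Function.iterate_succ_apply, Function.iterate_zero_apply]
  ring

theorem thC_thC_thC_apply (hg : DifferentiableTimes ℝ 3 g) (a b c : ℂ) (x : ℝ) :
    ThC a (ThC b (ThC c g)) x
      = x ^ 3 * deriv^[3] g x + (a + b + c + 3) * (x ^ 2 * deriv^[2] g x)
        + (a * b + a * c + b * c + a + b + c + 1) * (x * deriv g x) + a * b * c * g x := by
  have hg₂ : DifferentiableTimes ℝ 2 g := hg.mono (by lia)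
  rw [ThC, deriv_thC (hg.thC c), deriv_thC hg₂, thC_thC_apply hg.deriv, thC_thC_apply hg₂]
  simp only [Function.iterate_succ_apply, Function.iterate_zero_apply]
  ring

/-- The constants `1, 6, 7, 1` are the Stirling numbers `S(4, k)`, i.e. the coefficients of
`θ⁴ = ∑ₖ S(4, k) xᵏ ∂ᵏ`. -/
theorem thC_thC_thC_thC_apply (hg : DifferentiableTimes ℝ 4 g) (a b c d : ℂ) (x : ℝ) :
    ThC a (ThC b (ThC c (ThC d g))) x
      = x ^ 4 * deriv^[4] g x + (a + b + c + d + 6) * (x ^ 3 * deriv^[3] g x)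
        + (a * b + a * c + a * d + b * c + b * d + c * d + 3 * (a + b + c + d) + 7)
          * (x ^ 2 * deriv^[2] g x)
        + (a * b * c + a * b * d + a * c * d + b * c * d
            + a * b + a * c + a * d + b * c + b * d + c * d + a + b + c + d + 1) * (x * deriv g x)
        + a * b * c * d * g x := by
  have hg₃ : DifferentiableTimes ℝ 3 g := hg.mono (by lia)
  have hg₂ : DifferentiableTimes ℝ 2 g := hg.mono (by lia)
  rw [ThC, deriv_thC ((hg.thC d).thC c), deriv_thC (hg₃.thC d), deriv_thC hg₂,
    thC_thC_thC_apply hg.deriv, thC_thC_thC_apply hg₃]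
  simp only [Function.iterate_succ_apply, Function.iterate_zero_apply]
  ring

theorem thC_quadratic_th_apply (hg : DifferentiableTimes ℝ 3 g) (c p q r : ℂ) (x : ℝ) :
    ThC c (fun t => p * Th (Th g) t + q * Th g t + r * g t) x
      = p * (x ^ 3 * deriv^[3] g x) + ((c + 3) * p + q) * (x ^ 2 * deriv^[2] g x)
        + ((c + 1) * (p + q) + r) * (x * deriv g x) + c * r * g x := by
  have hg₂ : DifferentiableTimes ℝ 2 g := hg.mono (by lia)
  have hθ : Differentiable ℝ (ThC 0 g) := (hg.thC 0).differentiable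
  have hθθ : Differentiable ℝ (ThC 0 (ThC 0 g)) := ((hg.thC 0).thC 0).differentiable
  simp only [th_eq_thC_zero]
  rw [thC_add ((hθθ.const_mul p).fun_add (hθ.const_mul q)) (hg.differentiable.const_mul r),
    thC_add (hθθ.const_mul p) (hθ.const_mul q), thC_const_mul hθθ, thC_const_mul hθ,
    thC_const_mul hg.differentiable, thC_thC_thC_apply hg, thC_thC_apply hg₂, ThC]
  ring

end EulerOperator

/-- The `θ`-`∂` expression of `L(A)`:
`L(A) = (θ+1−A₂)(θ+1+A₂)(θ+1−A₃)(θ+1+A₃)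
        − (θ+3/2)(2θ² + 6θ + A₁²−A₀²−A₂²−A₃²+5)∂ + (θ+2+A₀)(θ+2−A₀)∂²`. -/
theorem stmt_5 (A₀ A₁ A₂ A₃ : ℂ) (f : ℝ → ℂ)
    (hf : ∀ k < 4, Differentiable ℝ (deriv^[k] f)) :
    ∀ x : ℝ,
      Lop A₀ A₁ A₂ A₃ f x
        = ThC (1 - A₂) (ThC (1 + A₂) (ThC (1 - A₃) (ThC (1 + A₃) f))) x
          - ThC (3 / 2) (fun t => 2 * Th (Th (Dop f)) t + 6 * Th (Dop f) t
              + (A₁ ^ 2 - A₀ ^ 2 - A₂ ^ 2 - A₃ ^ 2 + 5) * Dop f t) x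
          + ThC (2 + A₀) (ThC (2 - A₀) (Dop (Dop f))) x := by
  intro x
  have hf₄ : DifferentiableTimes ℝ 4 f := hf
  simp only [Dop]
  rw [thC_thC_thC_thC_apply hf₄, thC_quadratic_th_apply hf₄.deriv,
    thC_thC_apply hf₄.deriv.deriv]
  simp only [Lop, Function.iterate_succ_apply, Function.iterate_zero_apply]
  ring

end Stmt5
end

section
/- Let A = (A₀, A₁, A₂, A₃) ∈ ℂ⁴ and set α = (A₁² − A₀² − A₂² − A₃² + 5)/2. For every natural number k and every real x ≠ 0, L(A) applied to the monomial x^k gives L(A)(x^k) = p_k·x^k + q_{k−1}·x^{k−1} + r_{k−2}·x^{k−2}, where p_k = ((k+1)² − A₂²)((k+1)² − A₃²), q_{k−1} = −k(2k+1)(k² + k − 2 + α), and r_{k−2} = k(k−1)(k² − A₀²). (For k = 0 and k = 1 the coefficients of the terms with negative exponent vanish, so the identity holds with those terms omitted.) -/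
namespace Stmt6

/-- The operator `L(A)` in coefficient form. -/
noncomputable def Lop (A₀ A₁ A₂ A₃ : ℂ) (f : ℝ → ℂ) (x : ℝ) : ℂ :=
  (x : ℂ) ^ 2 * ((x : ℂ) - 1) ^ 2 * deriv^[4] f x
    + (5 * ((x : ℂ) - 1) * (x : ℂ) * (2 * (x : ℂ) - 1)) * deriv^[3] f x
    + (A₀ ^ 2 * (x : ℂ) - A₀ ^ 2 - A₁ ^ 2 * (x : ℂ) - A₂ ^ 2 * (x : ℂ) ^ 2
        + A₂ ^ 2 * (x : ℂ) - A₃ ^ 2 * (x : ℂ) ^ 2 + A₃ ^ 2 * (x : ℂ)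
        + 25 * (x : ℂ) ^ 2 - 25 * (x : ℂ) + 4) * deriv^[2] f x
    + (-(3 / 2) * (-A₀ ^ 2 + A₁ ^ 2 + 2 * A₂ ^ 2 * (x : ℂ) - A₂ ^ 2
        + 2 * A₃ ^ 2 * (x : ℂ) - A₃ ^ 2 - 10 * (x : ℂ) + 5)) * deriv f x
    + ((A₂ - 1) * (A₂ + 1) * (A₃ - 1) * (A₃ + 1)) * f x

/-!
A term `c x^m ∂^n` sends `x^s` to a multiple of `x^(s + m - n)`. Expanding the coefficients of
`L(A)` and sorting the terms by the degree `m - n` leaves only the degrees `0`, `-1` and `-2`, so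
`L(A)` is a sum of three operators, each multiplying `x^s` by a polynomial in `s` times `1`, `x⁻¹`
or `x⁻²`. This uses only `∂ x^s = s x^(s-1)`, so `s` may be any complex number: restricted to real
`x ≠ 0`, the principal branch of `x^s` is smooth, also for negative `x`.
-/

theorem deriv_ofReal_cpow_const {x : ℝ} (hx : x ≠ 0) (s : ℂ) :
    deriv (fun t : ℝ => (t : ℂ) ^ s) x = s * (x : ℂ) ^ (s - 1) := by
  obtain rfl | hs := eq_or_ne s 0
  · simp
  · exact Complex.deriv_ofReal_cpow_const hx hs

theorem iter_deriv_ofReal_cpow_const {x : ℝ} (hx : x ≠ 0) (s : ℂ) (n : ℕ) :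
    deriv^[n] (fun t : ℝ => (t : ℂ) ^ s) x
      = (∏ i ∈ Finset.range n, (s - i)) * (x : ℂ) ^ (s - n) := by
  induction n generalizing x with
  | zero => simp
  | succ n ih =>
    have ih_near : deriv^[n] (fun t : ℝ => (t : ℂ) ^ s)
        =ᶠ[nhds x] fun t : ℝ => (∏ i ∈ Finset.range n, (s - i)) * (t : ℂ) ^ (s - n) := by
      filter_upwards [isOpen_ne.mem_nhds hx] with t ht using ih ht
    rw [Function.iterate_succ_apply', ih_near.deriv_eq, deriv_const_mul_field,
      deriv_ofReal_cpow_const hx, Finset.prod_range_succ, Nat.cast_succ, sub_sub, mul_assoc]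

theorem pow_mul_iter_deriv_ofReal_cpow_const {x : ℝ} (hx : x ≠ 0) (s : ℂ) (m d : ℕ) :
    (x : ℂ) ^ m * deriv^[m + d] (fun t : ℝ => (t : ℂ) ^ s) x
      = (∏ i ∈ Finset.range (m + d), (s - i)) * (x : ℂ) ^ (s - d) := by
  have hx' : (x : ℂ) ≠ 0 := Complex.ofReal_ne_zero.mpr hx
  have pow_mul_cpow : (x : ℂ) ^ m * (x : ℂ) ^ (s - (m + d : ℕ)) = (x : ℂ) ^ (s - d) := by
    rw [← Complex.cpow_natCast, ← Complex.cpow_add _ _ hx']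
    congr 1
    push_cast
    ring
  rw [iter_deriv_ofReal_cpow_const hx, mul_left_comm, pow_mul_cpow]

/-- The part of `L(A)` that is homogeneous of degree `0`: the terms `x^n ∂^n`. -/
noncomputable def degZeroPart (A₂ A₃ : ℂ) (f : ℝ → ℂ) (x : ℝ) : ℂ :=
  (x : ℂ) ^ 4 * deriv^[4] f x + 10 * ((x : ℂ) ^ 3 * deriv^[3] f x)
    + (25 - A₂ ^ 2 - A₃ ^ 2) * ((x : ℂ) ^ 2 * deriv^[2] f x)
    + 3 * (5 - A₂ ^ 2 - A₃ ^ 2) * ((x : ℂ) ^ 1 * deriv^[1] f x)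
    + (A₂ ^ 2 - 1) * (A₃ ^ 2 - 1) * f x

/-- The part of `L(A)` that is homogeneous of degree `-1`: the terms `x^n ∂^(n+1)`. It depends on
`A` only through `α = (A₁² − A₀² − A₂² − A₃² + 5) / 2`. -/
noncomputable def degNegOnePart (α : ℂ) (f : ℝ → ℂ) (x : ℝ) : ℂ :=
  -(2 * ((x : ℂ) ^ 3 * deriv^[4] f x) + 15 * ((x : ℂ) ^ 2 * deriv^[3] f x)
    + (20 + 2 * α) * ((x : ℂ) ^ 1 * deriv^[2] f x) + 3 * α * deriv^[1] f x)

/-- The part of `L(A)` that is homogeneous of degree `-2`: the terms `x^n ∂^(n+2)`. -/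
noncomputable def degNegTwoPart (A₀ : ℂ) (f : ℝ → ℂ) (x : ℝ) : ℂ :=
  (x : ℂ) ^ 2 * deriv^[4] f x + 5 * ((x : ℂ) ^ 1 * deriv^[3] f x)
    + (4 - A₀ ^ 2) * deriv^[2] f x

theorem Lop_eq_add_homogeneous_parts (A₀ A₁ A₂ A₃ : ℂ) (f : ℝ → ℂ) (x : ℝ) :
    Lop A₀ A₁ A₂ A₃ f x
      = degZeroPart A₂ A₃ f x
        + degNegOnePart ((A₁ ^ 2 - A₀ ^ 2 - A₂ ^ 2 - A₃ ^ 2 + 5) / 2) f x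
        + degNegTwoPart A₀ f x := by
  simp only [Lop, degZeroPart, degNegOnePart, degNegTwoPart, Function.iterate_one]
  ring

theorem degZeroPart_cpow (A₂ A₃ s : ℂ) {x : ℝ} (hx : x ≠ 0) :
    degZeroPart A₂ A₃ (fun t : ℝ => (t : ℂ) ^ s) x
      = ((s + 1) ^ 2 - A₂ ^ 2) * ((s + 1) ^ 2 - A₃ ^ 2) * (x : ℂ) ^ s := by
  have euler (n : ℕ) := pow_mul_iter_deriv_ofReal_cpow_const hx s n 0
  simp only [add_zero, Nat.cast_zero, sub_zero] at euler
  simp only [degZeroPart, euler, Finset.prod_range_succ, Finset.prod_range_zero]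
  push_cast
  ring

theorem degNegOnePart_cpow (α s : ℂ) {x : ℝ} (hx : x ≠ 0) :
    degNegOnePart α (fun t : ℝ => (t : ℂ) ^ s) x
      = -s * (2 * s + 1) * (s ^ 2 + s - 2 + α) * (x : ℂ) ^ (s - 1) := by
  have euler (n : ℕ) := pow_mul_iter_deriv_ofReal_cpow_const hx s n 1
  simp only [degNegOnePart, euler 3, euler 2, euler 1, iter_deriv_ofReal_cpow_const hx s 1,
    Finset.prod_range_succ, Finset.prod_range_zero]
  push_cast
  ring

theorem degNegTwoPart_cpow (A₀ s : ℂ) {x : ℝ} (hx : x ≠ 0) :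
    degNegTwoPart A₀ (fun t : ℝ => (t : ℂ) ^ s) x
      = s * (s - 1) * (s ^ 2 - A₀ ^ 2) * (x : ℂ) ^ (s - 2) := by
  have euler (n : ℕ) := pow_mul_iter_deriv_ofReal_cpow_const hx s n 2
  simp only [degNegTwoPart, euler 2, euler 1, iter_deriv_ofReal_cpow_const hx s 2,
    Finset.prod_range_succ, Finset.prod_range_zero]
  push_cast
  ring

theorem stmt_6_general (A₀ A₁ A₂ A₃ s : ℂ) {x : ℝ} (hx : x ≠ 0) :
    Lop A₀ A₁ A₂ A₃ (fun t : ℝ => (t : ℂ) ^ s) x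
      = ((s + 1) ^ 2 - A₂ ^ 2) * ((s + 1) ^ 2 - A₃ ^ 2) * (x : ℂ) ^ s
        + (-s * (2 * s + 1)
            * (s ^ 2 + s - 2 + (A₁ ^ 2 - A₀ ^ 2 - A₂ ^ 2 - A₃ ^ 2 + 5) / 2))
            * (x : ℂ) ^ (s - 1)
        + (s * (s - 1) * (s ^ 2 - A₀ ^ 2)) * (x : ℂ) ^ (s - 2) := by
  rw [Lop_eq_add_homogeneous_parts, degZeroPart_cpow _ _ _ hx, degNegOnePart_cpow _ _ hx,
    degNegTwoPart_cpow _ _ hx]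

/-- `L(A)(x^k) = p_k x^k + q_{k−1} x^{k−1} + r_{k−2} x^{k−2}` with
`p_k = ((k+1)²−A₂²)((k+1)²−A₃²)`, `q_{k−1} = −k(2k+1)(k²+k−2+α)`,
`r_{k−2} = k(k−1)(k²−A₀²)`, where `α = (A₁²−A₀²−A₂²−A₃²+5)/2`. -/
theorem stmt_6 (A₀ A₁ A₂ A₃ : ℂ) (k : ℕ) (x : ℝ) (hx : x ≠ 0) :
    Lop A₀ A₁ A₂ A₃ (fun t : ℝ => (t : ℂ) ^ k) x
      = (((k : ℂ) + 1) ^ 2 - A₂ ^ 2) * (((k : ℂ) + 1) ^ 2 - A₃ ^ 2) * (x : ℂ) ^ (k : ℤ)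
        + (-(k : ℂ) * (2 * (k : ℂ) + 1)
            * ((k : ℂ) ^ 2 + (k : ℂ) - 2 + (A₁ ^ 2 - A₀ ^ 2 - A₂ ^ 2 - A₃ ^ 2 + 5) / 2))
            * (x : ℂ) ^ ((k : ℤ) - 1)
        + ((k : ℂ) * ((k : ℂ) - 1) * ((k : ℂ) ^ 2 - A₀ ^ 2)) * (x : ℂ) ^ ((k : ℤ) - 2) := by
  simpa [← Complex.cpow_intCast] using stmt_6_general A₀ A₁ A₂ A₃ k hx

end Stmt6
end

section
/- Let A = (A₀, A₁, A₂, A₃) ∈ ℂ⁴ and suppose A₂ = m + 1 or A₂ = −(m + 1) for some nonnegative integer m (i.e., A₂ is a nonzero integer with |A₂| = m + 1). Then there exists a nonzero polynomial u ∈ ℂ[x] of degree at most m such that L(A)u = 0 identically (as a function of x ∈ ℝ). -/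
namespace Stmt7

/-- The operator `L(A)` in coefficient form. -/
noncomputable def Lop (A₀ A₁ A₂ A₃ : ℂ) (f : ℝ → ℂ) (x : ℝ) : ℂ :=
  (x : ℂ) ^ 2 * ((x : ℂ) - 1) ^ 2 * deriv^[4] f x
    + (5 * ((x : ℂ) - 1) * (x : ℂ) * (2 * (x : ℂ) - 1)) * deriv^[3] f x
    + (A₀ ^ 2 * (x : ℂ) - A₀ ^ 2 - A₁ ^ 2 * (x : ℂ) - A₂ ^ 2 * (x : ℂ) ^ 2
        + A₂ ^ 2 * (x : ℂ) - A₃ ^ 2 * (x : ℂ) ^ 2 + A₃ ^ 2 * (x : ℂ)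
        + 25 * (x : ℂ) ^ 2 - 25 * (x : ℂ) + 4) * deriv^[2] f x
    + (-(3 / 2) * (-A₀ ^ 2 + A₁ ^ 2 + 2 * A₂ ^ 2 * (x : ℂ) - A₂ ^ 2
        + 2 * A₃ ^ 2 * (x : ℂ) - A₃ ^ 2 - 10 * (x : ℂ) + 5)) * deriv f x
    + ((A₂ - 1) * (A₂ + 1) * (A₃ - 1) * (A₃ + 1)) * f x

/-!
On coefficients, `L(A)` is a three-term recurrence: the `n`-th coefficient of `L(A)p` involves only
the coefficients of `p` at `n`, `n + 1` and `n + 2`, and the first of them is multiplied by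
`((n + 1)² - A₂²) * ((n + 1)² - A₃²)`. When `A₂² = (m + 1)²` this factor vanishes at `n = m`, so
`L(A)` maps the `(m + 1)`-dimensional space of polynomials of degree at most `m` into the
`m`-dimensional space of polynomials of degree less than `m`, and hence has a kernel there.
-/

section Polynomials

open Polynomial

theorem exists_mem_ne_zero_map_eq_zero_of_finrank_lt {K E F : Type*} [DivisionRing K]
    [AddCommGroup E] [Module K E] [AddCommGroup F] [Module K F] (T : E →ₗ[K] F)
    {V : Submodule K E} {W : Submodule K F} [FiniteDimensional K W]
    (hT : ∀ v ∈ V, T v ∈ W) (hVW : Module.finrank K W < Module.finrank K V) :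
    ∃ v ∈ V, v ≠ 0 ∧ T v = 0 := by
  have : FiniteDimensional K V := .of_finrank_pos (Nat.zero_lt_of_lt hVW)
  have hker : LinearMap.ker (T.restrict hT) ≠ ⊥ := LinearMap.ker_ne_bot_of_finrank_lt hVW
  obtain ⟨v, hv, hv₀⟩ := Submodule.exists_mem_ne_zero_of_ne_bot hker
  exact ⟨v, v.2, by simpa using hv₀, congrArg Subtype.val (LinearMap.mem_ker.mp hv)⟩

theorem finrank_degreeLT (R : Type*) [CommRing R] [Nontrivial R] (n : ℕ) :
    Module.finrank R (degreeLT R n) = n := by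
  rw [Module.finrank_eq_card_basis (degreeLT.basis R n), Fintype.card_fin]

theorem coeff_X_pow_mul_iterate_derivative {R : Type*} [CommRing R] (p : R[X]) (k n : ℕ) :
    (X ^ k * derivative^[k] p).coeff n = (descPochhammer R k).eval (n : R) * p.coeff n := by
  rw [coeff_X_pow_mul', coeff_iterate_derivative, descPochhammer_eval_eq_descFactorial,
    nsmul_eq_mul]
  split_ifs with hkn
  · rw [Nat.sub_add_cancel hkn]
  · rw [Nat.descFactorial_of_lt (not_le.mp hkn), Nat.cast_zero, zero_mul]

theorem iterate_deriv_eval_ofReal (p : ℂ[X]) (k : ℕ) :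
    deriv^[k] (fun t : ℝ => p.eval (t : ℂ)) = fun t : ℝ => (derivative^[k] p).eval (t : ℂ) := by
  induction k generalizing p with
  | zero => rfl
  | succ k ih =>
    have hderiv : deriv (fun t : ℝ => p.eval (t : ℂ)) =
        fun t : ℝ => (derivative p).eval (t : ℂ) :=
      funext fun t => (p.hasDerivAt (t : ℂ)).comp_ofReal.deriv
    rw [Function.iterate_succ_apply, Function.iterate_succ_apply, hderiv, ih]

section Field

variable {K : Type*} [Field K]

/-- The operator `L(A)` acting on polynomials over a field `K` in place of `ℂ`. In characteristic
`2` the constant `3 / 2` takes the junk value `0`. -/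
noncomputable def polyLop (A₀ A₁ A₂ A₃ : K) : K[X] →ₗ[K] K[X] :=
  LinearMap.mulLeft K (X ^ 2 * (X - 1) ^ 2) ∘ₗ derivative ^ 4
    + LinearMap.mulLeft K (5 * (X - 1) * X * (2 * X - 1)) ∘ₗ derivative ^ 3
    + LinearMap.mulLeft K (C (A₀ ^ 2) * X - C (A₀ ^ 2) - C (A₁ ^ 2) * X - C (A₂ ^ 2) * X ^ 2
        + C (A₂ ^ 2) * X - C (A₃ ^ 2) * X ^ 2 + C (A₃ ^ 2) * X
        + 25 * X ^ 2 - 25 * X + 4) ∘ₗ derivative ^ 2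
    + LinearMap.mulLeft K (-C (3 / 2) * (-C (A₀ ^ 2) + C (A₁ ^ 2) + 2 * C (A₂ ^ 2) * X
        - C (A₂ ^ 2) + 2 * C (A₃ ^ 2) * X - C (A₃ ^ 2) - 10 * X + 5)) ∘ₗ derivative
    + LinearMap.mulLeft K (C ((A₂ - 1) * (A₂ + 1) * (A₃ - 1) * (A₃ + 1)))

theorem polyLop_apply (A₀ A₁ A₂ A₃ : K) (p : K[X]) :
    polyLop A₀ A₁ A₂ A₃ p =
      X ^ 2 * (X - 1) ^ 2 * derivative^[4] p
        + 5 * (X - 1) * X * (2 * X - 1) * derivative^[3] p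
        + (C (A₀ ^ 2) * X - C (A₀ ^ 2) - C (A₁ ^ 2) * X - C (A₂ ^ 2) * X ^ 2
            + C (A₂ ^ 2) * X - C (A₃ ^ 2) * X ^ 2 + C (A₃ ^ 2) * X
            + 25 * X ^ 2 - 25 * X + 4) * derivative^[2] p
        + -C (3 / 2) * (-C (A₀ ^ 2) + C (A₁ ^ 2) + 2 * C (A₂ ^ 2) * X
            - C (A₂ ^ 2) + 2 * C (A₃ ^ 2) * X - C (A₃ ^ 2) - 10 * X + 5) * derivative p
        + C ((A₂ - 1) * (A₂ + 1) * (A₃ - 1) * (A₃ + 1)) * p := by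
  simp only [polyLop, LinearMap.add_apply, LinearMap.comp_apply, LinearMap.mulLeft_apply,
    Module.End.pow_apply]

variable [CharZero K]

/-- Each `X ^ k * derivative^[k]` is diagonal on monomials, so the terms are grouped by the number
of derivatives in excess of the power of `X`. -/
theorem polyLop_eq_sum_diagonal (A₀ A₁ A₂ A₃ : K) (p : K[X]) :
    polyLop A₀ A₁ A₂ A₃ p =
      (X ^ 4 * derivative^[4] p + C 10 * (X ^ 3 * derivative^[3] p)
        + C (25 - A₂ ^ 2 - A₃ ^ 2) * (X ^ 2 * derivative^[2] p)
        + C (15 - 3 * A₂ ^ 2 - 3 * A₃ ^ 2) * (X ^ 1 * derivative^[1] p)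
        + C ((A₂ ^ 2 - 1) * (A₃ ^ 2 - 1)) * p)
      + (C (-2) * (X ^ 3 * derivative^[3] (derivative p))
        + C (-15) * (X ^ 2 * derivative^[2] (derivative p))
        + C (A₀ ^ 2 - A₁ ^ 2 + A₂ ^ 2 + A₃ ^ 2 - 25) * (X ^ 1 * derivative^[1] (derivative p))
        + C (3 / 2 * (A₀ ^ 2 - A₁ ^ 2 + A₂ ^ 2 + A₃ ^ 2 - 5)) * derivative p)
      + (X ^ 2 * derivative^[2] (derivative^[2] p)
        + C 5 * (X ^ 1 * derivative^[1] (derivative^[2] p))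
        + C (4 - A₀ ^ 2) * derivative^[2] p) := by
  have two_mul_C_three_halves : (2 : K[X]) * C (3 / 2) = 3 := by
    rw [← C_ofNat, ← C_mul, mul_div_cancel₀ _ two_ne_zero, C_ofNat]
  rw [polyLop_apply]
  simp only [Function.iterate_succ_apply, Function.iterate_zero_apply, map_add, map_sub, map_mul,
    map_pow, map_neg, map_one, C_ofNat]
  linear_combination (5 - C A₂ ^ 2 - C A₃ ^ 2) * X * derivative p * two_mul_C_three_halves

theorem coeff_polyLop (A₀ A₁ A₂ A₃ : K) (p : K[X]) (n : ℕ) :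
    (polyLop A₀ A₁ A₂ A₃ p).coeff n =
      ((n + 1) ^ 2 - A₂ ^ 2) * ((n + 1) ^ 2 - A₃ ^ 2) * p.coeff n
        + (n + 1) * (n + 3 / 2) * (A₀ ^ 2 - A₁ ^ 2 + A₂ ^ 2 + A₃ ^ 2 - (n + 1) ^ 2 - (n + 2) ^ 2)
          * p.coeff (n + 1)
        + (n + 1) * (n + 2) * ((n + 2) ^ 2 - A₀ ^ 2) * p.coeff (n + 2) := by
  have coeff_derivative_two : (derivative^[2] p).coeff n = (n + 1) * (n + 2) * p.coeff (n + 2) := by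
    simp only [Function.iterate_succ_apply, Function.iterate_zero_apply, coeff_derivative]
    push_cast
    ring
  simp only [polyLop_eq_sum_diagonal, coeff_add, coeff_C_mul, coeff_X_pow_mul_iterate_derivative,
    descPochhammer_succ_eval, descPochhammer_zero, eval_one, coeff_derivative_two,
    coeff_derivative]
  push_cast
  ring

theorem polyLop_mem_degreeLT {A₂ : K} {m : ℕ} (hA₂ : A₂ ^ 2 = (m + 1) ^ 2) (A₀ A₁ A₃ : K) {p : K[X]}
    (hp : p ∈ degreeLT K (m + 1)) : polyLop A₀ A₁ A₂ A₃ p ∈ degreeLT K m := by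
  rw [mem_degreeLT, degree_lt_iff_coeff_zero] at hp ⊢
  intro n hmn
  rw [coeff_polyLop, hp (n + 1) (by lia), hp (n + 2) (by lia)]
  rcases hmn.eq_or_lt with rfl | hmn
  · rw [hA₂]
    ring
  · rw [hp n hmn]
    ring

theorem exists_polyLop_eq_zero {A₂ : K} {m : ℕ} (hA₂ : A₂ ^ 2 = (m + 1) ^ 2) (A₀ A₁ A₃ : K) :
    ∃ u : K[X], u ≠ 0 ∧ u.natDegree ≤ m ∧ polyLop A₀ A₁ A₂ A₃ u = 0 := by
  have : FiniteDimensional K (degreeLT K m) :=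
    (degreeLT.basis K m).finiteDimensional_of_finite
  obtain ⟨u, hu_mem, hu_ne, hu⟩ :=
    exists_mem_ne_zero_map_eq_zero_of_finrank_lt (polyLop A₀ A₁ A₂ A₃)
      (fun _ => polyLop_mem_degreeLT hA₂ A₀ A₁ A₃)
      (by simp only [finrank_degreeLT, Nat.lt_succ_self])
  have hu_deg : u.natDegree < m + 1 :=
    (natDegree_lt_iff_degree_lt hu_ne).mpr (mem_degreeLT.mp hu_mem)
  exact ⟨u, hu_ne, Nat.le_of_lt_succ hu_deg, hu⟩

end Field

theorem Lop_eval_ofReal (A₀ A₁ A₂ A₃ : ℂ) (u : ℂ[X]) (x : ℝ) :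
    Lop A₀ A₁ A₂ A₃ (fun t : ℝ => u.eval (t : ℂ)) x =
      (polyLop A₀ A₁ A₂ A₃ u).eval (x : ℂ) := by
  have hderiv : deriv (fun t : ℝ => u.eval (t : ℂ)) = fun t : ℝ => (derivative u).eval (t : ℂ) :=
    iterate_deriv_eval_ofReal u 1
  simp only [Lop, polyLop_apply, iterate_deriv_eval_ofReal, hderiv, eval_add, eval_sub, eval_mul,
    eval_neg, eval_pow, eval_X, eval_C, eval_one, eval_ofNat]

end Polynomials

/-- If `A₂ = ±(m+1)` is a nonzero integer, then `L(A)u = 0` has a nonzero polynomial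
solution of degree at most `m`. -/
theorem stmt_7 (A₀ A₁ A₂ A₃ : ℂ) (m : ℕ)
    (hA₂ : A₂ = (m : ℂ) + 1 ∨ A₂ = -((m : ℂ) + 1)) :
    ∃ u : Polynomial ℂ, u ≠ 0 ∧ u.natDegree ≤ m ∧
      ∀ x : ℝ, Lop A₀ A₁ A₂ A₃ (fun t : ℝ => u.eval (t : ℂ)) x = 0 := by
  have hA₂_sq : A₂ ^ 2 = ((m : ℂ) + 1) ^ 2 := sq_eq_sq_iff_eq_or_eq_neg.mpr hA₂
  obtain ⟨u, hu_ne, hu_deg, hu⟩ := exists_polyLop_eq_zero hA₂_sq A₀ A₁ A₃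
  refine ⟨u, hu_ne, hu_deg, fun x => ?_⟩
  rw [Lop_eval_ofReal, hu, Polynomial.eval_zero]

end Stmt7
end

section
/- Let A = (A₀, A₁, A₂, A₃) ∈ ℂ⁴ and let f : (1, ∞) → ℂ be three-times differentiable. Define g(x) := x^{−A₀−A₂}·(x−1)^{−A₁−A₂}·f(x), using complex powers of the positive reals x and x−1. Then for every x > 1, x^{A₀+A₂}·(x−1)^{A₁+A₂}·(Q(A)g)(x) = (R(A)f)(x); that is, R(A) = Ad(x^{A₀+A₂}(x−1)^{A₁+A₂})Q(A). -/
namespace Stmt8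

/-- `f` is `n`-times differentiable on `U`. -/
def IterDiffOn (n : ℕ) (f : ℝ → ℂ) (U : Set ℝ) : Prop :=
  ∀ k < n, ∀ x ∈ U, DifferentiableAt ℝ (deriv^[k] f) x

/-- The third-order operator `Q(A)`. -/
noncomputable def Qop (A₀ A₁ A₂ A₃ : ℂ) (g : ℝ → ℂ) (x : ℝ) : ℂ :=
  (x : ℂ) ^ 2 * ((x : ℂ) - 1) ^ 2 * deriv^[3] g x
    + ((2 * A₂ + 3) * ((x : ℂ) - 1) * (x : ℂ) * (2 * (x : ℂ) - 1)) * deriv^[2] g x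
    + (A₀ ^ 2 * (x : ℂ) - A₀ ^ 2 - A₁ ^ 2 * (x : ℂ) + 5 * A₂ ^ 2 * (x : ℂ) ^ 2
        - 5 * A₂ ^ 2 * (x : ℂ) + A₂ ^ 2 + 12 * A₂ * (x : ℂ) ^ 2 - 12 * A₂ * (x : ℂ)
        + 2 * A₂ - A₃ ^ 2 * (x : ℂ) ^ 2 + A₃ ^ 2 * (x : ℂ) + 7 * (x : ℂ) ^ 2
        - 7 * (x : ℂ) + 1) * deriv g x
    + ((1 / 2) * (2 * A₂ + 1) * (A₀ ^ 2 - A₁ ^ 2 + 2 * A₂ ^ 2 * (x : ℂ) - A₂ ^ 2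
        + 4 * A₂ * (x : ℂ) - 2 * A₂ - 2 * A₃ ^ 2 * (x : ℂ) + A₃ ^ 2
        + 2 * (x : ℂ) - 1)) * g x

/-- The third-order operator `R(A)`. -/
noncomputable def Rop (A₀ A₁ A₂ A₃ : ℂ) (f : ℝ → ℂ) (x : ℝ) : ℂ :=
  (x : ℂ) ^ 2 * ((x : ℂ) - 1) ^ 2 * deriv^[3] f x
    + ((1 - (x : ℂ)) * (x : ℂ) * (3 * A₀ * (x : ℂ) - 3 * A₀ + 3 * A₁ * (x : ℂ)
        + 2 * A₂ * (x : ℂ) - A₂ - 6 * (x : ℂ) + 3)) * deriv^[2] f x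
    + (3 * A₀ ^ 2 * (x : ℂ) ^ 2 - 5 * A₀ ^ 2 * (x : ℂ) + 2 * A₀ ^ 2
        + 6 * A₀ * A₁ * (x : ℂ) ^ 2 - 6 * A₀ * A₁ * (x : ℂ)
        + 4 * A₀ * A₂ * (x : ℂ) ^ 2 - 6 * A₀ * A₂ * (x : ℂ) + 2 * A₀ * A₂
        - 9 * A₀ * (x : ℂ) ^ 2 + 12 * A₀ * (x : ℂ) - 3 * A₀
        + 3 * A₁ ^ 2 * (x : ℂ) ^ 2 - A₁ ^ 2 * (x : ℂ)
        + 4 * A₁ * A₂ * (x : ℂ) ^ 2 - 2 * A₁ * A₂ * (x : ℂ)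
        - 9 * A₁ * (x : ℂ) ^ 2 + 6 * A₁ * (x : ℂ)
        + A₂ ^ 2 * (x : ℂ) ^ 2 - A₂ ^ 2 * (x : ℂ) - 6 * A₂ * (x : ℂ) ^ 2
        + 6 * A₂ * (x : ℂ) - A₂ - A₃ ^ 2 * (x : ℂ) ^ 2 + A₃ ^ 2 * (x : ℂ)
        + 7 * (x : ℂ) ^ 2 - 7 * (x : ℂ) + 1) * deriv f x
    + (-(1 / 2) * (2 * A₀ * (x : ℂ) - 2 * A₀ + 2 * A₁ * (x : ℂ) - 2 * (x : ℂ) + 1)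
        * (A₀ + A₁ + A₂ - A₃ - 1) * (A₀ + A₁ + A₂ + A₃ - 1)) * f x

/-! If `du/dx = p u`, then `u⁻¹ ∘ d/dx ∘ u = d/dx + p`, so conjugating a differential operator by
`u` replaces `d/dx` by `d/dx + p`. For `u = x^a (x - 1)^b` the logarithmic derivative is
`p = a / x + b / (x - 1)`. With `a = -A₀ - A₂` and `b = -A₁ - A₂`, expanding the powers
`(d/dx + p)^k` for `k ≤ 3` turns the coefficients of `Q(A)` into those of `R(A)`. -/

open Set

section LogarithmicDerivative

variable {𝕜 𝔸 : Type*} [NontriviallyNormedField 𝕜] [NormedCommRing 𝔸] [NormedAlgebra 𝕜 𝔸]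

lemma hasDerivAt_mul_of_logDeriv {u v : 𝕜 → 𝔸} {p q : 𝔸} {x : 𝕜}
    (hu : HasDerivAt u (p * u x) x) (hv : HasDerivAt v (q * v x) x) :
    HasDerivAt (u * v) ((p + q) * (u * v) x) x := by
  refine (hu.mul hv).congr_deriv ?_
  simp only [Pi.mul_apply]
  ring

variable {U : Set 𝕜} {u p p₁ p₂ f f₁ f₂ f₃ : 𝕜 → 𝔸}

lemma eqOn_deriv_of_eqOn_mul (hU : IsOpen U) (hu : ∀ x ∈ U, HasDerivAt u (p x * u x) x)
    (hf : ∀ x ∈ U, HasDerivAt f (f₁ x) x) {g : 𝕜 → 𝔸} (hg : EqOn g (u * f) U) :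
    EqOn (deriv g) (u * (f₁ + p * f)) U := by
  intro x hx
  rw [(hg.eventuallyEq_of_mem (hU.mem_nhds hx)).deriv_eq, ((hu x hx).mul (hf x hx)).deriv]
  simp only [Pi.mul_apply, Pi.add_apply]
  ring

lemma eqOn_deriv_iterate_two_mul (hU : IsOpen U) (hu : ∀ x ∈ U, HasDerivAt u (p x * u x) x)
    (hp : ∀ x ∈ U, HasDerivAt p (p₁ x) x) (hf : ∀ x ∈ U, HasDerivAt f (f₁ x) x)
    (hf₁ : ∀ x ∈ U, HasDerivAt f₁ (f₂ x) x) :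
    EqOn (deriv^[2] (u * f)) (u * (f₂ + 2 * p * f₁ + (p₁ + p ^ 2) * f)) U := by
  have hDp : ∀ x ∈ U, HasDerivAt (f₁ + p * f) (f₂ x + (p₁ x * f x + p x * f₁ x)) x :=
    fun x hx ↦ (hf₁ x hx).add ((hp x hx).mul (hf x hx))
  have hderiv : EqOn (deriv (u * f)) (u * (f₁ + p * f)) U :=
    eqOn_deriv_of_eqOn_mul hU hu hf (eqOn_refl _ _)
  refine (eqOn_deriv_of_eqOn_mul hU hu hDp hderiv).trans fun x _ ↦ ?_
  simp only [Pi.mul_apply, Pi.add_apply, Pi.pow_apply, Pi.ofNat_apply]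
  ring

lemma eqOn_deriv_iterate_three_mul (hU : IsOpen U) (hu : ∀ x ∈ U, HasDerivAt u (p x * u x) x)
    (hp : ∀ x ∈ U, HasDerivAt p (p₁ x) x) (hp₁ : ∀ x ∈ U, HasDerivAt p₁ (p₂ x) x)
    (hf : ∀ x ∈ U, HasDerivAt f (f₁ x) x) (hf₁ : ∀ x ∈ U, HasDerivAt f₁ (f₂ x) x)
    (hf₂ : ∀ x ∈ U, HasDerivAt f₂ (f₃ x) x) :
    EqOn (deriv^[3] (u * f))
      (u * (f₃ + 3 * p * f₂ + 3 * (p₁ + p ^ 2) * f₁ + (p₂ + 3 * p * p₁ + p ^ 3) * f)) U := by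
  have hDp_sq : ∀ x ∈ U, HasDerivAt (f₂ + 2 * p * f₁ + (p₁ + p ^ 2) * f)
      (f₃ x + (2 * p₁ x * f₁ x + 2 * p x * f₂ x)
        + ((p₂ x + 2 * p x * p₁ x) * f x + (p₁ x + p x ^ 2) * f₁ x)) x := by
    intro x hx
    have hpsq : HasDerivAt (p ^ 2) (2 * p x * p₁ x) x := by
      simpa using (hp x hx).pow 2
    exact ((hf₂ x hx).add (((hp x hx).const_mul 2).mul (hf₁ x hx))).add
      (((hp₁ x hx).add hpsq).mul (hf x hx))
  have hderiv := eqOn_deriv_iterate_two_mul hU hu hp hf hf₁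
  rw [Function.iterate_succ']
  refine (eqOn_deriv_of_eqOn_mul hU hu hDp_sq hderiv).trans fun x _ ↦ ?_
  simp only [Pi.mul_apply, Pi.add_apply, Pi.pow_apply, Pi.ofNat_apply]
  ring

end LogarithmicDerivative

lemma IterDiffOn.mono {m n : ℕ} {f : ℝ → ℂ} {U : Set ℝ} (hf : IterDiffOn n f U) (hmn : m ≤ n) :
    IterDiffOn m f U :=
  fun k hk ↦ hf k (hk.trans_le hmn)

lemma IterDiffOn.hasDerivAt_iterate {n k : ℕ} {f : ℝ → ℂ} {U : Set ℝ} (hf : IterDiffOn n f U)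
    (hk : k < n) : ∀ x ∈ U, HasDerivAt (deriv^[k] f) (deriv^[k + 1] f x) x := by
  intro x hx
  rw [Function.iterate_succ_apply']
  exact (hf k hk x hx).hasDerivAt

lemma hasDerivAt_ofReal_sub_cpow {x : ℝ} {s : ℂ} (hx : (x : ℂ) - s ∈ Complex.slitPlane) (c : ℂ) :
    HasDerivAt (fun t : ℝ ↦ ((t : ℂ) - s) ^ c) (c / (x - s) * ((x : ℂ) - s) ^ c) x := by
  refine (((hasDerivAt_id (x : ℂ)).sub_const s).cpow_const hx).comp_ofReal.congr_deriv ?_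
  rw [id_eq, Complex.cpow_sub _ _ (Complex.slitPlane_ne_zero hx), Complex.cpow_one]
  ring

lemma hasDerivAt_div_ofReal_sub_pow {x : ℝ} {s : ℂ} (hx : (x : ℂ) - s ≠ 0) (c : ℂ) (n : ℕ) :
    HasDerivAt (fun t : ℝ ↦ c / ((t : ℂ) - s) ^ n) (-n * (c / ((x : ℂ) - s) ^ (n + 1))) x := by
  have hpow := ((hasDerivAt_id (x : ℂ)).sub_const s).fun_pow n
  refine ((hpow.fun_inv (pow_ne_zero n hx)).const_mul c).comp_ofReal.congr_deriv ?_
  cases n with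
  | zero => simp
  | succ m =>
    simp only [id_eq, Nat.add_sub_cancel]
    field_simp
    ring

/-- The conjugating factor `x^a (x - 1)^b`. -/
noncomputable def weight (a b : ℂ) (x : ℝ) : ℂ :=
  (x : ℂ) ^ a * ((x : ℂ) - 1) ^ b

/-- The sum `a / x^n + b / (x - 1)^n`. For `n = 1` it is the logarithmic derivative of
`weight a b`, and its derivatives are multiples of the sums for larger `n`. -/
noncomputable def poleSum (a b : ℂ) (n : ℕ) (x : ℝ) : ℂ :=
  a / (x : ℂ) ^ n + b / ((x : ℂ) - 1) ^ n

lemma ofReal_sub_one_ne_zero {x : ℝ} (hx : x ≠ 1) : (x : ℂ) - 1 ≠ 0 :=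
  sub_ne_zero.mpr (Complex.ofReal_ne_one.mpr hx)

section Weight

variable (a b : ℂ) {x : ℝ}

lemma weight_mul_weight_neg (hx₀ : x ≠ 0) (hx₁ : x ≠ 1) :
    weight a b x * weight (-a) (-b) x = 1 := by
  rw [weight, weight, mul_mul_mul_comm, ← Complex.cpow_add _ _ (Complex.ofReal_ne_zero.mpr hx₀),
    ← Complex.cpow_add _ _ (ofReal_sub_one_ne_zero hx₁), add_neg_cancel, add_neg_cancel,
    Complex.cpow_zero, Complex.cpow_zero, one_mul]

lemma hasDerivAt_weight (hx : 1 < x) :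
    HasDerivAt (weight a b) (poleSum a b 1 x * weight a b x) x := by
  have hslit₀ : (x : ℂ) - 0 ∈ Complex.slitPlane := Or.inl (by simpa using zero_lt_one.trans hx)
  have hslit₁ : (x : ℂ) - 1 ∈ Complex.slitPlane := Or.inl (by simpa using hx)
  have h₀ := hasDerivAt_ofReal_sub_cpow hslit₀ a
  simp only [sub_zero] at h₀
  refine (hasDerivAt_mul_of_logDeriv h₀ (hasDerivAt_ofReal_sub_cpow hslit₁ b)).congr_deriv ?_
  rw [poleSum, pow_one, pow_one]
  rfl

lemma hasDerivAt_poleSum (hx₀ : x ≠ 0) (hx₁ : x ≠ 1) (n : ℕ) :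
    HasDerivAt (poleSum a b n) (-n * poleSum a b (n + 1) x) x := by
  have h₀ := hasDerivAt_div_ofReal_sub_pow (s := 0) (by simpa using hx₀) a n
  simp only [sub_zero] at h₀
  exact (h₀.add (hasDerivAt_div_ofReal_sub_pow (ofReal_sub_one_ne_zero hx₁) b n)).congr_deriv
    (mul_add _ _ _).symm

lemma hasDerivAt_poleSum_one (hx : 1 < x) :
    HasDerivAt (poleSum a b 1) ((-poleSum a b 2) x) x := by
  simpa using hasDerivAt_poleSum a b (zero_lt_one.trans hx).ne' hx.ne' 1

lemma hasDerivAt_neg_poleSum_two (hx : 1 < x) :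
    HasDerivAt (-poleSum a b 2) ((2 * poleSum a b 3) x) x := by
  simpa using (hasDerivAt_poleSum a b (zero_lt_one.trans hx).ne' hx.ne' 2).neg

variable {f : ℝ → ℂ}

lemma deriv_weight_mul (hf : IterDiffOn 1 f (Ioi 1)) (hx : 1 < x) :
    deriv (weight a b * f) x = weight a b x * (deriv f x + poleSum a b 1 x * f x) :=
  eqOn_deriv_of_eqOn_mul isOpen_Ioi (fun _ ↦ hasDerivAt_weight a b)
    (hf.hasDerivAt_iterate (k := 0) (by norm_num)) (eqOn_refl _ _) hx

lemma deriv_iterate_two_weight_mul (hf : IterDiffOn 2 f (Ioi 1)) (hx : 1 < x) :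
    deriv^[2] (weight a b * f) x = weight a b x *
      (deriv^[2] f x + 2 * poleSum a b 1 x * deriv f x
        + (-poleSum a b 2 x + poleSum a b 1 x ^ 2) * f x) := by
  have h := eqOn_deriv_iterate_two_mul isOpen_Ioi (fun _ ↦ hasDerivAt_weight a b)
    (fun _ ↦ hasDerivAt_poleSum_one a b) (hf.hasDerivAt_iterate (k := 0) (by norm_num))
    (hf.hasDerivAt_iterate (k := 1) (by norm_num)) hx
  simpa only [Pi.mul_apply, Pi.add_apply, Pi.neg_apply, Pi.pow_apply, Pi.ofNat_apply,
    Function.iterate_zero, id_eq, zero_add, Function.iterate_one] using h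

lemma deriv_iterate_three_weight_mul (hf : IterDiffOn 3 f (Ioi 1)) (hx : 1 < x) :
    deriv^[3] (weight a b * f) x = weight a b x *
      (deriv^[3] f x + 3 * poleSum a b 1 x * deriv^[2] f x
        + 3 * (-poleSum a b 2 x + poleSum a b 1 x ^ 2) * deriv f x
        + (2 * poleSum a b 3 x + 3 * poleSum a b 1 x * -poleSum a b 2 x
          + poleSum a b 1 x ^ 3) * f x) := by
  have h := eqOn_deriv_iterate_three_mul isOpen_Ioi (fun _ ↦ hasDerivAt_weight a b)
    (fun _ ↦ hasDerivAt_poleSum_one a b) (fun _ ↦ hasDerivAt_neg_poleSum_two a b)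
    (hf.hasDerivAt_iterate (k := 0) (by norm_num)) (hf.hasDerivAt_iterate (k := 1) (by norm_num))
    (hf.hasDerivAt_iterate (k := 2) (by norm_num)) hx
  simpa only [Pi.mul_apply, Pi.add_apply, Pi.neg_apply, Pi.pow_apply, Pi.ofNat_apply,
    Function.iterate_zero, id_eq, zero_add, Function.iterate_one] using h

end Weight

lemma Qop_weight_mul (A₀ A₁ A₂ A₃ : ℂ) {f : ℝ → ℂ} (hf : IterDiffOn 3 f (Ioi 1)) {x : ℝ}
    (hx : 1 < x) :
    Qop A₀ A₁ A₂ A₃ (weight (-(A₀ + A₂)) (-(A₁ + A₂)) * f) x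
      = weight (-(A₀ + A₂)) (-(A₁ + A₂)) x * Rop A₀ A₁ A₂ A₃ f x := by
  have hz₀ : (x : ℂ) ≠ 0 := Complex.ofReal_ne_zero.mpr (zero_lt_one.trans hx).ne'
  have hz₁ : (x : ℂ) - 1 ≠ 0 := ofReal_sub_one_ne_zero hx.ne'
  rw [Qop, Rop, deriv_iterate_three_weight_mul _ _ hf hx,
    deriv_iterate_two_weight_mul _ _ (hf.mono (by norm_num)) hx,
    deriv_weight_mul _ _ (hf.mono (by norm_num)) hx, Pi.mul_apply]
  simp only [poleSum]
  field_simp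
  ring

/-- `R(A) = Ad(x^{A₀+A₂}(x−1)^{A₁+A₂}) Q(A)` on `(1, ∞)`. -/
theorem stmt_8 (A₀ A₁ A₂ A₃ : ℂ) (f : ℝ → ℂ)
    (hf : IterDiffOn 3 f (Set.Ioi 1)) :
    ∀ x ∈ Set.Ioi (1 : ℝ),
      (x : ℂ) ^ (A₀ + A₂) * ((x : ℂ) - 1) ^ (A₁ + A₂) *
        Qop A₀ A₁ A₂ A₃
          (fun t : ℝ => (t : ℂ) ^ (-A₀ - A₂) * ((t : ℂ) - 1) ^ (-A₁ - A₂) * f t) x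
        = Rop A₀ A₁ A₂ A₃ f x := by
  intro x (hx : 1 < x)
  have hx₀ : x ≠ 0 := (zero_lt_one.trans hx).ne'
  calc
    _ = weight (A₀ + A₂) (A₁ + A₂) x
          * Qop A₀ A₁ A₂ A₃ (weight (-(A₀ + A₂)) (-(A₁ + A₂)) * f) x := by
      rw [neg_add', neg_add']
      rfl
    _ = Rop A₀ A₁ A₂ A₃ f x := by
      rw [Qop_weight_mul A₀ A₁ A₂ A₃ hf hx, ← mul_assoc, weight_mul_weight_neg _ _ hx₀ hx.ne',
        one_mul]

end Stmt8
end

section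
/- Let A = (A₀, A₁, A₂, A₃) ∈ ℂ⁴ and suppose the power series f(x) = Σ_{n≥0} Cₙxⁿ has positive radius of convergence and satisfies Z(A)f = 0 on a neighborhood of 0 in ℂ. Then, with the convention C₋₁ := 0, for every integer n ≥ 1: n(n−2A₀)(2n−2A₀−1)(2n−2A₀+1)·Cₙ = (2(n−A₀)−1)²·(2n² − 4A₀n + A₀² + A₁² − A₂² − A₃² + 1 − 2(n−A₀))·C_{n−1} − 4(n−A₀−A₂−1)(n−A₀+A₂−1)(n−A₀−A₃−1)(n−A₀+A₃−1)·C_{n−2}. (This is the recurrence relation Rc₀(A).) -/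
namespace Stmt10

/-- The operator `Z(A)` acting on functions of a complex variable. -/
noncomputable def ZopC (A₀ A₁ A₂ A₃ : ℂ) (f : ℂ → ℂ) (x : ℂ) : ℂ :=
  (x ^ 3 * (x - 1) ^ 2) * deriv^[4] f x
    + (-2 * x ^ 2 * (x - 1) * (2 * A₀ * x - 2 * A₀ - 5 * x + 3)) * deriv^[3] f x
    + (x * ((6 * A₀ ^ 2 - A₂ ^ 2 - A₃ ^ 2 - 24 * A₀ + 25) * x ^ 2
        + (-11 * A₀ ^ 2 - A₁ ^ 2 + A₂ ^ 2 + A₃ ^ 2 + 36 * A₀ - 59 / 2) * x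
        + (10 * A₀ - 9) * (2 * A₀ - 3) / 4)) * deriv^[2] f x
    + (-((2 * A₀ - 3) * (2 * A₀ ^ 2 - A₂ ^ 2 - A₃ ^ 2 - 6 * A₀ + 5)) * x ^ 2
        + (A₀ - 1) * (6 * A₀ ^ 2 + 2 * A₁ ^ 2 - 2 * A₂ ^ 2 - 2 * A₃ ^ 2 - 16 * A₀ + 11) * x
        - (2 * A₀ - 3) * (2 * A₀ - 1) ^ 2 / 4) * deriv f x
    + ((A₀ - 1 + A₃) * (A₀ - 1 - A₃) * (A₀ - 1 + A₂) * (A₀ - 1 - A₂) * x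
        - (2 * A₀ - 1) ^ 2 * (A₀ ^ 2 + A₁ ^ 2 - A₂ ^ 2 - A₃ ^ 2 - 2 * A₀ + 1) / 4) * f x

/-! Each `xᵏ (d/dx)ᵏ` multiplies `xⁿ` by the falling factorial `n (n - 1) ⋯ (n - k + 1)`, so an
operator `∑ k, aₖ xᵏ (d/dx)ᵏ` acts diagonally on power series, multiplying the `n`-th coefficient by
a polynomial in `n`, its symbol. Sorting `4x·Z(A)` by powers of `x` gives `E₀ + x E₁ + x² E₂` with
three such operators. By uniqueness of power series expansions the `n`-th coefficient of
`4x·Z(A)f = 0` vanishes, which is the recurrence; its three polynomial factors are the symbols of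
`E₀`, `E₁`, `E₂` at `n`, `n - 1`, `n - 2`. -/

open Filter Topology
open scoped PowerSeries

/-- `f` is the sum of the formal power series `φ` on some neighbourhood of `0`. -/
def HasExpansion {𝕜 : Type*} [NontriviallyNormedField 𝕜] (f : 𝕜 → 𝕜) (φ : 𝕜⟦X⟧) : Prop :=
  ∀ᶠ x in 𝓝 0, HasSum (fun n => φ.coeff n * x ^ n) (f x)

/-- The operator `∑ k, aₖ xᵏ (d/dx)ᵏ`, that is, a polynomial in the Euler operator `x d/dx` written
in the basis of falling factorials. -/
noncomputable def eulerOp {𝕜 : Type*} [NontriviallyNormedField 𝕜] {m : ℕ} (a : Fin m → 𝕜)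
    (f : 𝕜 → 𝕜) (x : 𝕜) : 𝕜 :=
  ∑ k, a k * (x ^ (k : ℕ) * deriv^[k] f x)

/-- The symbol of `eulerOp a`: the scalar by which that operator multiplies `xᵗ`. -/
noncomputable def eulerSymbol {R : Type*} [CommRing R] {m : ℕ} (a : Fin m → R) (t : R) : R :=
  ∑ k, a k * (descPochhammer R k).eval t

theorem X_pow_mul_iterate_derivative {R : Type*} [CommRing R] (φ : R⟦X⟧) (k : ℕ) :
    PowerSeries.X ^ k * (d⁄dX R)^[k] φ
      = PowerSeries.mk fun n => (descPochhammer R k).eval (n : R) * φ.coeff n := by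
  ext n
  rw [PowerSeries.coeff_X_pow_mul', PowerSeries.coeff_mk, descPochhammer_eval_eq_descFactorial]
  split_ifs with hkn
  · rw [PowerSeries.coeff_iterate_derivative, ← Nat.add_descFactorial_eq_ascFactorial,
      Nat.sub_add_cancel hkn]
  · rw [Nat.descFactorial_of_lt (not_le.mp hkn), Nat.cast_zero, zero_mul]

theorem eulerOp_fin_five {𝕜 : Type*} [NontriviallyNormedField 𝕜] (a : Fin 5 → 𝕜) (f : 𝕜 → 𝕜)
    (x : 𝕜) :
    eulerOp a f x
      = a 0 * f x + a 1 * (x * deriv f x) + a 2 * (x ^ 2 * deriv^[2] f x)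
        + a 3 * (x ^ 3 * deriv^[3] f x) + a 4 * (x ^ 4 * deriv^[4] f x) := by
  simp [eulerOp, Fin.sum_univ_five]

theorem eulerSymbol_fin_five {R : Type*} [CommRing R] (a : Fin 5 → R) (t : R) :
    eulerSymbol a t
      = a 0 + a 1 * t + a 2 * (t * (t - 1)) + a 3 * (t * (t - 1) * (t - 2))
        + a 4 * (t * (t - 1) * (t - 2) * (t - 3)) := by
  simp [eulerSymbol, Fin.sum_univ_five, descPochhammer_eval_eq_prod_range, Finset.prod_range_succ]

namespace HasExpansion

variable {𝕜 : Type*} [NontriviallyNormedField 𝕜] {f : 𝕜 → 𝕜} {φ ψ : 𝕜⟦X⟧}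

theorem iff_hasFPowerSeriesAt :
    HasExpansion f φ ↔
      HasFPowerSeriesAt f (FormalMultilinearSeries.ofScalars 𝕜 fun n => φ.coeff n) 0 := by
  simp only [HasExpansion, hasFPowerSeriesAt_iff, zero_add,
    FormalMultilinearSeries.coeff_ofScalars, smul_eq_mul, mul_comm]

theorem zero : HasExpansion (fun _ : 𝕜 => 0) 0 :=
  .of_forall fun _ => by simp [hasSum_zero]

theorem unique (hφ : HasExpansion f φ) (hψ : HasExpansion f ψ) : φ = ψ := by
  rw [iff_hasFPowerSeriesAt] at hφ hψ
  ext n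
  exact congrFun
    (FormalMultilinearSeries.ofScalars_series_injective 𝕜 𝕜 (hφ.eq_formalMultilinearSeries hψ)) n

theorem sum {ι : Type*} {s : Finset ι} {f : ι → 𝕜 → 𝕜} {φ : ι → 𝕜⟦X⟧}
    (h : ∀ i ∈ s, HasExpansion (f i) (φ i)) :
    HasExpansion (fun x => ∑ i ∈ s, f i x) (∑ i ∈ s, φ i) := by
  filter_upwards [(Finset.eventually_all s).mpr h] with x hx
  simpa only [map_sum, Finset.sum_mul] using hasSum_sum hx

theorem const_mul (h : HasExpansion f φ) (r : 𝕜) :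
    HasExpansion (fun x => r * f x) (PowerSeries.C r * φ) := by
  filter_upwards [h] with x hx
  simpa only [PowerSeries.coeff_C_mul, mul_assoc] using hx.mul_left r

theorem X_mul (h : HasExpansion f φ) : HasExpansion (fun x => x * f x) (PowerSeries.X * φ) := by
  filter_upwards [h] with x hx
  rw [← hasSum_nat_add_iff' 1]
  simpa [PowerSeries.coeff_succ_X_mul, pow_succ', mul_left_comm] using hx.mul_left x

theorem X_pow_mul (h : HasExpansion f φ) (j : ℕ) :
    HasExpansion (fun x => x ^ j * f x) (PowerSeries.X ^ j * φ) := by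
  induction j with
  | zero => simpa using h
  | succ j ih => simpa only [pow_succ', mul_assoc] using ih.X_mul

variable [CompleteSpace 𝕜]

protected theorem deriv (h : HasExpansion f φ) : HasExpansion (deriv f) (d⁄dX 𝕜 φ) := by
  obtain ⟨r, hr⟩ := iff_hasFPowerSeriesAt.mp h
  set p := FormalMultilinearSeries.ofScalars 𝕜 fun n => φ.coeff n
  let evalOne := ContinuousLinearMap.apply 𝕜 𝕜 (1 : 𝕜)
  have hderiv : HasFPowerSeriesAt (deriv f) (evalOne.compFormalMultilinearSeries p.derivSeries) 0 :=
    (evalOne.comp_hasFPowerSeriesOnBall hr.fderiv).hasFPowerSeriesAt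
  have hcoeff (n : ℕ) : (evalOne.compFormalMultilinearSeries p.derivSeries).coeff n
      = (d⁄dX 𝕜 φ).coeff n :=
    calc _ = (n + 1) • p.coeff (n + 1) := p.derivSeries_coeff_one n
      _ = _ := by simp [p, PowerSeries.coeff_derivative, mul_comm]
  filter_upwards [hasFPowerSeriesAt_iff.mp hderiv] with x hx
  simpa only [hcoeff, smul_eq_mul, mul_comm, zero_add] using hx

theorem iterate_deriv (h : HasExpansion f φ) (k : ℕ) :
    HasExpansion (deriv^[k] f) ((d⁄dX 𝕜)^[k] φ) := by
  induction k with
  | zero => exact h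
  | succ k ih => simpa only [Function.iterate_succ_apply'] using ih.deriv

protected theorem eulerOp (h : HasExpansion f φ) {m : ℕ} (a : Fin m → 𝕜) :
    HasExpansion (eulerOp a f) (PowerSeries.mk fun n => eulerSymbol a (n : 𝕜) * φ.coeff n) := by
  have hsum : HasExpansion (eulerOp a f) (∑ k, PowerSeries.C (a k) *
      (PowerSeries.X ^ (k : ℕ) * (d⁄dX 𝕜)^[k] φ)) :=
    .sum fun k _ => ((h.iterate_deriv k).X_pow_mul k).const_mul (a k)
  convert hsum using 1
  ext n
  simp only [X_pow_mul_iterate_derivative, map_sum, PowerSeries.coeff_C_mul, PowerSeries.coeff_mk,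
    eulerSymbol, Finset.sum_mul, mul_assoc]

theorem recurrence_of_sum_pow_mul_eulerOp_eq_zero (h : HasExpansion f φ) {p m : ℕ}
    (a : Matrix (Fin p) (Fin m) 𝕜)
    (hode : ∀ᶠ x in 𝓝 0, ∑ j : Fin p, x ^ (j : ℕ) * eulerOp (a j) f x = 0) (n : ℕ) :
    ∑ j : Fin p, (if (j : ℕ) ≤ n then
      eulerSymbol (a j) ((n - j : ℕ) : 𝕜) * φ.coeff (n - j) else 0) = 0 := by
  have hsum : HasExpansion (fun x => ∑ j : Fin p, x ^ (j : ℕ) * eulerOp (a j) f x)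
      (∑ j : Fin p, PowerSeries.X ^ (j : ℕ) *
        PowerSeries.mk fun n => eulerSymbol (a j) (n : 𝕜) * φ.coeff n) :=
    .sum fun j _ => (h.eulerOp (a j)).X_pow_mul j
  have hzero := hsum.unique <| by
    filter_upwards [hode, zero] with x hx hx0
    rwa [hx]
  simpa only [map_sum, PowerSeries.coeff_X_pow_mul', PowerSeries.coeff_mk, map_zero]
    using congrArg (PowerSeries.coeff n) hzero

end HasExpansion

section Operator

variable (A₀ A₁ A₂ A₃ : ℂ)

/-- The coefficients of `4x·Z(A) = ∑ j k, aⱼₖ xʲ xᵏ (d/dx)ᵏ`: row `j` collects the terms of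
`4x·Z(A)` that raise the degree of a monomial by `j`. The factor `4` clears the
denominators of `Z(A)`. -/
noncomputable def eulerMatrix : Matrix (Fin 3) (Fin 5) ℂ :=
  !![0, -(2 * A₀ - 3) * (2 * A₀ - 1) ^ 2,
    (10 * A₀ - 9) * (2 * A₀ - 3), -8 * (2 * A₀ - 3), 4;
    -(2 * A₀ - 1) ^ 2 * (A₀ ^ 2 + A₁ ^ 2 - A₂ ^ 2 - A₃ ^ 2 - 2 * A₀ + 1),
    4 * (A₀ - 1) * (6 * A₀ ^ 2 + 2 * A₁ ^ 2 - 2 * A₂ ^ 2 - 2 * A₃ ^ 2 - 16 * A₀ + 11),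
    4 * (-11 * A₀ ^ 2 - A₁ ^ 2 + A₂ ^ 2 + A₃ ^ 2 + 36 * A₀ - 59 / 2), 32 * (A₀ - 2), -8;
    4 * (A₀ - 1 + A₃) * (A₀ - 1 - A₃) * (A₀ - 1 + A₂) * (A₀ - 1 - A₂),
    -4 * (2 * A₀ - 3) * (2 * A₀ ^ 2 - A₂ ^ 2 - A₃ ^ 2 - 6 * A₀ + 5),
    4 * (6 * A₀ ^ 2 - A₂ ^ 2 - A₃ ^ 2 - 24 * A₀ + 25), -8 * (2 * A₀ - 5), 4]

theorem sum_pow_mul_eulerOp_eulerMatrix (f : ℂ → ℂ) (x : ℂ) :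
    ∑ j : Fin 3, x ^ (j : ℕ) * eulerOp (eulerMatrix A₀ A₁ A₂ A₃ j) f x
      = 4 * x * ZopC A₀ A₁ A₂ A₃ f x := by
  simp only [Fin.sum_univ_three, eulerOp_fin_five, eulerMatrix, ZopC, Matrix.of_apply,
    Matrix.cons_val', Matrix.cons_val, Fin.val_zero, Fin.val_one, Fin.val_two]
  ring

theorem eulerSymbol_eulerMatrix_zero (t : ℂ) :
    eulerSymbol (eulerMatrix A₀ A₁ A₂ A₃ 0) t
      = t * (t - 2 * A₀) * (2 * (t - A₀) - 1) * (2 * (t - A₀) + 1) := by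
  rw [eulerSymbol_fin_five]
  simp only [eulerMatrix, Matrix.of_apply, Matrix.cons_val', Matrix.cons_val]
  ring

theorem eulerSymbol_eulerMatrix_one (t : ℂ) :
    eulerSymbol (eulerMatrix A₀ A₁ A₂ A₃ 1) t
      = -((2 * (t - A₀) + 1) ^ 2 *
          (2 * (t - A₀) ^ 2 + 2 * (t - A₀) + 1 - A₀ ^ 2 + A₁ ^ 2 - A₂ ^ 2 - A₃ ^ 2)) := by
  rw [eulerSymbol_fin_five]
  simp only [eulerMatrix, Matrix.of_apply, Matrix.cons_val', Matrix.cons_val]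
  ring

theorem eulerSymbol_eulerMatrix_two (t : ℂ) :
    eulerSymbol (eulerMatrix A₀ A₁ A₂ A₃ 2) t
      = 4 * ((t - A₀ + 1) ^ 2 - A₂ ^ 2) * ((t - A₀ + 1) ^ 2 - A₃ ^ 2) := by
  rw [eulerSymbol_fin_five]
  simp only [eulerMatrix, Matrix.of_apply, Matrix.cons_val', Matrix.cons_val]
  ring

end Operator

/-- The coefficients of a power-series solution of `Z(A)f = 0` near `0` satisfy the
recurrence `Rc₀(A)` (with the convention `C₋₁ = 0`). -/
theorem stmt_10 (A₀ A₁ A₂ A₃ : ℂ) (C : ℕ → ℂ) (f : ℂ → ℂ) (ε : ℝ) (hε : 0 < ε)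
    (hsum : ∀ x : ℂ, ‖x‖ < ε → HasSum (fun n => C n * x ^ n) (f x))
    (hode : ∀ x : ℂ, ‖x‖ < ε → ZopC A₀ A₁ A₂ A₃ f x = 0) :
    ∀ n : ℕ, 1 ≤ n →
      (n : ℂ) * ((n : ℂ) - 2 * A₀) * (2 * (n : ℂ) - 2 * A₀ - 1) * (2 * (n : ℂ) - 2 * A₀ + 1)
          * C n
        = (2 * ((n : ℂ) - A₀) - 1) ^ 2
            * (2 * (n : ℂ) ^ 2 - 4 * A₀ * (n : ℂ) + A₀ ^ 2 + A₁ ^ 2 - A₂ ^ 2 - A₃ ^ 2 + 1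
                - 2 * ((n : ℂ) - A₀)) * C (n - 1)
          - 4 * ((n : ℂ) - A₀ - A₂ - 1) * ((n : ℂ) - A₀ + A₂ - 1)
              * ((n : ℂ) - A₀ - A₃ - 1) * ((n : ℂ) - A₀ + A₃ - 1)
              * (if n = 1 then 0 else C (n - 2)) := by
  have hball : ∀ᶠ x : ℂ in 𝓝 0, ‖x‖ < ε :=
    (continuous_norm.tendsto' 0 0 norm_zero).eventually_lt_const hε
  have hf : HasExpansion f (PowerSeries.mk C) := by
    filter_upwards [hball] with x hx
    simpa only [PowerSeries.coeff_mk] using hsum x hx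
  intro n hn
  have hrec := hf.recurrence_of_sum_pow_mul_eulerOp_eq_zero (eulerMatrix A₀ A₁ A₂ A₃) (n := n) <| by
    filter_upwards [hball] with x hx
    rw [sum_pow_mul_eulerOp_eulerMatrix, hode x hx, mul_zero]
  simp only [Fin.sum_univ_three, Fin.val_zero, Fin.val_one, Fin.val_two, zero_le, if_true, hn,
    Nat.sub_zero, Nat.cast_sub hn, Nat.cast_one, PowerSeries.coeff_mk, eulerSymbol_eulerMatrix_zero,
    eulerSymbol_eulerMatrix_one, eulerSymbol_eulerMatrix_two] at hrec
  obtain rfl | (hn_two : 2 ≤ n) := hn.eq_or_lt'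
  · rw [if_neg (by norm_num)] at hrec
    rw [if_pos rfl]
    linear_combination hrec
  · rw [if_pos hn_two, Nat.cast_sub hn_two, Nat.cast_ofNat] at hrec
    rw [if_neg (by lia)]
    linear_combination hrec

end Stmt10
end

section
/- Let p₁, p₂, q₁, q₂ be ℂ-valued functions on the positive integers with p₁(n) ≠ 0, q₁(n) ≠ 0, p₂(n) ≠ 0, q₂(n) ≠ 0 for all n ≥ 1, and suppose the invariants of the two difference equations agree: p₁(n)·p₁(n+1)·q₂(n+1) = q₁(n)·q₁(n+1)·p₂(n+1) for all n ≥ 1. Define λ : ℕ → ℂ by λ(0) = 1 and λ(n) = λ(n−1)·p₁(n)/q₁(n) for n ≥ 1. Then: (a) if C : ℕ → ℂ satisfies Cₙ = p₁(n)C_{n−1} + p₂(n)C_{n−2} for all n ≥ 2, the sequence Dₙ := Cₙ/λ(n) satisfies Dₙ = q₁(n)D_{n−1} + q₂(n)D_{n−2} for all n ≥ 2; and (b) conversely, if D satisfies the second recurrence, then Cₙ := λ(n)·Dₙ satisfies the first; so C ↦ C/λ is a bijection between the solution sets of the two recurrences. -/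
/-!
Substituting `C = lam * D` into `C n = p₁ n * C (n - 1) + p₂ n * C (n - 2)` gives `lam n` times the
equation with coefficients `q₁`, `q₂` as soon as `lam n * q₁ n = p₁ n * lam (n - 1)` and
`lam n * q₂ n = p₂ n * lam (n - 2)`. The first identity is the recurrence defining `lam`. Applying
it at `n` and at `n - 1` expresses `lam n` through `lam (n - 2)`, and equality of the invariants is
then exactly the second identity.
-/

section CommSemiring

variable {R : Type*} [CommSemiring R] {p₁ p₂ q₁ q₂ lam : ℕ → R}

/-- The solutions of the second-order linear difference equation with coefficients `p₁`, `p₂`.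
The equation is imposed only for `2 ≤ n`, where the subtractions in `ℕ` do not truncate. -/
def solutionSet (p₁ p₂ : ℕ → R) : Set (ℕ → R) :=
  {C | ∀ n, 2 ≤ n → C n = p₁ n * C (n - 1) + p₂ n * C (n - 2)}

/-- `lam` is a gauge transformation between two second-order equations: substituting `lam * D`
into the equation with coefficients `p₁`, `p₂` yields a nonzero multiple of the equation with
coefficients `q₁`, `q₂` for `D`. -/
structure IsGauge (p₁ p₂ q₁ q₂ lam : ℕ → R) : Prop where
  ne_zero : ∀ n, lam n ≠ 0
  mul_fst : ∀ n, 1 ≤ n → lam n * q₁ n = p₁ n * lam (n - 1)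
  mul_snd : ∀ n, 2 ≤ n → lam n * q₂ n = p₂ n * lam (n - 2)

variable [IsCancelMulZero R]

theorem mul_snd_of_invariant_eq (hq₁ : ∀ n, 1 ≤ n → q₁ n ≠ 0)
    (hinv : ∀ n, 1 ≤ n → p₁ n * p₁ (n + 1) * q₂ (n + 1) = q₁ n * q₁ (n + 1) * p₂ (n + 1))
    (hlam : ∀ n, 1 ≤ n → lam n * q₁ n = p₁ n * lam (n - 1)) (n : ℕ) (hn : 2 ≤ n) :
    lam n * q₂ n = p₂ n * lam (n - 2) := by
  obtain ⟨k, rfl⟩ := Nat.exists_eq_add_of_le' hn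
  have hlam₁ : lam (k + 1) * q₁ (k + 1) = p₁ (k + 1) * lam k := hlam (k + 1) (by lia)
  have hlam₂ : lam (k + 2) * q₁ (k + 2) = p₁ (k + 2) * lam (k + 1) := hlam (k + 2) (by lia)
  have hq : q₁ (k + 1) * q₁ (k + 2) ≠ 0 :=
    mul_ne_zero (hq₁ (k + 1) (by lia)) (hq₁ (k + 2) (by lia))
  refine mul_left_cancel₀ hq ?_
  calc q₁ (k + 1) * q₁ (k + 2) * (lam (k + 2) * q₂ (k + 2))
    _ = lam (k + 2) * q₁ (k + 2) * (q₁ (k + 1) * q₂ (k + 2)) := by ring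
    _ = lam (k + 1) * q₁ (k + 1) * (p₁ (k + 2) * q₂ (k + 2)) := by rw [hlam₂]; ring
    _ = p₁ (k + 1) * p₁ (k + 2) * q₂ (k + 2) * lam k := by rw [hlam₁]; ring
    _ = q₁ (k + 1) * q₁ (k + 2) * p₂ (k + 2) * lam k := by rw [hinv (k + 1) (by lia)]
    _ = q₁ (k + 1) * q₁ (k + 2) * (p₂ (k + 2) * lam k) := by ring

theorem IsGauge.mul_mem_solutionSet_iff (h : IsGauge p₁ p₂ q₁ q₂ lam) {D : ℕ → R} :
    lam * D ∈ solutionSet p₁ p₂ ↔ D ∈ solutionSet q₁ q₂ := by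
  refine forall₂_congr fun n hn ↦ ?_
  have hsubst : p₁ n * (lam (n - 1) * D (n - 1)) + p₂ n * (lam (n - 2) * D (n - 2)) =
      lam n * (q₁ n * D (n - 1) + q₂ n * D (n - 2)) := by
    rw [mul_add, ← mul_assoc, ← mul_assoc, ← mul_assoc, ← mul_assoc,
      h.mul_fst n (by lia), h.mul_snd n hn]
  simp only [Pi.mul_apply, hsubst, mul_right_inj' (h.ne_zero n)]

end CommSemiring

theorem ne_zero_of_eq_mul_div {G₀ : Type*} [GroupWithZero G₀] {a b lam : ℕ → G₀}
    (ha : ∀ n, 1 ≤ n → a n ≠ 0) (hb : ∀ n, 1 ≤ n → b n ≠ 0) (hlam0 : lam 0 ≠ 0)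
    (hlamrec : ∀ n, 1 ≤ n → lam n = lam (n - 1) * a n / b n) (n : ℕ) : lam n ≠ 0 := by
  induction n with
  | zero => exact hlam0
  | succ k ih =>
    have hk : 1 ≤ k + 1 := k.succ_pos
    rw [hlamrec (k + 1) hk]
    exact div_ne_zero (mul_ne_zero ih (ha _ hk)) (hb _ hk)

section Field

variable {K : Type*} [Field K] {p₁ p₂ q₁ q₂ lam : ℕ → K}

theorem isGauge_of_invariant_eq (hp₁ : ∀ n, 1 ≤ n → p₁ n ≠ 0) (hq₁ : ∀ n, 1 ≤ n → q₁ n ≠ 0)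
    (hinv : ∀ n, 1 ≤ n → p₁ n * p₁ (n + 1) * q₂ (n + 1) = q₁ n * q₁ (n + 1) * p₂ (n + 1))
    (hlam0 : lam 0 ≠ 0) (hlamrec : ∀ n, 1 ≤ n → lam n = lam (n - 1) * p₁ n / q₁ n) :
    IsGauge p₁ p₂ q₁ q₂ lam := by
  have hfst (n : ℕ) (hn : 1 ≤ n) : lam n * q₁ n = p₁ n * lam (n - 1) := by
    rw [hlamrec n hn, div_mul_cancel₀ _ (hq₁ n hn), mul_comm]
  exact ⟨ne_zero_of_eq_mul_div hp₁ hq₁ hlam0 hlamrec, hfst,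
    mul_snd_of_invariant_eq hq₁ hinv hfst⟩

theorem IsGauge.div_mem_solutionSet_iff (h : IsGauge p₁ p₂ q₁ q₂ lam) {C : ℕ → K} :
    C / lam ∈ solutionSet q₁ q₂ ↔ C ∈ solutionSet p₁ p₂ := by
  have hC : lam * (C / lam) = C := funext fun n ↦ mul_div_cancel₀ (C n) (h.ne_zero n)
  rw [← h.mul_mem_solutionSet_iff, hC]

theorem IsGauge.bijOn_div (h : IsGauge p₁ p₂ q₁ q₂ lam) :
    Set.BijOn (fun C ↦ C / lam) (solutionSet p₁ p₂) (solutionSet q₁ q₂) := by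
  have hinv : Set.InvOn (fun D ↦ lam * D) (fun C ↦ C / lam)
      (solutionSet p₁ p₂) (solutionSet q₁ q₂) :=
    ⟨fun C _ ↦ funext fun n ↦ mul_div_cancel₀ (C n) (h.ne_zero n),
      fun D _ ↦ funext fun n ↦ mul_div_cancel_left₀ (D n) (h.ne_zero n)⟩
  exact hinv.bijOn (fun _ ↦ h.div_mem_solutionSet_iff.2) (fun _ ↦ h.mul_mem_solutionSet_iff.2)

theorem stmt_11_general (hp₁ : ∀ n, 1 ≤ n → p₁ n ≠ 0) (hq₁ : ∀ n, 1 ≤ n → q₁ n ≠ 0)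
    (hinv : ∀ n, 1 ≤ n → p₁ n * p₁ (n + 1) * q₂ (n + 1) = q₁ n * q₁ (n + 1) * p₂ (n + 1))
    (hlam0 : lam 0 ≠ 0) (hlamrec : ∀ n, 1 ≤ n → lam n = lam (n - 1) * p₁ n / q₁ n) :
    (∀ C ∈ solutionSet p₁ p₂, C / lam ∈ solutionSet q₁ q₂) ∧
      (∀ D ∈ solutionSet q₁ q₂, lam * D ∈ solutionSet p₁ p₂) ∧
      Set.BijOn (fun C ↦ C / lam) (solutionSet p₁ p₂) (solutionSet q₁ q₂) :=
  have h := isGauge_of_invariant_eq hp₁ hq₁ hinv hlam0 hlamrec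
  ⟨fun _ ↦ h.div_mem_solutionSet_iff.2, fun _ ↦ h.mul_mem_solutionSet_iff.2, h.bijOn_div⟩

end Field

/-- If the invariants `p₁(n)p₁(n+1)/p₂(n+1)` and `q₁(n)q₁(n+1)/q₂(n+1)` of two
second-order linear difference equations agree, then the two equations are
essentially the same: division by `λ` (with `λ(0)=1`, `λ(n)=λ(n−1)p₁(n)/q₁(n)`)
maps solutions of the first to solutions of the second, bijectively. -/
theorem stmt_11 (p₁ p₂ q₁ q₂ : ℕ → ℂ)
    (hp₁ : ∀ n, 1 ≤ n → p₁ n ≠ 0) (hp₂ : ∀ n, 1 ≤ n → p₂ n ≠ 0)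
    (hq₁ : ∀ n, 1 ≤ n → q₁ n ≠ 0) (hq₂ : ∀ n, 1 ≤ n → q₂ n ≠ 0)
    (hinv : ∀ n, 1 ≤ n → p₁ n * p₁ (n + 1) * q₂ (n + 1) = q₁ n * q₁ (n + 1) * p₂ (n + 1))
    (lam : ℕ → ℂ) (hlam0 : lam 0 = 1)
    (hlamrec : ∀ n, 1 ≤ n → lam n = lam (n - 1) * p₁ n / q₁ n) :
    (∀ C : ℕ → ℂ, (∀ n, 2 ≤ n → C n = p₁ n * C (n - 1) + p₂ n * C (n - 2)) →
        ∀ n, 2 ≤ n →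
          C n / lam n = q₁ n * (C (n - 1) / lam (n - 1)) + q₂ n * (C (n - 2) / lam (n - 2)))
    ∧ (∀ D : ℕ → ℂ, (∀ n, 2 ≤ n → D n = q₁ n * D (n - 1) + q₂ n * D (n - 2)) →
        ∀ n, 2 ≤ n →
          lam n * D n = p₁ n * (lam (n - 1) * D (n - 1)) + p₂ n * (lam (n - 2) * D (n - 2)))
    ∧ Set.BijOn (fun C : ℕ → ℂ => fun n => C n / lam n)
        {C : ℕ → ℂ | ∀ n, 2 ≤ n → C n = p₁ n * C (n - 1) + p₂ n * C (n - 2)}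
        {D : ℕ → ℂ | ∀ n, 2 ≤ n → D n = q₁ n * D (n - 1) + q₂ n * D (n - 2)} :=
  stmt_11_general hp₁ hq₁ hinv (hlam0 ▸ one_ne_zero) hlamrec
end

section
/- Let α = (α₀, α₁, α₂, α₃; β₁, β₂, β₃) with α₀ = −N for an integer N ≥ 2, satisfying the balanced condition β₁ + β₂ + β₃ − α₀ − α₁ − α₂ − α₃ = 1. Assume all of the following quantities are nonzero: β₁, β₂, β₁+1, β₂+1, β₃−α₀−1, β₃−α₀−2, β₃−α₁−1, U₁⁽⁰⁾(α+e₁₂), and the Pochhammer denominators (β₁)_k, (β₂)_k, (β₃)_k for 0 ≤ k ≤ N, (β₁+1)_k, (β₂+1)_k for 0 ≤ k ≤ N−1, and (β₁+2)_k, (β₂+2)_k for 0 ≤ k ≤ N−2. Then the terminating balanced series satisfy the three-term relation ₄F₃(α; 1) = q₁⁽⁰⁾(α)·₄F₃(α+e₁₂; 1) + q₂⁽⁰⁾(α)·₄F₃(α+2e₁₂; 1), where q₁⁽⁰⁾(α) = U₁⁽⁰⁾(α)U₂⁽⁰⁾(α+e₁) + V₁⁽⁰⁾(α) + U₁⁽⁰⁾(α)V₂⁽⁰⁾(α+e₁)/U₁⁽⁰⁾(α+e₁₂)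 and q₂⁽⁰⁾(α) = −U₁⁽⁰⁾(α)V₁⁽⁰⁾(α+e₁₂)V₂⁽⁰⁾(α+e₁)/U₁⁽⁰⁾(α+e₁₂). -/
namespace Stmt13

/-- The Pochhammer symbol `(a)ₖ = a(a+1)⋯(a+k−1)`. -/
noncomputable def poch (a : ℂ) (k : ℕ) : ℂ := ∏ i ∈ Finset.range k, (a + (i : ℂ))

/-- A parameter tuple `(α₀, α₁, α₂, α₃; β₁, β₂, β₃)` for `₄F₃`. -/
structure HGParam where
  a0 : ℂ
  a1 : ℂ
  a2 : ℂ
  a3 : ℂ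
  b1 : ℂ
  b2 : ℂ
  b3 : ℂ

/-- The terminating value `₄F₃(α; 1) = Σ_{k=0}^{N} (α₀)ₖ(α₁)ₖ(α₂)ₖ(α₃)ₖ /
((β₁)ₖ(β₂)ₖ(β₃)ₖ k!)` (where `α₀ = −N`). -/
noncomputable def F43 (p : HGParam) (N : ℕ) : ℂ :=
  ∑ k ∈ Finset.range (N + 1),
    poch p.a0 k * poch p.a1 k * poch p.a2 k * poch p.a3 k /
      (poch p.b1 k * poch p.b2 k * poch p.b3 k * (Nat.factorial k : ℂ))

/-- The shift `e₁`: add `1` to `α₀` and `β₁`. -/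
def e1 (p : HGParam) : HGParam := ⟨p.a0 + 1, p.a1, p.a2, p.a3, p.b1 + 1, p.b2, p.b3⟩

/-- The shift `e₁₂`: add `1` to each of `α₀, α₁, β₁, β₂`. -/
def e12 (p : HGParam) : HGParam := ⟨p.a0 + 1, p.a1 + 1, p.a2, p.a3, p.b1 + 1, p.b2 + 1, p.b3⟩

noncomputable def U1 (p : HGParam) : ℂ :=
  -((p.b1 - p.a1) * (p.b1 + p.b2 - p.a2 - p.a3)) / (p.b1 * (p.b3 - p.a0 - 1))

noncomputable def V1 (p : HGParam) : ℂ :=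
  -(p.a1 * (p.b2 - p.a2) * (p.b2 - p.a3)) / (p.b1 * p.b2 * (p.b3 - p.a0 - 1))

noncomputable def U2 (p : HGParam) : ℂ :=
  -((p.b2 - p.a0) * (p.b1 + p.b2 - p.a2 - p.a3)) / (p.b2 * (p.b3 - p.a1 - 1))

noncomputable def V2 (p : HGParam) : ℂ :=
  -(p.a0 * (p.b1 - p.a2) * (p.b1 - p.a3)) / (p.b1 * p.b2 * (p.b3 - p.a1 - 1))

noncomputable def q1 (p : HGParam) : ℂ :=
  U1 p * U2 (e1 p) + V1 p + U1 p * V2 (e1 p) / U1 (e12 p)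

noncomputable def q2 (p : HGParam) : ℂ :=
  -(U1 p * V1 (e12 p) * V2 (e1 p)) / U1 (e12 p)

/-!
The certificate `p.telescoper` telescopes the termwise defect of the contiguous relation
`F(α) = U₁(α) F(α + e₁) + V₁(α) F(α + e₁₂)` of balanced series. When `α₀` or `α₁` is a negative
integer, the last term cancels the certificate and the relation holds for the terminating sums.
Exchanging `(α₀, β₁)` with `(α₁, β₂)` gives the relation with `U₂`, `V₂` and the shift
`e₂ = e₁₂ - e₁`. Eliminating `F(α + e₁)` and `F(α + e₁ + e₁₂)` from the relations at `α`, `α + e₁`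
and `α + e₁₂` yields the three-term relation.
-/

section Pochhammer

variable {a : ℂ} {n : ℕ}

lemma poch_zero (a : ℂ) : poch a 0 = 1 := Finset.prod_range_zero _

lemma poch_succ (a : ℂ) (k : ℕ) : poch a (k + 1) = poch a k * (a + k) :=
  Finset.prod_range_succ _ k

lemma poch_succ_left (a : ℂ) (k : ℕ) : poch a (k + 1) = a * poch (a + 1) k := by
  simp only [poch, Finset.prod_range_succ', Nat.cast_zero, add_zero, Nat.cast_add, Nat.cast_one,
    mul_comm a, add_assoc, add_comm (1 : ℂ)]

lemma ne_zero_of_poch_succ_ne_zero (h : poch a (n + 1) ≠ 0) : a ≠ 0 :=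
  left_ne_zero_of_mul (poch_succ_left a n ▸ h)

lemma add_natCast_ne_zero_of_poch_succ_ne_zero (h : poch a (n + 1) ≠ 0) : a + n ≠ 0 :=
  right_ne_zero_of_mul (poch_succ a n ▸ h)

lemma poch_ne_zero_of_poch_succ_ne_zero (h : poch a (n + 1) ≠ 0) : poch a n ≠ 0 :=
  left_ne_zero_of_mul (poch_succ a n ▸ h)

lemma poch_add_one_ne_zero_of_poch_succ_ne_zero (h : poch a (n + 1) ≠ 0) :
    poch (a + 1) n ≠ 0 :=
  right_ne_zero_of_mul (poch_succ_left a n ▸ h)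

end Pochhammer

/-- The shift `e₂ = e₁₂ - e₁`: add `1` to `α₁` and `β₂`. -/
def e2 (p : HGParam) : HGParam := ⟨p.a0, p.a1 + 1, p.a2, p.a3, p.b1, p.b2 + 1, p.b3⟩

namespace HGParam

/-- The balanced (Saalschützian) condition: the lower parameters exceed the upper ones by `1` in
total. -/
def IsBalanced (p : HGParam) : Prop :=
  p.b1 + p.b2 + p.b3 - p.a0 - p.a1 - p.a2 - p.a3 = 1

/-- The `k`-th summand of `₄F₃(α; 1)`. -/
noncomputable def term (p : HGParam) (k : ℕ) : ℂ :=
  poch p.a0 k * poch p.a1 k * poch p.a2 k * poch p.a3 k /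
    (poch p.b1 k * poch p.b2 k * poch p.b3 k * (Nat.factorial k : ℂ))

/-- The exchange of `(α₀, β₁)` with `(α₁, β₂)`, a symmetry of `₄F₃` that turns `U₁`, `V₁` into
`U₂`, `V₂`. -/
def swap (p : HGParam) : HGParam := ⟨p.a1, p.a0, p.a2, p.a3, p.b2, p.b1, p.b3⟩

/-- The Gosper-style certificate of the contiguous relation with coefficients `U₁` and `V₁`: its
`n`-th value is the `n`-th partial sum of the termwise defect of that relation. -/
noncomputable def telescoper (p : HGParam) (n : ℕ) : ℂ :=
  p.a1 * (p.a2 + n) * (p.a3 + n) / (p.b1 * p.b2 * (p.b3 - p.a0 - 1)) * (e12 p).term n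

variable {p : HGParam} {n : ℕ}

lemma IsBalanced.swap (h : p.IsBalanced) : p.swap.IsBalanced := by
  unfold IsBalanced HGParam.swap at *
  linear_combination h

lemma IsBalanced.e1 (h : p.IsBalanced) : (e1 p).IsBalanced := by
  unfold IsBalanced Stmt13.e1 at *
  linear_combination h

lemma IsBalanced.e12 (h : p.IsBalanced) : (e12 p).IsBalanced := by
  unfold IsBalanced Stmt13.e12 at *
  linear_combination h

lemma IsBalanced.a3_eq (h : p.IsBalanced) :
    p.a3 = p.b1 + p.b2 + p.b3 - p.a0 - p.a1 - p.a2 - 1 := by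
  unfold IsBalanced at h
  linear_combination -h

lemma term_zero (p : HGParam) : p.term 0 = 1 := by
  simp [term, poch_zero]

lemma term_succ (p : HGParam) (k : ℕ) :
    p.term (k + 1) = (p.a0 + k) * (p.a1 + k) * (p.a2 + k) * (p.a3 + k) /
      ((p.b1 + k) * (p.b2 + k) * (p.b3 + k) * (k + 1)) * p.term k := by
  simp only [term, poch_succ, Nat.factorial_succ, Nat.cast_mul, Nat.cast_add_one,
    div_mul_div_comm]
  congr 1 <;> ring

lemma term_succ_eq_mul_term_e12 (p : HGParam) (k : ℕ) :
    p.term (k + 1) = p.a0 * p.a1 * (p.a2 + k) * (p.a3 + k) /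
      (p.b1 * p.b2 * (p.b3 + k) * (k + 1)) * (e12 p).term k := by
  simp only [term, e12, poch_succ_left p.a0, poch_succ_left p.a1, poch_succ_left p.b1,
    poch_succ_left p.b2, poch_succ p.a2, poch_succ p.a3, poch_succ p.b3, Nat.factorial_succ,
    Nat.cast_mul, Nat.cast_add_one, div_mul_div_comm]
  congr 1 <;> ring

lemma term_e1_succ_eq_mul_term_e12 (p : HGParam) (k : ℕ) :
    (e1 p).term (k + 1) = (p.a0 + 1 + k) * p.a1 * (p.a2 + k) * (p.a3 + k) /
      ((p.b1 + 1 + k) * p.b2 * (p.b3 + k) * (k + 1)) * (e12 p).term k := by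
  simp only [term, e1, e12, poch_succ (p.a0 + 1), poch_succ_left p.a1, poch_succ (p.b1 + 1),
    poch_succ_left p.b2, poch_succ p.a2, poch_succ p.a3, poch_succ p.b3, Nat.factorial_succ,
    Nat.cast_mul, Nat.cast_add_one, div_mul_div_comm]
  congr 1 <;> ring

lemma telescoper_zero (hbal : p.IsBalanced) (hb1 : p.b1 ≠ 0) (hb2 : p.b2 ≠ 0)
    (hd : p.b3 - p.a0 - 1 ≠ 0) :
    p.telescoper 0 = 1 - U1 p - V1 p := by
  simp only [telescoper, U1, V1, term_zero, Nat.cast_zero, hbal.a3_eq]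
  field_simp
  ring

lemma telescoper_succ_sub (hbal : p.IsBalanced) (hb1 : poch p.b1 (n + 2) ≠ 0)
    (hb2 : poch p.b2 (n + 2) ≠ 0) (hb3 : p.b3 + n ≠ 0) (hd : p.b3 - p.a0 - 1 ≠ 0) :
    p.telescoper (n + 1) - p.telescoper n =
      p.term (n + 1) - U1 p * (e1 p).term (n + 1) - V1 p * (e12 p).term (n + 1) := by
  have hb1_zero := ne_zero_of_poch_succ_ne_zero hb1
  have hb2_zero := ne_zero_of_poch_succ_ne_zero hb2
  have hb1_last : p.b1 + 1 + n ≠ 0 :=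
    add_natCast_ne_zero_of_poch_succ_ne_zero (poch_add_one_ne_zero_of_poch_succ_ne_zero hb1)
  have hb2_last : p.b2 + 1 + n ≠ 0 :=
    add_natCast_ne_zero_of_poch_succ_ne_zero (poch_add_one_ne_zero_of_poch_succ_ne_zero hb2)
  have hn : (n : ℂ) + 1 ≠ 0 := Nat.cast_add_one_ne_zero n
  simp only [telescoper, term_succ_eq_mul_term_e12 p, term_e1_succ_eq_mul_term_e12,
    term_succ (e12 p), U1, V1]
  simp only [e12, hbal.a3_eq, Nat.cast_add_one]
  field_simp
  ring

lemma telescoper_add_term_succ_eq_zero (ha0 : p.a0 = -((n : ℂ) + 1)) :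
    p.telescoper n + p.term (n + 1) = 0 := by
  have hn : (n : ℂ) + 1 ≠ 0 := Nat.cast_add_one_ne_zero n
  have hd : p.b3 - p.a0 - 1 = p.b3 + n := by rw [ha0]; ring
  rw [telescoper, term_succ_eq_mul_term_e12, hd, ha0]
  field_simp
  ring

lemma telescoper_add_term_succ_of_a1_eq (hbal : p.IsBalanced) (ha1 : p.a1 = -((n : ℂ) + 1))
    (hb1 : p.b1 + 1 + n ≠ 0) (hb3 : p.b3 + n ≠ 0) (hd : p.b3 - p.a0 - 1 ≠ 0) :
    p.telescoper n + p.term (n + 1) = U1 p * (e1 p).term (n + 1) := by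
  have hn : (n : ℂ) + 1 ≠ 0 := Nat.cast_add_one_ne_zero n
  have hb1_sub : p.b1 - p.a1 = p.b1 + 1 + n := by rw [ha1]; ring
  have hexcess : p.b1 + p.b2 - p.a2 - p.a3 = p.a0 - n - p.b3 := by
    unfold IsBalanced at hbal
    linear_combination hbal + ha1
  rw [telescoper, term_succ_eq_mul_term_e12, term_e1_succ_eq_mul_term_e12, U1, hb1_sub, hexcess,
    ha1]
  field_simp
  ring

end HGParam

section ContiguousRelations

variable {p : HGParam} {n : ℕ}

lemma F43_zero (p : HGParam) : F43 p 0 = 1 :=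
  (Finset.sum_range_one p.term).trans p.term_zero

lemma F43_succ (p : HGParam) (n : ℕ) : F43 p (n + 1) = F43 p n + p.term (n + 1) :=
  Finset.sum_range_succ p.term (n + 1)

lemma F43_swap (p : HGParam) (n : ℕ) : F43 p.swap n = F43 p n :=
  Finset.sum_congr rfl fun k _ => by
    simp only [HGParam.swap]
    ring

lemma U1_swap (p : HGParam) : U1 p.swap = U2 p := by
  simp only [U1, U2, HGParam.swap, add_comm]

lemma V1_swap (p : HGParam) : V1 p.swap = V2 p := by
  simp only [V1, V2, HGParam.swap, mul_comm p.b1]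

lemma F43_contiguous_defect_eq_telescoper (hbal : p.IsBalanced) (hb1 : poch p.b1 (n + 1) ≠ 0)
    (hb2 : poch p.b2 (n + 1) ≠ 0) (hb3 : poch p.b3 n ≠ 0) (hd : p.b3 - p.a0 - 1 ≠ 0) :
    F43 p n - U1 p * F43 (e1 p) n - V1 p * F43 (e12 p) n = p.telescoper n := by
  induction n with
  | zero =>
    rw [HGParam.telescoper_zero hbal (ne_zero_of_poch_succ_ne_zero hb1)
      (ne_zero_of_poch_succ_ne_zero hb2) hd]
    simp only [F43_zero, mul_one]
  | succ n ih =>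
    have hprev := ih (poch_ne_zero_of_poch_succ_ne_zero hb1) (poch_ne_zero_of_poch_succ_ne_zero hb2)
      (poch_ne_zero_of_poch_succ_ne_zero hb3)
    have hstep := HGParam.telescoper_succ_sub hbal hb1 hb2
      (add_natCast_ne_zero_of_poch_succ_ne_zero hb3) hd
    simp only [F43_succ]
    linear_combination hprev - hstep

lemma F43_succ_eq_U1_V1_of_a0_eq (hbal : p.IsBalanced) (ha0 : p.a0 = -((n : ℂ) + 1))
    (hb1 : poch p.b1 (n + 1) ≠ 0) (hb2 : poch p.b2 (n + 1) ≠ 0) (hb3 : poch p.b3 n ≠ 0)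
    (hd : p.b3 - p.a0 - 1 ≠ 0) :
    F43 p (n + 1) = U1 p * F43 (e1 p) n + V1 p * F43 (e12 p) n := by
  rw [F43_succ]
  linear_combination F43_contiguous_defect_eq_telescoper hbal hb1 hb2 hb3 hd +
    HGParam.telescoper_add_term_succ_eq_zero ha0

lemma F43_succ_eq_U1_V1_of_a1_eq (hbal : p.IsBalanced) (ha1 : p.a1 = -((n : ℂ) + 1))
    (hb1 : poch p.b1 (n + 2) ≠ 0) (hb2 : poch p.b2 (n + 1) ≠ 0) (hb3 : poch p.b3 (n + 1) ≠ 0)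
    (hd : p.b3 - p.a0 - 1 ≠ 0) :
    F43 p (n + 1) = U1 p * F43 (e1 p) (n + 1) + V1 p * F43 (e12 p) n := by
  have hb1_last : p.b1 + 1 + n ≠ 0 :=
    add_natCast_ne_zero_of_poch_succ_ne_zero (poch_add_one_ne_zero_of_poch_succ_ne_zero hb1)
  have hdefect := F43_contiguous_defect_eq_telescoper hbal (poch_ne_zero_of_poch_succ_ne_zero hb1)
    hb2 (poch_ne_zero_of_poch_succ_ne_zero hb3) hd
  have hlast := HGParam.telescoper_add_term_succ_of_a1_eq hbal ha1 hb1_last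
    (add_natCast_ne_zero_of_poch_succ_ne_zero hb3) hd
  simp only [F43_succ]
  linear_combination hdefect + hlast

lemma F43_succ_eq_U2_V2_of_a0_eq (hbal : p.IsBalanced) (ha0 : p.a0 = -((n : ℂ) + 1))
    (hb1 : poch p.b1 (n + 1) ≠ 0) (hb2 : poch p.b2 (n + 2) ≠ 0) (hb3 : poch p.b3 (n + 1) ≠ 0)
    (hd : p.b3 - p.a1 - 1 ≠ 0) :
    F43 p (n + 1) = U2 p * F43 (e2 p) (n + 1) + V2 p * F43 (e12 p) n := by
  rw [← F43_swap p, ← F43_swap (e2 p), ← F43_swap (e12 p), ← U1_swap, ← V1_swap]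
  exact F43_succ_eq_U1_V1_of_a1_eq hbal.swap ha0 hb2 hb1 hb3 hd

end ContiguousRelations

/-- Three-term relation for terminating balanced `₄F₃(·;1)`:
`₄F₃(α;1) = q₁⁽⁰⁾(α) ₄F₃(α+e₁₂;1) + q₂⁽⁰⁾(α) ₄F₃(α+2e₁₂;1)`. -/
theorem stmt_13 (N : ℕ) (hN : 2 ≤ N) (p : HGParam) (hp0 : p.a0 = -(N : ℂ))
    (hbal : p.b1 + p.b2 + p.b3 - p.a0 - p.a1 - p.a2 - p.a3 = 1)
    (h1 : p.b1 ≠ 0) (h2 : p.b2 ≠ 0) (h3 : p.b1 + 1 ≠ 0) (h4 : p.b2 + 1 ≠ 0)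
    (h5 : p.b3 - p.a0 - 1 ≠ 0) (h6 : p.b3 - p.a0 - 2 ≠ 0) (h7 : p.b3 - p.a1 - 1 ≠ 0)
    (h8 : U1 (e12 p) ≠ 0)
    (hpochb : ∀ k ≤ N, poch p.b1 k ≠ 0 ∧ poch p.b2 k ≠ 0 ∧ poch p.b3 k ≠ 0)
    (hpochb1 : ∀ k ≤ N - 1, poch (p.b1 + 1) k ≠ 0 ∧ poch (p.b2 + 1) k ≠ 0)
    (hpochb2 : ∀ k ≤ N - 2, poch (p.b1 + 2) k ≠ 0 ∧ poch (p.b2 + 2) k ≠ 0) :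
    F43 p N = q1 p * F43 (e12 p) (N - 1) + q2 p * F43 (e12 (e12 p)) (N - 2) := by
  obtain ⟨n, rfl⟩ := Nat.exists_eq_add_of_le' hN
  push_cast at hp0
  have ha0 : (e1 p).a0 = -((n : ℂ) + 1) := by
    simp only [e1, hp0]
    ring
  replace hbal : p.IsBalanced := hbal
  have rel_p : F43 p (n + 2) = U1 p * F43 (e1 p) (n + 1) + V1 p * F43 (e12 p) (n + 1) :=
    F43_succ_eq_U1_V1_of_a0_eq hbal (by push_cast; linear_combination hp0)
      (hpochb _ le_rfl).1 (hpochb _ le_rfl).2.1 (hpochb _ (by lia)).2.2 h5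
  -- The shifts commute definitionally: `e2 (e1 p) = e12 p` and `e12 (e1 p) = e1 (e12 p)`.
  have rel_e1 : F43 (e1 p) (n + 1) =
      U2 (e1 p) * F43 (e12 p) (n + 1) + V2 (e1 p) * F43 (e1 (e12 p)) n :=
    F43_succ_eq_U2_V2_of_a0_eq hbal.e1 ha0
      (hpochb1 _ le_rfl).1 (hpochb _ le_rfl).2.1 (hpochb _ (by lia)).2.2 h7
  have rel_e12 : F43 (e12 p) (n + 1) =
      U1 (e12 p) * F43 (e1 (e12 p)) n + V1 (e12 p) * F43 (e12 (e12 p)) n :=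
    F43_succ_eq_U1_V1_of_a0_eq hbal.e12 ha0
      (hpochb1 _ le_rfl).1 (hpochb1 _ le_rfl).2 (hpochb _ (by lia)).2.2
      (by convert h6 using 1; simp only [e12]; ring)
  simp only [Nat.add_sub_cancel, show n + 2 - 1 = n + 1 from rfl]
  rw [rel_p, rel_e1, q1, q2]
  field_simp
  linear_combination -(U1 p * V2 (e1 p)) * rel_e12

end Stmt13
end

section
/- Let A = (A₀, A₁, A₂, A₃) ∈ ℂ⁴ and assume: 2A₀ is not an integer ≥ 2 (so (1−A₀)_k and (3/2−A₀)_n never vanish), and neither A₀+A₁−A₂−A₃ nor A₀+A₁+A₂+A₃ is an odd integer (so (A₊₊₋₋−n)_k and (A₊₊₊₊−n)_k never vanish for 0 ≤ k ≤ n). Define, for n ∈ ℕ, Cₙ := [(A₋₋₋₋)ₙ(A₋₋₊₊)ₙ / (n!·(3/2−A₀)ₙ)] · Σ_{k=0}^{n} (−n)_k(A₀−n)_k(A₋₊₋₊)_k(A₋₊₊₋)_k / ((A₊₊₋₋−n)_k(A₊₊₊₊−n)_k(1−A₀)_k·k!). Then C₀ = 1 and, with C₋₁ := 0, for every integer n ≥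 1: n(n−2A₀)(2n−2A₀−1)(2n−2A₀+1)·Cₙ = (2(n−A₀)−1)²·(2n² − 4A₀n + A₀² + A₁² − A₂² − A₃² + 1 − 2(n−A₀))·C_{n−1} − 4(n−A₀−A₂−1)(n−A₀+A₂−1)(n−A₀−A₃−1)(n−A₀+A₃−1)·C_{n−2}. (These Cₙ are the coefficients of the holomorphic solution f⁽⁰,⁰⁾(A; x) of Z(A) at x = 0.) -/
namespace Stmt15

/-- The Pochhammer symbol `(a)ₖ = a(a+1)⋯(a+k−1)`. -/
noncomputable def poch (a : ℂ) (k : ℕ) : ℂ := ∏ i ∈ Finset.range k, (a + (i : ℂ))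

/-- The coefficients of the holomorphic solution `f⁽⁰,⁰⁾(A;x)` of `Z(A)` at `x = 0`:
`Cₙ = (A₋₋₋₋)ₙ(A₋₋₊₊)ₙ/(n!(3/2−A₀)ₙ) ·
₄F₃(−n, A₀−n, A₋₊₋₊, A₋₊₊₋; A₊₊₋₋−n, A₊₊₊₊−n, 1−A₀; 1)`. -/
noncomputable def C (A₀ A₁ A₂ A₃ : ℂ) (n : ℕ) : ℂ :=
  poch ((-A₀ - A₁ - A₂ - A₃ + 1) / 2) n * poch ((-A₀ - A₁ + A₂ + A₃ + 1) / 2) n /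
      ((Nat.factorial n : ℂ) * poch (3 / 2 - A₀) n) *
    ∑ k ∈ Finset.range (n + 1),
      poch (-(n : ℂ)) k * poch (A₀ - (n : ℂ)) k * poch ((-A₀ + A₁ - A₂ + A₃ + 1) / 2) k
          * poch ((-A₀ + A₁ + A₂ - A₃ + 1) / 2) k /
        (poch ((A₀ + A₁ - A₂ - A₃ + 1) / 2 - (n : ℂ)) k
          * poch ((A₀ + A₁ + A₂ + A₃ + 1) / 2 - (n : ℂ)) k
          * poch (1 - A₀) k * (Nat.factorial k : ℂ))

/-!
With `e = 1 - A₀`, reversing Pochhammer symbols turns the terminating `₄F₃` into a Cauchy product: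
`Cₙ = (e)ₙ / (e + 1/2)ₙ * Sₙ`, where `Sₙ` is the `n`-th coefficient of
`₂F₁(a, b; e; x) * ₂F₁(c, d; e; x)` with `a, b, c, d` equal to `A₋₋₋₋, A₋₋₊₊, A₋₊₋₊, A₋₊₊₋`.

These parameters satisfy `a + b + c + d = 2e`. Under this relation a suitable multiple of `Sₙ₊₂`
can be lowered twice by the two-term recurrences of the factors, and each time what remains is a
multiple of `Sₙ₊₁`, then of `Sₙ`. The factor `(e)ₙ / (e + 1/2)ₙ` turns the resulting three-term
recurrence into `Rc₀(A)`.
-/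

open Finset
open scoped Nat

section CauchyProduct

variable {R : Type*} [CommRing R]

/-- The Cauchy product of two sequences: the coefficients of the product of their generating
series. -/
def cauchyProduct (u v : ℕ → R) (n : ℕ) : R :=
  ∑ p ∈ antidiagonal n, u p.1 * v p.2

/-- The Cauchy product of two sequences in which the term `u i * v j` carries the weight `f i j`.
The weight is a function on the ring, so that polynomial weights can be shifted and compared by
ring identities. -/
def weightedCauchyProduct (f : R → R → R) (u v : ℕ → R) (n : ℕ) : R :=
  ∑ p ∈ antidiagonal n, f p.1 p.2 * (u p.1 * v p.2)

lemma weightedCauchyProduct_const (r : R) (u v : ℕ → R) (n : ℕ) :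
    weightedCauchyProduct (fun _ _ ↦ r) u v n = r * cauchyProduct u v n := by
  rw [weightedCauchyProduct, cauchyProduct, mul_sum]

lemma weightedCauchyProduct_add (f g : R → R → R) (u v : ℕ → R) (n : ℕ) :
    weightedCauchyProduct (fun x y ↦ f x y + g x y) u v n =
      weightedCauchyProduct f u v n + weightedCauchyProduct g u v n := by
  simp only [weightedCauchyProduct, add_mul, sum_add_distrib]

lemma weightedCauchyProduct_congr {f g : R → R → R} {n : ℕ}
    (hfg : ∀ x y : R, x + y = n → f x y = g x y) (u v : ℕ → R) :
    weightedCauchyProduct f u v n = weightedCauchyProduct g u v n := by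
  refine sum_congr rfl fun p hp ↦ ?_
  rw [hfg _ _ (by rw [← Nat.cast_add, mem_antidiagonal.mp hp])]

lemma weightedCauchyProduct_swap (f : R → R → R) (u v : ℕ → R) (n : ℕ) :
    weightedCauchyProduct f u v n = weightedCauchyProduct (fun x y ↦ f y x) v u n := by
  rw [weightedCauchyProduct, ← Nat.sum_antidiagonal_swap]
  simp only [weightedCauchyProduct, Prod.fst_swap, Prod.snd_swap, mul_comm]

/-- The two-term recurrence of the coefficients of `₂F₁(a, b; e; x)`, written without division. -/
def IsHypergeometricSeq (a b e : R) (u : ℕ → R) : Prop :=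
  ∀ j : ℕ, (j + 1) * (j + e) * u (j + 1) = (j + a) * (j + b) * u j

namespace IsHypergeometricSeq

variable {a b c d e : R} {u v : ℕ → R}

lemma weightedCauchyProduct_succ_left (hu : IsHypergeometricSeq a b e u) (v : ℕ → R)
    (f : R → R → R) (n : ℕ) :
    weightedCauchyProduct (fun x y ↦ x * (x + e - 1) * f x y) u v (n + 1) =
      weightedCauchyProduct (fun x y ↦ (x + a) * (x + b) * f (x + 1) y) u v n := by
  rw [weightedCauchyProduct, Nat.sum_antidiagonal_succ]
  simp only [Nat.cast_zero, zero_mul, zero_add]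
  refine sum_congr rfl fun p _ ↦ ?_
  push_cast
  linear_combination (f (p.1 + 1) p.2 * v p.2) * hu p.1

lemma weightedCauchyProduct_succ_right (hv : IsHypergeometricSeq c d e v) (u : ℕ → R)
    (f : R → R → R) (n : ℕ) :
    weightedCauchyProduct (fun x y ↦ y * (y + e - 1) * f x y) u v (n + 1) =
      weightedCauchyProduct (fun x y ↦ (y + c) * (y + d) * f x (y + 1)) u v n := by
  rw [weightedCauchyProduct_swap, hv.weightedCauchyProduct_succ_left u (fun y x ↦ f x y),
    weightedCauchyProduct_swap]

lemma weightedCauchyProduct_succ (hu : IsHypergeometricSeq a b e u)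
    (hv : IsHypergeometricSeq c d e v) (f g : R → R → R) (n : ℕ) :
    weightedCauchyProduct (fun x y ↦ x * (x + e - 1) * f x y + y * (y + e - 1) * g x y)
        u v (n + 1) =
      weightedCauchyProduct
        (fun x y ↦ (x + a) * (x + b) * f (x + 1) y + (y + c) * (y + d) * g x (y + 1)) u v n := by
  rw [weightedCauchyProduct_add, hu.weightedCauchyProduct_succ_left,
    hv.weightedCauchyProduct_succ_right, ← weightedCauchyProduct_add]

lemma mul_cauchyProduct_one (hu : IsHypergeometricSeq a b e u) (hv : IsHypergeometricSeq c d e v) :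
    e * cauchyProduct u v 1 = (a * b + c * d) * cauchyProduct u v 0 := by
  have hu₀ := hu 0
  have hv₀ := hv 0
  simp only [Nat.cast_zero, zero_add, one_mul] at hu₀ hv₀
  simp only [cauchyProduct, Nat.sum_antidiagonal_succ, Nat.antidiagonal_zero, sum_singleton,
    zero_add]
  linear_combination v 0 * hu₀ + u 0 * hv₀

theorem cauchyProduct_recurrence (hu : IsHypergeometricSeq a b e u)
    (hv : IsHypergeometricSeq c d e v) (habcd : a + b + c + d = 2 * e) (m : ℕ) :
    (m + 2) * (m + 2 * e) * (m + e + 1) * (m + e) * cauchyProduct u v (m + 2) =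
      (m + e) * (2 * m + 2 * e + 1) * ((m + 1) * (m + 2 * e) + a * b + c * d)
          * cauchyProduct u v (m + 1)
        - (m + a + c) * (m + b + d) * (m + a + d) * (m + b + c) * cauchyProduct u v m := by
  have ha : a = 2 * e - b - c - d := by linear_combination habcd
  -- `f₂, g₂` are chosen so that their combination below is constant on `x + y = m + 2`. Lowering it
  -- leaves a constant plus a weight that can be lowered again, which determines `f₁, g₁`.
  let f₂ : R → R → R := fun _ y ↦ (m + e) * (m + 2 * e + 2 * y)
  let g₂ : R → R → R := fun x _ ↦ (m + e) * (m + 2 * e + 2 * x)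
  let f₁ : R → R → R := fun _ y ↦ (m + a + d) * (m + b + d) + 2 * (m + e) * (y + c)
  let g₁ : R → R → R := fun x _ ↦ (m + b + c) * (m + b + d) + 2 * (m + e) * (x + a)
  calc
    _ = weightedCauchyProduct (fun x y ↦ x * (x + e - 1) * f₂ x y + y * (y + e - 1) * g₂ x y)
          u v (m + 2) := by
      rw [← weightedCauchyProduct_const]
      refine weightedCauchyProduct_congr (fun x y hxy ↦ ?_) u v
      obtain rfl : y = m + 2 - x := by push_cast at hxy; linear_combination hxy
      ring
    _ = weightedCauchyProduct
          (fun x y ↦ (x + a) * (x + b) * f₂ (x + 1) y + (y + c) * (y + d) * g₂ x (y + 1))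
          u v (m + 1) := hu.weightedCauchyProduct_succ hv f₂ g₂ (m + 1)
    _ = (m + e) * (2 * m + 2 * e + 1) * ((m + 1) * (m + 2 * e) + a * b + c * d)
            * cauchyProduct u v (m + 1)
          - weightedCauchyProduct
            (fun x y ↦ x * (x + e - 1) * f₁ x y + y * (y + e - 1) * g₁ x y) u v (m + 1) := by
      rw [← weightedCauchyProduct_const, eq_sub_iff_add_eq, ← weightedCauchyProduct_add]
      refine weightedCauchyProduct_congr (fun x y hxy ↦ ?_) u v
      obtain rfl : y = m + 1 - x := by push_cast at hxy; linear_combination hxy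
      simp only [f₁, f₂, g₁, g₂, ha]
      ring
    _ = _ := by
      rw [hu.weightedCauchyProduct_succ hv, ← weightedCauchyProduct_const _ u v m]
      congr 1
      refine weightedCauchyProduct_congr (fun x y hxy ↦ ?_) u v
      obtain rfl : y = m - x := by linear_combination hxy
      simp only [f₁, g₁, ha]
      ring

theorem rescaled_cauchyProduct_recurrence (hu : IsHypergeometricSeq a b e u)
    (hv : IsHypergeometricSeq c d e v) (habcd : a + b + c + d = 2 * e) {ρ : ℕ → R}
    (hρ : ∀ n : ℕ, (2 * n + 2 * e + 1) * ρ (n + 1) = 2 * (n + e) * ρ n) (m : ℕ) :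
    (m + 2) * (m + 2 * e) * (2 * m + 2 * e + 1) * (2 * m + 2 * e + 3)
        * (ρ (m + 2) * cauchyProduct u v (m + 2)) =
      2 * (2 * m + 2 * e + 1) ^ 2 * ((m + 1) * (m + 2 * e) + a * b + c * d)
          * (ρ (m + 1) * cauchyProduct u v (m + 1))
        - 4 * (m + a + c) * (m + b + d) * (m + a + d) * (m + b + c)
          * (ρ m * cauchyProduct u v m) := by
  have hρ₁ := hρ (m + 1)
  push_cast at hρ₁
  linear_combination 4 * ρ m * hu.cauchyProduct_recurrence hv habcd m
    + (m + 2) * (m + 2 * e) * (2 * m + 2 * e + 1) * cauchyProduct u v (m + 2) * hρ₁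
    + (2 * (m + 2) * (m + 2 * e) * (m + e + 1) * cauchyProduct u v (m + 2)
      - 2 * (2 * m + 2 * e + 1) * ((m + 1) * (m + 2 * e) + a * b + c * d)
        * cauchyProduct u v (m + 1)) * hρ m

lemma rescaled_cauchyProduct_one (hu : IsHypergeometricSeq a b e u)
    (hv : IsHypergeometricSeq c d e v) {ρ : ℕ → R}
    (hρ : ∀ n : ℕ, (2 * n + 2 * e + 1) * ρ (n + 1) = 2 * (n + e) * ρ n) :
    (2 * e + 1) * (ρ 1 * cauchyProduct u v 1) =
      2 * (a * b + c * d) * (ρ 0 * cauchyProduct u v 0) := by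
  have hρ₀ := hρ 0
  simp only [Nat.cast_zero, mul_zero, zero_add] at hρ₀
  linear_combination 2 * ρ 0 * hu.mul_cauchyProduct_one hv + cauchyProduct u v 1 * hρ₀

end IsHypergeometricSeq

end CauchyProduct

lemma ascPochhammer_eval_add {R : Type*} [CommSemiring R] (a : R) (j k : ℕ) :
    (ascPochhammer R (j + k)).eval a =
      (ascPochhammer R j).eval a * (ascPochhammer R k).eval (a + j) := by
  simp [← ascPochhammer_mul]

lemma ascPochhammer_eval_one_sub_sub {R : Type*} [Ring R] (a : R) (j k : ℕ) :
    (ascPochhammer R k).eval (1 - a - (j + k : ℕ)) =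
      (-1) ^ k * (ascPochhammer R k).eval (a + j) := by
  rw [show 1 - a - ((j + k : ℕ) : R) = -(a + j + k - 1) by push_cast; abel,
    ascPochhammer_eval_neg_eq_descPochhammer, descPochhammer_eval_eq_ascPochhammer]
  congr 2
  abel

lemma ascPochhammer_eval_ne_zero {R : Type*} [Ring R] [IsDomain R] {a : R}
    (ha : ∀ i : ℕ, (i : R) ≠ -a) (n : ℕ) : (ascPochhammer R n).eval a ≠ 0 := by
  rw [ne_eq, ascPochhammer_eval_eq_zero_iff]
  rintro ⟨i, -, hi⟩
  exact ha i hi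

section HypergeometricCoefficient

variable {𝕂 : Type*} [Field 𝕂] [CharZero 𝕂] {a b e : 𝕂}

lemma isHypergeometricSeq_ordinaryHypergeometricCoefficient (a b : 𝕂)
    (he : ∀ i : ℕ, (i : 𝕂) ≠ -e) :
    IsHypergeometricSeq a b e (ordinaryHypergeometricCoefficient a b e) := by
  intro j
  have hej := ascPochhammer_eval_ne_zero he j
  have hej' : e + j ≠ 0 := fun h ↦ he j (by linear_combination h)
  have hj := Nat.cast_add_one_ne_zero (R := 𝕂) j
  have hfact : (j ! : 𝕂) ≠ 0 := Nat.cast_ne_zero.mpr j.factorial_ne_zero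
  simp only [ordinaryHypergeometricCoefficient, ascPochhammer_succ_eval, Nat.factorial_succ,
    Nat.cast_mul, Nat.cast_succ]
  field_simp
  ring

lemma ordinaryHypergeometricCoefficient_add_mul (ha : ∀ i : ℕ, (i : 𝕂) ≠ -a)
    (hb : ∀ i : ℕ, (i : 𝕂) ≠ -b) (he : ∀ i : ℕ, (i : 𝕂) ≠ -e) (j k : ℕ) :
    ordinaryHypergeometricCoefficient a b e (j + k) *
        ((ascPochhammer 𝕂 k).eval (-((j + k : ℕ) : 𝕂))
            * (ascPochhammer 𝕂 k).eval (1 - e - (j + k : ℕ)) /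
          ((ascPochhammer 𝕂 k).eval (1 - a - (j + k : ℕ))
            * (ascPochhammer 𝕂 k).eval (1 - b - (j + k : ℕ)))) =
      ordinaryHypergeometricCoefficient a b e j := by
  have hone : ∀ i : ℕ, (i : 𝕂) ≠ -1 := fun i hi ↦
    Nat.cast_add_one_ne_zero (R := 𝕂) i (by linear_combination hi)
  have hane := ascPochhammer_eval_ne_zero ha (j + k)
  have hbne := ascPochhammer_eval_ne_zero hb (j + k)
  have hene := ascPochhammer_eval_ne_zero he (j + k)
  have hone_ne := ascPochhammer_eval_ne_zero hone (j + k)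
  have hneg : (ascPochhammer 𝕂 k).eval (-((j + k : ℕ) : 𝕂)) =
      (-1) ^ k * (ascPochhammer 𝕂 k).eval (1 + (j : 𝕂)) := by
    rw [← ascPochhammer_eval_one_sub_sub, sub_self, zero_sub]
  rw [ascPochhammer_eval_add, mul_ne_zero_iff] at hane hbne hene hone_ne
  obtain ⟨ha₁, ha₂⟩ := hane
  obtain ⟨hb₁, hb₂⟩ := hbne
  obtain ⟨he₁, he₂⟩ := hene
  obtain ⟨h₁, h₂⟩ := hone_ne
  simp only [ordinaryHypergeometricCoefficient, hneg, ascPochhammer_eval_one_sub_sub,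
    Nat.cast_factorial, ascPochhammer_eval_add]
  field_simp

theorem cauchyProduct_ordinaryHypergeometricCoefficient (ha : ∀ i : ℕ, (i : 𝕂) ≠ -a)
    (hb : ∀ i : ℕ, (i : 𝕂) ≠ -b) (c d : 𝕂) (he : ∀ i : ℕ, (i : 𝕂) ≠ -e) (n : ℕ) :
    cauchyProduct (ordinaryHypergeometricCoefficient a b e)
        (ordinaryHypergeometricCoefficient c d e) n =
      ordinaryHypergeometricCoefficient a b e n *
        ∑ k ∈ range (n + 1),
          (ascPochhammer 𝕂 k).eval (-(n : 𝕂)) * (ascPochhammer 𝕂 k).eval (1 - e - n)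
              * (ascPochhammer 𝕂 k).eval c * (ascPochhammer 𝕂 k).eval d /
            ((ascPochhammer 𝕂 k).eval (1 - b - n) * (ascPochhammer 𝕂 k).eval (1 - a - n)
              * (ascPochhammer 𝕂 k).eval e * k !) := by
  rw [cauchyProduct, ← Nat.sum_antidiagonal_swap,
    Nat.sum_antidiagonal_eq_sum_range_succ_mk, mul_sum]
  refine sum_congr rfl fun k hk ↦ ?_
  obtain ⟨j, rfl⟩ := Nat.exists_eq_add_of_le' (mem_range_succ_iff.mp hk)
  simp only [Prod.swap, Nat.add_sub_cancel]
  rw [← ordinaryHypergeometricCoefficient_add_mul ha hb he j k]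
  simp only [ordinaryHypergeometricCoefficient, div_eq_mul_inv, mul_inv]
  ring

end HypergeometricCoefficient

lemma poch_eq_ascPochhammer_eval (a : ℂ) (n : ℕ) : poch a n = (ascPochhammer ℂ n).eval a := by
  induction n with
  | zero => simp [poch]
  | succ n ih => rw [poch, prod_range_succ, ← poch, ih, ascPochhammer_succ_eval]

/-- The coefficients of `₂F₁(A₋₋₋₋, A₋₋₊₊; 1 - A₀; x)`, the first of the two series whose product
gives `C` up to the factor `rescaling`. -/
noncomputable def leftFactor (A₀ A₁ A₂ A₃ : ℂ) : ℕ → ℂ :=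
  ordinaryHypergeometricCoefficient ((-A₀ - A₁ - A₂ - A₃ + 1) / 2) ((-A₀ - A₁ + A₂ + A₃ + 1) / 2)
    (1 - A₀)

/-- The coefficients of `₂F₁(A₋₊₋₊, A₋₊₊₋; 1 - A₀; x)`, the second of the two series whose product
gives `C` up to the factor `rescaling`. -/
noncomputable def rightFactor (A₀ A₁ A₂ A₃ : ℂ) : ℕ → ℂ :=
  ordinaryHypergeometricCoefficient ((-A₀ + A₁ - A₂ + A₃ + 1) / 2) ((-A₀ + A₁ + A₂ - A₃ + 1) / 2)
    (1 - A₀)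

lemma isHypergeometricSeq_leftFactor {A₀ : ℂ} (A₁ A₂ A₃ : ℂ)
    (hA₀ : ∀ i : ℕ, (i : ℂ) ≠ -(1 - A₀)) :
    IsHypergeometricSeq ((-A₀ - A₁ - A₂ - A₃ + 1) / 2) ((-A₀ - A₁ + A₂ + A₃ + 1) / 2)
      (1 - A₀) (leftFactor A₀ A₁ A₂ A₃) :=
  isHypergeometricSeq_ordinaryHypergeometricCoefficient _ _ hA₀

lemma isHypergeometricSeq_rightFactor {A₀ : ℂ} (A₁ A₂ A₃ : ℂ)
    (hA₀ : ∀ i : ℕ, (i : ℂ) ≠ -(1 - A₀)) :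
    IsHypergeometricSeq ((-A₀ + A₁ - A₂ + A₃ + 1) / 2) ((-A₀ + A₁ + A₂ - A₃ + 1) / 2)
      (1 - A₀) (rightFactor A₀ A₁ A₂ A₃) :=
  isHypergeometricSeq_ordinaryHypergeometricCoefficient _ _ hA₀

/-- The ratio `(1 - A₀)ₙ / (3/2 - A₀)ₙ` between `C` and the coefficients of the product of the two
`₂F₁` series. -/
noncomputable def rescaling (A₀ : ℂ) (n : ℕ) : ℂ :=
  poch (1 - A₀) n / poch (3 / 2 - A₀) n

lemma rescaling_succ {A₀ : ℂ} (hA₀ : ∀ i : ℕ, (i : ℂ) ≠ -(3 / 2 - A₀)) (n : ℕ) :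
    (2 * n + 2 * (1 - A₀) + 1) * rescaling A₀ (n + 1) = 2 * (n + (1 - A₀)) * rescaling A₀ n := by
  have hne := ascPochhammer_eval_ne_zero hA₀ n
  have hn : 3 / 2 - A₀ + n ≠ 0 := fun h ↦ hA₀ n (by linear_combination h)
  simp only [rescaling, poch_eq_ascPochhammer_eval, ascPochhammer_succ_eval]
  rw [mul_div_assoc', mul_div_assoc', div_eq_div_iff (mul_ne_zero hne hn) hne]
  ring

lemma C_eq_rescaling_mul_cauchyProduct {A₀ A₁ A₂ A₃ : ℂ} (hA₀ : ∀ i : ℕ, (i : ℂ) ≠ -(1 - A₀))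
    (ha : ∀ i : ℕ, (i : ℂ) ≠ -((-A₀ - A₁ - A₂ - A₃ + 1) / 2))
    (hb : ∀ i : ℕ, (i : ℂ) ≠ -((-A₀ - A₁ + A₂ + A₃ + 1) / 2)) (n : ℕ) :
    C A₀ A₁ A₂ A₃ n =
      rescaling A₀ n * cauchyProduct (leftFactor A₀ A₁ A₂ A₃) (rightFactor A₀ A₁ A₂ A₃) n := by
  have hne := ascPochhammer_eval_ne_zero hA₀ n
  rw [leftFactor, rightFactor, cauchyProduct_ordinaryHypergeometricCoefficient ha hb _ _ hA₀,
    C, rescaling, ← mul_assoc]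
  simp only [poch_eq_ascPochhammer_eval, ordinaryHypergeometricCoefficient]
  congr 1
  · field_simp
  · ring_nf

theorem stmt_15_general (A₀ A₁ A₂ A₃ : ℂ)
    (hA0 : ∀ m : ℕ, 2 ≤ m → 2 * A₀ ≠ (m : ℂ))
    (hodd1 : ∀ m : ℕ, Odd m → A₀ + A₁ - A₂ - A₃ ≠ (m : ℂ))
    (hodd2 : ∀ m : ℕ, Odd m → A₀ + A₁ + A₂ + A₃ ≠ (m : ℂ)) :
    C A₀ A₁ A₂ A₃ 0 = 1 ∧
    ∀ n : ℕ, 1 ≤ n →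
      (n : ℂ) * ((n : ℂ) - 2 * A₀) * (2 * (n : ℂ) - 2 * A₀ - 1) * (2 * (n : ℂ) - 2 * A₀ + 1)
          * C A₀ A₁ A₂ A₃ n
        = (2 * ((n : ℂ) - A₀) - 1) ^ 2
            * (2 * (n : ℂ) ^ 2 - 4 * A₀ * (n : ℂ) + A₀ ^ 2 + A₁ ^ 2 - A₂ ^ 2 - A₃ ^ 2 + 1
                - 2 * ((n : ℂ) - A₀)) * C A₀ A₁ A₂ A₃ (n - 1)
          - 4 * ((n : ℂ) - A₀ - A₂ - 1) * ((n : ℂ) - A₀ + A₂ - 1)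
              * ((n : ℂ) - A₀ - A₃ - 1) * ((n : ℂ) - A₀ + A₃ - 1)
              * (if n = 1 then 0 else C A₀ A₁ A₂ A₃ (n - 2)) := by
  have he : ∀ i : ℕ, (i : ℂ) ≠ -(1 - A₀) := fun i hi ↦
    hA0 (2 * i + 2) (by lia) (by push_cast; linear_combination -2 * hi)
  have he' : ∀ i : ℕ, (i : ℂ) ≠ -(3 / 2 - A₀) := fun i hi ↦
    hA0 (2 * i + 3) (by lia) (by push_cast; linear_combination -2 * hi)
  have ha : ∀ i : ℕ, (i : ℂ) ≠ -((-A₀ - A₁ - A₂ - A₃ + 1) / 2) := fun i hi ↦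
    hodd2 (2 * i + 1) ⟨i, rfl⟩ (by push_cast; linear_combination -2 * hi)
  have hb : ∀ i : ℕ, (i : ℂ) ≠ -((-A₀ - A₁ + A₂ + A₃ + 1) / 2) := fun i hi ↦
    hodd1 (2 * i + 1) ⟨i, rfl⟩ (by push_cast; linear_combination -2 * hi)
  have hC := C_eq_rescaling_mul_cauchyProduct he ha hb
  have hleft := isHypergeometricSeq_leftFactor A₁ A₂ A₃ he
  have hright := isHypergeometricSeq_rightFactor A₁ A₂ A₃ he
  refine ⟨by simp [C, poch], fun n hn ↦ ?_⟩
  rcases n with _ | _ | m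
  · lia
  · have hone := hleft.rescaled_cauchyProduct_one hright (rescaling_succ he')
    rw [← hC, ← hC] at hone
    simp only [zero_add, Nat.sub_self, Nat.cast_one, if_true]
    linear_combination (1 - 2 * A₀) ^ 2 * hone
  · have hrec := hleft.rescaled_cauchyProduct_recurrence hright (by ring) (rescaling_succ he') m
    rw [← hC, ← hC, ← hC] at hrec
    rw [if_neg (by lia), Nat.add_sub_cancel, Nat.add_sub_cancel m 2]
    push_cast
    linear_combination hrec

/-- The explicit `₄F₃(·;1)`-coefficients solve the recurrence `Rc₀(A)` with
`C₀ = 1` and the convention `C₋₁ = 0`. -/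
theorem stmt_15 (A₀ A₁ A₂ A₃ : ℂ)
    (hA0 : ∀ m : ℕ, 2 ≤ m → 2 * A₀ ≠ (m : ℂ))
    (hodd1 : ∀ m : ℤ, Odd m → A₀ + A₁ - A₂ - A₃ ≠ (m : ℂ))
    (hodd2 : ∀ m : ℤ, Odd m → A₀ + A₁ + A₂ + A₃ ≠ (m : ℂ)) :
    C A₀ A₁ A₂ A₃ 0 = 1 ∧
    ∀ n : ℕ, 1 ≤ n →
      (n : ℂ) * ((n : ℂ) - 2 * A₀) * (2 * (n : ℂ) - 2 * A₀ - 1) * (2 * (n : ℂ) - 2 * A₀ + 1)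
          * C A₀ A₁ A₂ A₃ n
        = (2 * ((n : ℂ) - A₀) - 1) ^ 2
            * (2 * (n : ℂ) ^ 2 - 4 * A₀ * (n : ℂ) + A₀ ^ 2 + A₁ ^ 2 - A₂ ^ 2 - A₃ ^ 2 + 1
                - 2 * ((n : ℂ) - A₀)) * C A₀ A₁ A₂ A₃ (n - 1)
          - 4 * ((n : ℂ) - A₀ - A₂ - 1) * ((n : ℂ) - A₀ + A₂ - 1)
              * ((n : ℂ) - A₀ - A₃ - 1) * ((n : ℂ) - A₀ + A₃ - 1)
              * (if n = 1 then 0 else C A₀ A₁ A₂ A₃ (n - 2)) :=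
  stmt_15_general A₀ A₁ A₂ A₃ hA0 (fun m hm ↦ mod_cast hodd1 m (mod_cast hm))
    fun m hm ↦ mod_cast hodd2 m (mod_cast hm)

end Stmt15
end

section
/- Let α, β, γ, a, b, c ∈ ℂ with a, b ∉ ℤ and with γ and c not nonpositive integers. Then for every n ∈ ℕ: Σ_{k=0}^{n} [(α)_k(β)_k / ((γ)_k·k!)] · [(a)_{n−k}(b)_{n−k} / ((c)_{n−k}·(n−k)!)] = [(a)ₙ(b)ₙ / ((c)ₙ·n!)] · Σ_{k=0}^{n} (−n)_k(1−c−n)_k(α)_k(β)_k / ((1−a−n)_k(1−b−n)_k(γ)_k·k!). Consequently, for |x| < 1, ₂F₁(α, β; γ; x)·₂F₁(a, b; c; x) = Σ_{n≥0} xⁿ·[(a)ₙ(b)ₙ / ((c)ₙ·n!)]·₄F₃(−n, 1−c−n, α, β; 1−a−n, 1−b−n, γ; 1). -/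
namespace Stmt16

/-- The Pochhammer symbol `(a)ₖ = a(a+1)⋯(a+k−1)`. -/
noncomputable def poch (a : ℂ) (k : ℕ) : ℂ := ∏ i ∈ Finset.range k, (a + (i : ℂ))

/-!
Reversing a Pochhammer symbol gives `(z)ₙ = (z)ₙ₋ₖ · (-1)ᵏ (1-z-n)ₖ`. Since `n! = (1)ₙ`, applying
this to `a`, `b`, `c` and `1` turns the factor `(a)ₙ₋ₖ(b)ₙ₋ₖ/((c)ₙ₋ₖ(n-k)!)` of the Cauchy product
into `(a)ₙ(b)ₙ/((c)ₙn!)` times `(-n)ₖ(1-c-n)ₖ/((1-a-n)ₖ(1-b-n)ₖ)`; the four signs `(-1)ᵏ` cancel.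
-/

lemma ascPochhammer_eval_add_eq_mul_reflect {R : Type*} [CommRing R] (z : R) (m k : ℕ) :
    (ascPochhammer R (m + k)).eval z =
      (ascPochhammer R m).eval z *
        ((-1) ^ k * (ascPochhammer R k).eval (1 - z - ((m + k : ℕ) : R))) := by
  have reflect : (ascPochhammer R k).eval (z + (m : R)) =
      (-1) ^ k * (ascPochhammer R k).eval (1 - z - ((m + k : ℕ) : R)) := by
    have h := ascPochhammer_eval_neg_eq_descPochhammer R (-(z + (m : R))) k
    rw [neg_neg, descPochhammer_eval_eq_ascPochhammer] at h
    rw [h]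
    congr 2
    push_cast
    ring
  rw [← reflect, ← ascPochhammer_mul]
  simp

lemma ascPochhammer_eval_ne_zero {R : Type*} [CommRing R] [IsDomain R] {a : R}
    (ha : ∀ m : ℕ, a ≠ -(m : R)) (n : ℕ) : (ascPochhammer R n).eval a ≠ 0 := by
  rw [Ne, ascPochhammer_eval_eq_zero_iff]
  rintro ⟨m, -, hm⟩
  exact ha m (by rw [hm, neg_neg])

section Coefficients

variable {K : Type*} [Field K]

/-- The terminating hypergeometric value `₄F₃(-n, a₁, a₂, a₃; b₁, b₂, b₃; 1)`. Only the terms with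
`k ≤ n` are summed, so that the lower parameters may be integers `≤ -n`, for which the quotients
with `k > n` can be `0 / 0`. -/
noncomputable def terminating₄F₃ (n : ℕ) (a₁ a₂ a₃ b₁ b₂ b₃ : K) : K :=
  ∑ k ∈ Finset.range (n + 1),
    (ascPochhammer K k).eval (-(n : K)) * (ascPochhammer K k).eval a₁ *
        (ascPochhammer K k).eval a₂ * (ascPochhammer K k).eval a₃ /
      ((ascPochhammer K k).eval b₁ * (ascPochhammer K k).eval b₂ * (ascPochhammer K k).eval b₃ *
        (k.factorial : K))

variable [CharZero K] {a b c : K}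

lemma ordinaryHypergeometricCoefficient_eq_mul_reflect {m k : ℕ}
    (ha : (ascPochhammer K (m + k)).eval a ≠ 0) (hb : (ascPochhammer K (m + k)).eval b ≠ 0)
    (hc : (ascPochhammer K (m + k)).eval c ≠ 0) :
    ordinaryHypergeometricCoefficient a b c m =
      ordinaryHypergeometricCoefficient a b c (m + k) *
        ((ascPochhammer K k).eval (-((m + k : ℕ) : K)) *
            (ascPochhammer K k).eval (1 - c - ((m + k : ℕ) : K)) /
          ((ascPochhammer K k).eval (1 - a - ((m + k : ℕ) : K)) *
            (ascPochhammer K k).eval (1 - b - ((m + k : ℕ) : K)))) := by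
  have factorial_reflect : ((m + k).factorial : K) =
      m.factorial * ((-1) ^ k * (ascPochhammer K k).eval (-((m + k : ℕ) : K))) := by
    simpa only [ascPochhammer_eval_one, sub_self, zero_sub] using
      ascPochhammer_eval_add_eq_mul_reflect (1 : K) m k
  have factorial_ne_zero : ((m + k).factorial : K) ≠ 0 :=
    Nat.cast_ne_zero.mpr (m + k).factorial_ne_zero
  rw [factorial_reflect] at factorial_ne_zero
  rw [ascPochhammer_eval_add_eq_mul_reflect] at ha hb hc
  simp only [ordinaryHypergeometricCoefficient, factorial_reflect,
    ascPochhammer_eval_add_eq_mul_reflect _ m k]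
  simp only [mul_ne_zero_iff] at factorial_ne_zero ha hb hc
  obtain ⟨-, -, ha'⟩ := ha
  obtain ⟨-, -, hb'⟩ := hb
  obtain ⟨hc₀, -, hc'⟩ := hc
  obtain ⟨hm, hsign, hn⟩ := factorial_ne_zero
  field_simp

theorem sum_ordinaryHypergeometricCoefficient_mul (α β γ : K) {n : ℕ}
    (ha : (ascPochhammer K n).eval a ≠ 0) (hb : (ascPochhammer K n).eval b ≠ 0)
    (hc : (ascPochhammer K n).eval c ≠ 0) :
    ∑ k ∈ Finset.range (n + 1),
        ordinaryHypergeometricCoefficient α β γ k *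
          ordinaryHypergeometricCoefficient a b c (n - k) =
      ordinaryHypergeometricCoefficient a b c n *
        terminating₄F₃ n (1 - c - n) α β (1 - a - n) (1 - b - n) γ := by
  rw [terminating₄F₃, Finset.mul_sum]
  refine Finset.sum_congr rfl fun k hk ↦ ?_
  obtain ⟨m, rfl⟩ := Nat.exists_eq_add_of_le' (Finset.mem_range_succ_iff.mp hk)
  rw [Nat.add_sub_cancel, ordinaryHypergeometricCoefficient_eq_mul_reflect ha hb hc]
  simp only [ordinaryHypergeometricCoefficient, div_eq_mul_inv, mul_inv]
  ring

end Coefficients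

section Series

variable {𝕂 𝔸 : Type*} [RCLike 𝕂] [NormedDivisionRing 𝔸] [NormedAlgebra 𝕂 𝔸]

variable (𝔸) in
lemma one_le_radius_ordinaryHypergeometricSeries (a b c : 𝕂) :
    1 ≤ (ordinaryHypergeometricSeries 𝔸 a b c).radius := by
  by_cases habc : ∀ k : ℕ, (k : 𝕂) ≠ -a ∧ (k : 𝕂) ≠ -b ∧ (k : 𝕂) ≠ -c
  · exact (ordinaryHypergeometricSeries_radius_eq_one 𝔸 a b c habc).ge
  · simp only [not_forall, not_and_or, not_not, ← neg_eq_iff_eq_neg] at habc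
    obtain ⟨k, rfl | rfl | rfl⟩ := habc
    · simp only [ordinaryHypergeometric_radius_top_of_neg_nat₁, le_top]
    · simp only [ordinaryHypergeometric_radius_top_of_neg_nat₂, le_top]
    · simp only [ordinaryHypergeometric_radius_top_of_neg_nat₃, le_top]

lemma summable_norm_ordinaryHypergeometricCoefficient_smul_pow (a b c : 𝕂) {x : 𝔸}
    (hx : ‖x‖ < 1) :
    Summable fun n : ℕ ↦ ‖ordinaryHypergeometricCoefficient a b c n • x ^ n‖ := by
  have mem_ball : x ∈ Metric.eball (0 : 𝔸) (ordinaryHypergeometricSeries 𝔸 a b c).radius := by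
    refine Metric.eball_subset_eball (one_le_radius_ordinaryHypergeometricSeries 𝔸 a b c) ?_
    simpa [← ofReal_norm] using hx
  simpa only [ordinaryHypergeometricSeries_apply_eq] using
    (ordinaryHypergeometricSeries 𝔸 a b c).summable_norm_apply mem_ball

theorem hasSum_ordinaryHypergeometric_mul [CompleteSpace 𝔸] (α β γ : 𝕂) {a b c : 𝕂}
    (ha : ∀ m : ℕ, a ≠ -(m : 𝕂)) (hb : ∀ m : ℕ, b ≠ -(m : 𝕂)) (hc : ∀ m : ℕ, c ≠ -(m : 𝕂))
    {x : 𝔸} (hx : ‖x‖ < 1) :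
    HasSum
      (fun n : ℕ ↦ (ordinaryHypergeometricCoefficient a b c n *
        terminating₄F₃ n (1 - c - n) α β (1 - a - n) (1 - b - n) γ) • x ^ n)
      (₂F₁ α β γ x * ₂F₁ a b c x) := by
  simp only [ordinaryHypergeometric_eq_tsum]
  have summable_left := summable_norm_ordinaryHypergeometricCoefficient_smul_pow α β γ hx
  have summable_right := summable_norm_ordinaryHypergeometricCoefficient_smul_pow a b c hx
  convert hasSum_sum_range_mul_of_summable_norm summable_left summable_right using 2 with n
  rw [← sum_ordinaryHypergeometricCoefficient_mul α β γ (ascPochhammer_eval_ne_zero ha n)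
    (ascPochhammer_eval_ne_zero hb n) (ascPochhammer_eval_ne_zero hc n), Finset.sum_smul]
  refine Finset.sum_congr rfl fun k hk ↦ ?_
  rw [smul_mul_smul_comm, ← pow_add, Nat.add_sub_cancel' (Finset.mem_range_succ_iff.mp hk)]

theorem stmt_16_general [CompleteSpace 𝔸] (α β γ a b c : 𝕂)
    (ha : ∀ m : ℕ, a ≠ -(m : 𝕂)) (hb : ∀ m : ℕ, b ≠ -(m : 𝕂))
    (_hγ : ∀ m : ℕ, γ ≠ -(m : 𝕂)) (hc : ∀ m : ℕ, c ≠ -(m : 𝕂)) :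
    (∀ n : ℕ,
      ∑ k ∈ Finset.range (n + 1),
          ordinaryHypergeometricCoefficient α β γ k *
            ordinaryHypergeometricCoefficient a b c (n - k) =
        ordinaryHypergeometricCoefficient a b c n *
          terminating₄F₃ n (1 - c - n) α β (1 - a - n) (1 - b - n) γ) ∧
    ∀ x : 𝔸, ‖x‖ < 1 →
      HasSum
        (fun n : ℕ ↦ (ordinaryHypergeometricCoefficient a b c n *
          terminating₄F₃ n (1 - c - n) α β (1 - a - n) (1 - b - n) γ) • x ^ n)
        (₂F₁ α β γ x * ₂F₁ a b c x) :=
  ⟨fun n ↦ sum_ordinaryHypergeometricCoefficient_mul α β γ (ascPochhammer_eval_ne_zero ha n)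
    (ascPochhammer_eval_ne_zero hb n) (ascPochhammer_eval_ne_zero hc n),
    fun _ hx ↦ hasSum_ordinaryHypergeometric_mul α β γ ha hb hc hx⟩

end Series

lemma poch_eq_ascPochhammer_eval (a : ℂ) (k : ℕ) : poch a k = (ascPochhammer ℂ k).eval a := by
  induction k with
  | zero => simp [poch]
  | succ k ih => rw [ascPochhammer_succ_eval, ← ih, poch, poch, Finset.prod_range_succ]

lemma poch_mul_poch_div_eq_ordinaryHypergeometricCoefficient (a b c : ℂ) (n : ℕ) :
    poch a n * poch b n / (poch c n * (Nat.factorial n : ℂ)) =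
      ordinaryHypergeometricCoefficient a b c n := by
  simp only [poch_eq_ascPochhammer_eval, div_eq_mul_inv, mul_inv]
  ring

lemma sum_poch_div_eq_terminating₄F₃ (n : ℕ) (a₁ a₂ a₃ b₁ b₂ b₃ : ℂ) :
    ∑ k ∈ Finset.range (n + 1),
        poch (-(n : ℂ)) k * poch a₁ k * poch a₂ k * poch a₃ k /
          (poch b₁ k * poch b₂ k * poch b₃ k * (Nat.factorial k : ℂ)) =
      terminating₄F₃ n a₁ a₂ a₃ b₁ b₂ b₃ := by
  simp only [poch_eq_ascPochhammer_eval, terminating₄F₃]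

lemma tsum_poch_eq_ordinaryHypergeometric (a b c x : ℂ) :
    ∑' n : ℕ, poch a n * poch b n / (poch c n * (Nat.factorial n : ℂ)) * x ^ n = ₂F₁ a b c x := by
  simp only [poch_mul_poch_div_eq_ordinaryHypergeometricCoefficient,
    ordinaryHypergeometric_eq_tsum, smul_eq_mul]

/-- The Cauchy-product coefficients of two Gauss hypergeometric series are special
values `₄F₃(·;1)`, and consequently
`₂F₁(α,β;γ;x)·₂F₁(a,b;c;x) = Σₙ xⁿ (a)ₙ(b)ₙ/((c)ₙ n!) ₄F₃(−n,1−c−n,α,β;1−a−n,1−b−n,γ;1)`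
for `|x| < 1`. -/
theorem stmt_16 (α β γ a b c : ℂ)
    (ha : ∀ m : ℤ, a ≠ (m : ℂ)) (hb : ∀ m : ℤ, b ≠ (m : ℂ))
    (hγ : ∀ m : ℕ, γ ≠ -(m : ℂ)) (hc : ∀ m : ℕ, c ≠ -(m : ℂ)) :
    (∀ n : ℕ,
      ∑ k ∈ Finset.range (n + 1),
          (poch α k * poch β k / (poch γ k * (Nat.factorial k : ℂ)))
            * (poch a (n - k) * poch b (n - k)
                / (poch c (n - k) * (Nat.factorial (n - k) : ℂ)))
        = (poch a n * poch b n / (poch c n * (Nat.factorial n : ℂ)))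
            * ∑ k ∈ Finset.range (n + 1),
                poch (-(n : ℂ)) k * poch (1 - c - (n : ℂ)) k * poch α k * poch β k /
                  (poch (1 - a - (n : ℂ)) k * poch (1 - b - (n : ℂ)) k * poch γ k
                    * (Nat.factorial k : ℂ)))
    ∧ ∀ x : ℂ, ‖x‖ < 1 →
        (∑' n : ℕ, poch α n * poch β n / (poch γ n * (Nat.factorial n : ℂ)) * x ^ n)
          * (∑' n : ℕ, poch a n * poch b n / (poch c n * (Nat.factorial n : ℂ)) * x ^ n)
          = ∑' n : ℕ, x ^ n * (poch a n * poch b n / (poch c n * (Nat.factorial n : ℂ)))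
              * ∑ k ∈ Finset.range (n + 1),
                  poch (-(n : ℂ)) k * poch (1 - c - (n : ℂ)) k * poch α k * poch β k /
                    (poch (1 - a - (n : ℂ)) k * poch (1 - b - (n : ℂ)) k * poch γ k
                      * (Nat.factorial k : ℂ)) := by
  have ne_neg_nat {z : ℂ} (hz : ∀ m : ℤ, z ≠ m) (m : ℕ) : z ≠ -(m : ℂ) := by
    exact_mod_cast hz (-m)
  obtain ⟨coeff, series⟩ :=
    stmt_16_general (𝔸 := ℂ) α β γ a b c (ne_neg_nat ha) (ne_neg_nat hb) hγ hc
  simp only [tsum_poch_eq_ordinaryHypergeometric]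
  simp only [sum_poch_div_eq_terminating₄F₃,
    poch_mul_poch_div_eq_ordinaryHypergeometricCoefficient]
  refine ⟨coeff, fun x hx ↦ ?_⟩
  rw [← (series x hx).tsum_eq]
  exact tsum_congr fun n ↦ by rw [smul_eq_mul, mul_comm, ← mul_assoc]

end Stmt16
end
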